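/- arXiv:2202.03348 — 2 statements merged into one kernel-verified Lean document; each statement's English description precedes it below -/
import Mathlib

section
/- Let χ ≥ 0, 0 ≤ ξ < (χ+1)/2 and σ > 0. Suppose ((λ_ρ, φ_ρ))_{ρ ≥ 1} is a sequence of eigenpairs of the Laplace kernel with respect to p such that each φ_ρ is odd and normalized with ∫_ℝ p φ_ρ² = 1, each λ_ρ > 0, and there exist constants 0 < a ≤ b with a ρ^{−2} ≤ λ_ρ ≤ b ρ^{−2} for all large ρ. Then the coefficients c_ρ = ∫_ℝ p(x) f*_ξ(x) φ_ρ(x) dx satisfy: there exist constants 0 < c ≤ C and ρ₀ such that for all ρ ≥ ρ₀, c · ρ^{−(3χ + 4 − 4ξ)/(χ+2)} ≤ c_ρ² ≤ C · ρ^{−(3χ + 4 − 4ξ)/(χ+2)}. -/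
open MeasureTheory Real Filter

/-- The data density `p(x) = |x|^χ e^{-x²} / Γ((1+χ)/2)`. -/
noncomputable def dataDensity (χ : ℝ) (x : ℝ) : ℝ :=
  |x| ^ χ * Real.exp (-x ^ 2) / Real.Gamma ((1 + χ) / 2)

/-- The target function `f*_ξ(x) = sign(x) |x|^{-ξ}`. -/
noncomputable def targetFun (ξ : ℝ) (x : ℝ) : ℝ :=
  Real.sign x * |x| ^ (-ξ)

/-!
An eigenfunction solves `φ'' = (σ⁻² - δ^{-(χ+2)} |x|^χ e^{-x²}) φ` with `δ^{χ+2}` proportional to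
the eigenvalue, so the claim is a semiclassical one as `δ → 0`.

The equation oscillates until the potential drops to order one, at `x` of order `√(log (1/δ))`, and
decays from there on. The energy of `φ`, scaled by the local WKB length, is almost conserved
throughout the oscillatory region. Hence `φ` is controlled from both sides by `φ'(0)`: the mass
`∫₀^∞ x^χ e^{-x²} φ²` is comparable to `δ^{χ/2+2} φ'(0)²`, while `∫₀^∞ |φ|` is `o(φ'(0))`.

Near the origin the equation looks like `φ'' + t^χ φ = 0` in the variable `t = x/δ`. Its
non-oscillating inhomogeneous solution `Ψ`, with `Ψ'' + t^χ Ψ = t^{χ-ξ}`, is the Laplace transform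
of a positive density in the variable `t^{χ+2}`, so that `Ψ(0) > 0`. Green's identity for `φ` and
`Ψ(x/δ)` gives `δ^{ξ-(χ+2)} ∫₀^∞ x^{χ-ξ} e^{-x²} φ = Ψ(0) φ'(0) + o(φ'(0))`. Eliminating `φ'(0)` by
the normalization, the squared coefficient is comparable to `δ^{(3χ+4-4ξ)/2}`.
-/

open Set Topology

/-! ### Energy estimates -/

section Gronwall

variable {E E' K k : ℝ → ℝ} {a b : ℝ}

theorem le_mul_exp_of_deriv_le_mul (hab : a ≤ b)
    (hE : ∀ x ∈ Icc a b, HasDerivAt E (E' x) x) (hK : ∀ x ∈ Icc a b, HasDerivAt K (k x) x)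
    (hle : ∀ x ∈ Icc a b, E' x ≤ k x * E x) :
    E b ≤ E a * exp (K b - K a) := by
  have hderiv : ∀ x ∈ Icc a b, HasDerivAt (fun x ↦ E x * exp (-K x))
      (E' x * exp (-K x) + E x * (exp (-K x) * -k x)) x :=
    fun x hx ↦ (hE x hx).mul (hK x hx).neg.exp
  have hanti : AntitoneOn (fun x ↦ E x * exp (-K x)) (Icc a b) := by
    refine antitoneOn_of_hasDerivWithinAt_nonpos (convex_Icc a b)
      (fun x hx ↦ (hderiv x hx).continuousAt.continuousWithinAt)
      (fun x hx ↦ (hderiv x (interior_subset hx)).hasDerivWithinAt) fun x hx ↦ ?_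
    nlinarith [hle x (interior_subset hx), exp_pos (-K x)]
  calc E b = E b * exp (-K b) * exp (K b) := by rw [mul_assoc, ← exp_add]; simp
    _ ≤ E a * exp (-K a) * exp (K b) :=
        mul_le_mul_of_nonneg_right
          (hanti (left_mem_Icc.2 hab) (right_mem_Icc.2 hab) hab) (exp_pos _).le
    _ = E a * exp (K b - K a) := by rw [mul_assoc, ← exp_add, neg_add_eq_sub]

theorem mul_exp_neg_le_of_neg_mul_le_deriv (hab : a ≤ b)
    (hE : ∀ x ∈ Icc a b, HasDerivAt E (E' x) x) (hK : ∀ x ∈ Icc a b, HasDerivAt K (k x) x)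
    (hle : ∀ x ∈ Icc a b, -(k x * E x) ≤ E' x) :
    E a * exp (-(K b - K a)) ≤ E b := by
  have hneg := le_mul_exp_of_deriv_le_mul hab (fun x hx ↦ (hE x hx).neg)
    (fun x hx ↦ (hK x hx).neg) fun x hx ↦ by
      rw [Pi.neg_apply]
      linarith [hle x hx]
  simp only [Pi.neg_apply, neg_mul, sub_neg_eq_add, neg_le_neg_iff] at hneg
  rwa [neg_sub, sub_eq_neg_add]

end Gronwall

/-- `(u, v)` solves `u' = v`, `v' = q u` on `s`, the first-order form of `u'' = q u`. -/
structure IsSolutionOn (q u v : ℝ → ℝ) (s : Set ℝ) : Prop where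
  hasDerivAt_fst : ∀ x ∈ s, HasDerivAt u (v x) x
  hasDerivAt_snd : ∀ x ∈ s, HasDerivAt v (q x * u x) x

theorem IsSolutionOn.mono {q u v : ℝ → ℝ} {s t : Set ℝ} (h : IsSolutionOn q u v t)
    (hst : s ⊆ t) : IsSolutionOn q u v s :=
  ⟨fun x hx ↦ h.1 x (hst hx), fun x hx ↦ h.2 x (hst hx)⟩

/-- The energy `g v² + u² / g` of a state `(u, v)` of a linear oscillator `u'' = q u` at length
scale `g`. It is an adiabatic invariant when `q ≈ -1 / g²` and `g` varies slowly. -/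
noncomputable def scaledEnergy (g u v : ℝ) : ℝ :=
  g * v ^ 2 + u ^ 2 / g

section ScaledEnergy

variable {g u v : ℝ}

theorem scaledEnergy_nonneg (hg : 0 < g) (u v : ℝ) : 0 ≤ scaledEnergy g u v := by
  unfold scaledEnergy; positivity

theorem two_mul_abs_mul_le_scaledEnergy (hg : 0 < g) (u v : ℝ) :
    2 * |u * v| ≤ scaledEnergy g u v := by
  have hsq : scaledEnergy g u v - 2 * |u * v| = (g * |v| - |u|) ^ 2 / g := by
    rw [scaledEnergy, abs_mul, ← sq_abs u, ← sq_abs v]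
    field_simp
    ring
  have : 0 ≤ (g * |v| - |u|) ^ 2 / g := by positivity
  linarith

theorem sq_le_mul_scaledEnergy (hg : 0 < g) (u v : ℝ) :
    u ^ 2 ≤ g * scaledEnergy g u v := by
  have : g * scaledEnergy g u v = (g * v) ^ 2 + u ^ 2 := by
    rw [scaledEnergy]
    field_simp
  nlinarith [sq_nonneg (g * v)]

theorem scaledEnergy_le_mul {g₁ g₂ A : ℝ} (hg₁ : 0 < g₁) (hg₂ : 0 < g₂) (h₁ : g₁ ≤ A * g₂)
    (h₂ : g₂ ≤ A * g₁) (u v : ℝ) : scaledEnergy g₁ u v ≤ A * scaledEnergy g₂ u v := by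
  have hu : u ^ 2 / g₁ ≤ A * (u ^ 2 / g₂) := by
    rw [← mul_div_assoc, div_le_div_iff₀ hg₁ hg₂]
    nlinarith [sq_nonneg u]
  have hv : g₁ * v ^ 2 ≤ A * (g₂ * v ^ 2) := by nlinarith [sq_nonneg v]
  simp only [scaledEnergy]
  linarith

end ScaledEnergy

namespace IsSolutionOn

variable {q u v : ℝ → ℝ} {a b : ℝ}

theorem scaledEnergy_const_bounds {M r : ℝ} (h : IsSolutionOn q u v (Icc a b)) (hab : a ≤ b)
    (hr : 0 < r) (hq : ∀ x ∈ Icc a b, |q x| ≤ M) :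
    exp (-((r * M + 1 / r) * (b - a))) * scaledEnergy r (u a) (v a)
        ≤ scaledEnergy r (u b) (v b) ∧
      scaledEnergy r (u b) (v b)
        ≤ exp ((r * M + 1 / r) * (b - a)) * scaledEnergy r (u a) (v a) := by
  set rate := r * M + 1 / r
  have hE : ∀ x ∈ Icc a b, HasDerivAt (fun x ↦ scaledEnergy r (u x) (v x))
      (2 * (u x * v x) * (r * q x + 1 / r)) x := fun x hx ↦
    ((((h.2 x hx).pow 2).const_mul r).add (((h.1 x hx).pow 2).div_const r)).congr_deriv
      (by push_cast; ring)
  have hK : ∀ x ∈ Icc a b, HasDerivAt (fun x ↦ rate * x) rate x := fun x _ ↦ by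
    simpa using (hasDerivAt_id x).const_mul rate
  have hbound : ∀ x ∈ Icc a b, |2 * (u x * v x) * (r * q x + 1 / r)|
      ≤ rate * scaledEnergy r (u x) (v x) := by
    intro x hx
    have hcoef : |r * q x + 1 / r| ≤ rate := by
      refine (abs_add_le _ _).trans ?_
      rw [abs_mul, abs_of_pos hr, abs_of_pos (one_div_pos.2 hr)]
      exact add_le_add_left (mul_le_mul_of_nonneg_left (hq x hx) hr.le) _
    rw [abs_mul, abs_mul, abs_two, mul_comm]
    exact mul_le_mul hcoef (two_mul_abs_mul_le_scaledEnergy hr _ _) (by positivity)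
      ((abs_nonneg _).trans hcoef)
  have hlow := mul_exp_neg_le_of_neg_mul_le_deriv hab hE hK fun x hx ↦
    neg_le_of_abs_le (hbound x hx)
  have hupp := le_mul_exp_of_deriv_le_mul hab hE hK fun x hx ↦ le_of_abs_le (hbound x hx)
  rw [← mul_sub, mul_comm] at hlow hupp
  exact ⟨hlow, hupp⟩

section WKB

variable {κ : ℝ} {g g' g'' K k : ℝ → ℝ}

/-- The correction `-g' u v` cancels the order-one part of the derivative of the energy. -/
theorem hasDerivAt_correctedEnergy {x : ℝ}
    (h : IsSolutionOn (fun x ↦ κ - 1 / g x ^ 2) u v {x}) (hgpos : 0 < g x)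
    (hg : HasDerivAt g (g' x) x) (hg' : HasDerivAt g' (g'' x) x) :
    HasDerivAt (fun x ↦ scaledEnergy (g x) (u x) (v x) - g' x * (u x * v x))
      ((2 * κ * g x - g'' x) * (u x * v x) - κ * g' x * u x ^ 2) x := by
  have hu := h.1 x rfl
  have hv := h.2 x rfl
  refine (((hg.mul (hv.pow 2)).add ((hu.pow 2).div hg hgpos.ne')).sub
    (hg'.mul (hu.mul hv))).congr_deriv ?_
  simp only [Pi.pow_apply, Pi.mul_apply]
  push_cast
  field_simp
  ring

theorem correctedEnergy_bounds {g g' : ℝ} (hg : 0 < g) (hg' : |g'| ≤ 1) (u v : ℝ) :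
    scaledEnergy g u v / 2 ≤ scaledEnergy g u v - g' * (u * v) ∧
      scaledEnergy g u v - g' * (u * v) ≤ 2 * scaledEnergy g u v := by
  have habs : |g' * (u * v)| ≤ |u * v| := by
    rw [abs_mul]
    exact mul_le_of_le_one_left (abs_nonneg _) hg'
  have hN := two_mul_abs_mul_le_scaledEnergy hg u v
  constructor <;> linarith [abs_le.1 habs, abs_nonneg (u * v)]

theorem abs_deriv_correctedEnergy_le {κ g g' g'' k : ℝ} (hκ : 0 ≤ κ) (hg : 0 < g)
    (hg' : |g'| ≤ 1) (hk : 4 * κ * g + |g''| ≤ k) (u v : ℝ) :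
    |(2 * κ * g - g'') * (u * v) - κ * g' * u ^ 2|
      ≤ k * (scaledEnergy g u v - g' * (u * v)) := by
  set N := scaledEnergy g u v
  have hN0 : 0 ≤ N := scaledEnergy_nonneg hg u v
  have hcross : |(2 * κ * g - g'') * (u * v)| ≤ (2 * κ * g + |g''|) * (N / 2) := by
    rw [abs_mul]
    refine mul_le_mul ?_ ?_ (abs_nonneg _) (by positivity)
    · refine (abs_sub _ _).trans_eq ?_
      rw [abs_of_nonneg (by positivity)]
    · linarith [two_mul_abs_mul_le_scaledEnergy hg u v]
  have hsq : |κ * g' * u ^ 2| ≤ κ * (g * N) := by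
    rw [abs_mul, abs_mul, abs_of_nonneg hκ, abs_of_nonneg (sq_nonneg u), mul_assoc]
    refine mul_le_mul_of_nonneg_left ?_ hκ
    exact (mul_le_of_le_one_left (sq_nonneg u) hg').trans (sq_le_mul_scaledEnergy hg u v)
  calc |(2 * κ * g - g'') * (u * v) - κ * g' * u ^ 2|
      ≤ (2 * κ * g + |g''|) * (N / 2) + κ * (g * N) := (abs_sub _ _).trans (add_le_add hcross hsq)
    _ = (4 * κ * g + |g''|) * (N / 2) := by ring
    _ ≤ k * (N - g' * (u * v)) := by
        have hk0 : 0 ≤ k := le_trans (by positivity) hk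
        exact mul_le_mul hk (correctedEnergy_bounds hg hg' u v).1 (by positivity) hk0

theorem scaledEnergy_bounds (hκ : 0 ≤ κ) (hab : a ≤ b)
    (h : IsSolutionOn (fun x ↦ κ - 1 / g x ^ 2) u v (Icc a b))
    (hgpos : ∀ x ∈ Icc a b, 0 < g x) (hg : ∀ x ∈ Icc a b, HasDerivAt g (g' x) x)
    (hg' : ∀ x ∈ Icc a b, HasDerivAt g' (g'' x) x) (hg'_le : ∀ x ∈ Icc a b, |g' x| ≤ 1)
    (hK : ∀ x ∈ Icc a b, HasDerivAt K (k x) x)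
    (hk : ∀ x ∈ Icc a b, 4 * κ * g x + |g'' x| ≤ k x) :
    exp (-(K b - K a)) * scaledEnergy (g a) (u a) (v a)
        ≤ 4 * scaledEnergy (g b) (u b) (v b) ∧
      scaledEnergy (g b) (u b) (v b)
        ≤ 4 * (exp (K b - K a) * scaledEnergy (g a) (u a) (v a)) := by
  have hE : ∀ x ∈ Icc a b, HasDerivAt
      (fun x ↦ scaledEnergy (g x) (u x) (v x) - g' x * (u x * v x))
      ((2 * κ * g x - g'' x) * (u x * v x) - κ * g' x * u x ^ 2) x := fun x hx ↦
    hasDerivAt_correctedEnergy (h.mono (singleton_subset_iff.2 hx)) (hgpos x hx) (hg x hx)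
      (hg' x hx)
  have hE' := fun x hx ↦ abs_deriv_correctedEnergy_le hκ (hgpos x hx) (hg'_le x hx) (hk x hx)
    (u x) (v x)
  have hlow := mul_exp_neg_le_of_neg_mul_le_deriv hab hE hK fun x hx ↦
    neg_le_of_abs_le (hE' x hx)
  have hupp := le_mul_exp_of_deriv_le_mul hab hE hK fun x hx ↦ le_of_abs_le (hE' x hx)
  have hEa := correctedEnergy_bounds (hgpos a (left_mem_Icc.2 hab))
    (hg'_le a (left_mem_Icc.2 hab)) (u a) (v a)
  have hEb := correctedEnergy_bounds (hgpos b (right_mem_Icc.2 hab))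
    (hg'_le b (right_mem_Icc.2 hab)) (u b) (v b)
  constructor <;> nlinarith [exp_pos (K b - K a), exp_pos (-(K b - K a))]

theorem hasDerivAt_mul_mul {x : ℝ} (h : IsSolutionOn (fun x ↦ κ - 1 / g x ^ 2) u v {x})
    (hgpos : 0 < g x) (hg : HasDerivAt g (g' x) x) :
    HasDerivAt (fun x ↦ g x * (u x * v x))
      (g' x * (u x * v x) + g x * v x ^ 2 - u x ^ 2 / g x + κ * g x * u x ^ 2) x := by
  refine (hg.mul ((h.1 x rfl).mul (h.2 x rfl))).congr_deriv ?_
  simp only [Pi.mul_apply]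
  field_simp
  ring

/-- The product `g u v` stays bounded while `(g u v)' ≈ g v² - u² / g`, so on average the two
halves of the energy are equal. -/
theorem integral_sq_div_ge {η η' c C : ℝ} (hκ : 0 ≤ κ) (hab : a ≤ b)
    (h : IsSolutionOn (fun x ↦ κ - 1 / g x ^ 2) u v (Icc a b))
    (hgpos : ∀ x ∈ Icc a b, 0 < g x) (hg : ∀ x ∈ Icc a b, HasDerivAt g (g' x) x)
    (hg_le : ∀ x ∈ Icc a b, g x ≤ η) (hg'_le : ∀ x ∈ Icc a b, |g' x| ≤ η')
    (hN : ∀ x ∈ Icc a b, c ≤ scaledEnergy (g x) (u x) (v x))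
    (hN' : ∀ x ∈ Icc a b, scaledEnergy (g x) (u x) (v x) ≤ C) :
    (c - η' * C / 2) * (b - a) - η * C ≤ 2 * ∫ x in a..b, u x ^ 2 / g x := by
  have hcont : ∀ {f f' : ℝ → ℝ}, (∀ x ∈ Icc a b, HasDerivAt f (f' x) x) →
      ContinuousOn f (Icc a b) := fun hf x hx ↦ (hf x hx).continuousAt.continuousWithinAt
  have hguv : ∀ x ∈ Icc a b, |g x * (u x * v x)| ≤ η * C / 2 := by
    intro x hx
    rw [abs_mul, abs_of_pos (hgpos x hx), mul_div_assoc]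
    refine mul_le_mul (hg_le x hx) ?_ (abs_nonneg _) ((hgpos x hx).le.trans (hg_le x hx))
    linarith [two_mul_abs_mul_le_scaledEnergy (hgpos x hx) (u x) (v x), hN' x hx]
  have hderiv : ∀ x ∈ Icc a b, HasDerivAt (fun x ↦ (c - η' * C / 2) * x - g x * (u x * v x))
      (c - η' * C / 2 - (g' x * (u x * v x) + g x * v x ^ 2 - u x ^ 2 / g x
        + κ * g x * u x ^ 2)) x := fun x hx ↦
    (((hasDerivAt_id x).const_mul (c - η' * C / 2)).sub (hasDerivAt_mul_mul
      (h.mono (singleton_subset_iff.2 hx)) (hgpos x hx) (hg x hx))).congr_deriv (by ring)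
  have hderiv_le : ∀ x ∈ Ico a b, c - η' * C / 2 - (g' x * (u x * v x) + g x * v x ^ 2
      - u x ^ 2 / g x + κ * g x * u x ^ 2) ≤ 2 * (u x ^ 2 / g x) := by
    intro x hx
    have hx := Ico_subset_Icc_self hx
    have hcross : |g' x * (u x * v x)| ≤ η' * (C / 2) := by
      rw [abs_mul]
      refine mul_le_mul (hg'_le x hx) ?_ (abs_nonneg _) ((abs_nonneg _).trans (hg'_le x hx))
      linarith [two_mul_abs_mul_le_scaledEnergy (hgpos x hx) (u x) (v x), hN' x hx]
    have hκg : 0 ≤ κ * g x * u x ^ 2 := by have := hgpos x hx; positivity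
    have hc : c ≤ g x * v x ^ 2 + u x ^ 2 / g x := hN x hx
    linarith [neg_le_of_abs_le hcross]
  have hint : IntegrableOn (fun x ↦ 2 * (u x ^ 2 / g x)) (Icc a b) :=
    (continuousOn_const.mul (((hcont h.1).pow 2).div (hcont hg)
      fun x hx ↦ (hgpos x hx).ne')).integrableOn_Icc
  have hftc := intervalIntegral.sub_le_integral_of_hasDeriv_right_of_le hab (hcont hderiv)
    (fun x hx ↦ (hderiv x (Ioo_subset_Icc_self hx)).hasDerivWithinAt) hint
    fun x hx ↦ hderiv_le x (Ioo_subset_Ico_self hx)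
  rw [intervalIntegral.integral_const_mul] at hftc
  linarith [abs_le.1 (hguv a (left_mem_Icc.2 hab)), abs_le.1 (hguv b (right_mem_Icc.2 hab))]

end WKB

/-- Across the turning point, where `q` changes sign, a solution grows at most exponentially. -/
theorem energy_le_of_antitone_potential {k : ℝ} {P P' : ℝ → ℝ} (hk : 0 ≤ k) (hab : a ≤ b)
    (h : IsSolutionOn (fun x ↦ k ^ 2 - P x) u v (Icc a b)) (hP : ∀ x ∈ Icc a b, 0 ≤ P x)
    (hderiv : ∀ x ∈ Icc a b, HasDerivAt P (P' x) x) (hP' : ∀ x ∈ Icc a b, P' x ≤ 0) :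
    v b ^ 2 + (P b + k ^ 2) * u b ^ 2
      ≤ (v a ^ 2 + (P a + k ^ 2) * u a ^ 2) * exp (2 * k * b - 2 * k * a) := by
  refine le_mul_exp_of_deriv_le_mul (E := fun x ↦ v x ^ 2 + (P x + k ^ 2) * u x ^ 2)
    (E' := fun x ↦ 4 * k ^ 2 * (u x * v x) + P' x * u x ^ 2) (K := fun x ↦ 2 * k * x) hab
    (fun x hx ↦ ?_) (fun x _ ↦ (hasDerivAt_id x).const_mul (2 * k)) fun x hx ↦ ?_
  · refine (((h.2 x hx).pow 2).add
      (((hderiv x hx).add_const _).mul ((h.1 x hx).pow 2))).congr_deriv ?_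
    simp only [Pi.pow_apply]
    push_cast
    ring
  · nlinarith [mul_nonneg hk (sq_nonneg (v x - k * u x)),
      mul_nonneg hk (mul_nonneg (hP x hx) (sq_nonneg (u x))),
      mul_nonneg (neg_nonneg.2 (hP' x hx)) (sq_nonneg (u x))]

end IsSolutionOn

theorem le_of_hasDerivAt_nonneg_of_tendsto_atTop {f f' : ℝ → ℝ} {a l : ℝ}
    (hf : ∀ x ∈ Ici a, HasDerivAt f (f' x) x) (hf' : ∀ x ∈ Ici a, 0 ≤ f' x)
    (hlim : Tendsto f atTop (𝓝 l)) : ∀ x ∈ Ici a, f x ≤ l := by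
  have hmono : MonotoneOn f (Ici a) := monotoneOn_of_hasDerivWithinAt_nonneg (convex_Ici a)
    (fun x hx ↦ (hf x hx).continuousAt.continuousWithinAt)
    (fun x hx ↦ (hf x (interior_subset hx)).hasDerivWithinAt)
    fun x hx ↦ hf' x (interior_subset hx)
  intro x hx
  refine ge_of_tendsto hlim ?_
  filter_upwards [eventually_ge_atTop x] with z hz
  exact hmono hx (le_trans hx hz) hz

namespace IsSolutionOn

variable {q u v : ℝ → ℝ} {a s : ℝ}

theorem mul_nonpos_of_tendsto_zero (h : IsSolutionOn q u v (Ici a))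
    (hq : ∀ x ∈ Ici a, 0 ≤ q x) (hu : Tendsto u atTop (𝓝 0)) (hv : Tendsto v atTop (𝓝 0)) :
    ∀ x ∈ Ici a, u x * v x ≤ 0 := by
  refine le_of_hasDerivAt_nonneg_of_tendsto_atTop
    (fun x hx ↦ (h.1 x hx).mul (h.2 x hx)) (fun x hx ↦ ?_) (by simpa using hu.mul hv)
  nlinarith [mul_self_nonneg (v x), mul_nonneg (hq x hx) (sq_nonneg (u x))]

theorem sq_mul_sq_le_sq_of_tendsto_zero (h : IsSolutionOn q u v (Ici a))
    (hq : ∀ x ∈ Ici a, s ^ 2 ≤ q x) (hu : Tendsto u atTop (𝓝 0)) (hv : Tendsto v atTop (𝓝 0)) :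
    ∀ x ∈ Ici a, s ^ 2 * u x ^ 2 ≤ v x ^ 2 := by
  have huv := h.mul_nonpos_of_tendsto_zero (fun x hx ↦ (sq_nonneg s).trans (hq x hx)) hu hv
  have hdiff := le_of_hasDerivAt_nonneg_of_tendsto_atTop
    (f := fun x ↦ s ^ 2 * u x ^ 2 - v x ^ 2)
    (f' := fun x ↦ 2 * (q x - s ^ 2) * -(u x * v x)) (a := a) (l := 0)
    (fun x hx ↦ ((((h.1 x hx).pow 2).const_mul (s ^ 2)).sub ((h.2 x hx).pow 2)).congr_deriv
      (by push_cast; ring))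
    (fun x hx ↦ mul_nonneg (by linarith [hq x hx]) (neg_nonneg.2 (huv x hx)))
    (by simpa using ((hu.pow 2).const_mul (s ^ 2)).sub (hv.pow 2))
  exact fun x hx ↦ sub_nonpos.1 (hdiff x hx)

theorem sq_le_mul_exp_of_tendsto_zero (h : IsSolutionOn q u v (Ici a))
    (hq : ∀ x ∈ Ici a, s ^ 2 ≤ q x) (hu : Tendsto u atTop (𝓝 0)) (hv : Tendsto v atTop (𝓝 0))
    {x : ℝ} (hx : a ≤ x) : u x ^ 2 ≤ u a ^ 2 * exp (-(2 * s) * x - -(2 * s) * a) := by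
  refine le_mul_exp_of_deriv_le_mul (E := fun x ↦ u x ^ 2) (E' := fun x ↦ 2 * (u x * v x))
    (K := fun x ↦ -(2 * s) * x) hx (fun z hz ↦ ?_)
    (fun z _ ↦ (hasDerivAt_id z).const_mul (-(2 * s))) fun z hz ↦ ?_
  · exact ((h.1 z hz.1).pow 2).congr_deriv (by push_cast; ring)
  · have huv := h.mul_nonpos_of_tendsto_zero (fun x hx ↦ (sq_nonneg s).trans (hq x hx)) hu hv
      z hz.1
    have hsq := h.sq_mul_sq_le_sq_of_tendsto_zero hq hu hv z hz.1
    have hgrowth : s * u z ^ 2 ≤ -(u z * v z) := by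
      refine le_of_sq_le_sq ?_ (by linarith)
      nlinarith [mul_le_mul_of_nonneg_left hsq (sq_nonneg (u z))]
    linarith

end IsSolutionOn

/-! ### The semiclassical length scale -/

/-- The unnormalised data density `|x|^χ e^{-x²}`. -/
noncomputable def gaussWeight (χ x : ℝ) : ℝ :=
  |x| ^ χ * exp (-x ^ 2)

theorem gaussWeight_nonneg (χ x : ℝ) : 0 ≤ gaussWeight χ x := by
  unfold gaussWeight; positivity

/-- The semiclassical length scale `δ^{(χ+2)/2} x^{-χ/2} e^{x²/2}`, that is
`(δ^{-(χ+2)} gaussWeight χ x)^{-1/2}`, for `x > 0`. -/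
noncomputable def wkbScale (χ δ x : ℝ) : ℝ :=
  δ ^ ((χ + 2) / 2) * x ^ (-(χ / 2)) * exp (x ^ 2 / 2)

/-- The ratio `(δ / x)^{(χ+2)/2}` controlling the derivatives of `wkbScale` for `x ≤ 1`. -/
noncomputable def scaleRatio (χ δ x : ℝ) : ℝ :=
  (δ / x) ^ ((χ + 2) / 2)

section WKBScale

variable {χ δ x : ℝ}

theorem wkbScale_pos (hδ : 0 < δ) (hx : 0 < x) : 0 < wkbScale χ δ x := by
  unfold wkbScale; positivity

theorem scaleRatio_pos (hδ : 0 < δ) (hx : 0 < x) : 0 < scaleRatio χ δ x := by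
  unfold scaleRatio; positivity

theorem wkbScale_eq_scaleRatio_mul (hδ : 0 < δ) (hx : 0 < x) :
    wkbScale χ δ x = scaleRatio χ δ x * x * exp (x ^ 2 / 2) := by
  have hpow : x ^ (-(χ / 2)) = x / x ^ ((χ + 2) / 2) := by
    rw [show -(χ / 2) = 1 - (χ + 2) / 2 by ring, rpow_sub hx, rpow_one]
  rw [wkbScale, scaleRatio, div_rpow hδ.le hx.le, hpow]
  ring

theorem rpow_mul_gaussWeight_eq (hδ : 0 < δ) (hx : 0 < x) :
    δ ^ (-(χ + 2)) * gaussWeight χ x = 1 / wkbScale χ δ x ^ 2 := by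
  have hsq : ∀ {z : ℝ}, 0 ≤ z → ∀ s : ℝ, (z ^ s) ^ 2 = z ^ (s * 2) := fun hz s ↦ by
    rw [rpow_mul hz]; norm_cast
  rw [gaussWeight, wkbScale, mul_pow, mul_pow, hsq hδ.le, hsq hx.le, ← exp_nat_mul, abs_of_pos hx,
    rpow_neg hδ.le, exp_neg, neg_mul, div_mul_cancel₀ _ two_ne_zero, rpow_neg hx.le,
    div_mul_cancel₀ _ two_ne_zero]
  push_cast
  rw [mul_div_cancel₀ _ two_ne_zero]
  field_simp

theorem hasDerivAt_wkbScale (hx : 0 < x) :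
    HasDerivAt (wkbScale χ δ) (wkbScale χ δ x * (x - χ / (2 * x))) x := by
  refine (((hasDerivAt_rpow_const (p := -(χ / 2)) (.inl hx.ne')).const_mul _).mul
    ((hasDerivAt_pow 2 x).div_const 2).exp).congr_deriv ?_
  rw [wkbScale, rpow_sub_one hx.ne']
  field_simp
  ring

theorem hasDerivAt_deriv_wkbScale (hx : 0 < x) :
    HasDerivAt (fun x ↦ wkbScale χ δ x * (x - χ / (2 * x)))
      (wkbScale χ δ x * ((x - χ / (2 * x)) ^ 2 + (1 + χ / (2 * x ^ 2)))) x := by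
  refine ((hasDerivAt_wkbScale hx).mul ((hasDerivAt_id x).sub
    ((hasDerivAt_const x χ).div ((hasDerivAt_id x).const_mul 2) (by simpa using hx.ne')))
    ).congr_deriv ?_
  simp only [Pi.sub_apply, Pi.div_apply, id]
  field_simp
  ring

theorem hasDerivAt_scaleRatio (hδ : 0 < δ) (hx : 0 < x) :
    HasDerivAt (scaleRatio χ δ) (-((χ + 2) / 2) * (scaleRatio χ δ x / x)) x := by
  refine (((hasDerivAt_const x δ).div (hasDerivAt_id x) hx.ne').rpow_const
    (p := (χ + 2) / 2) (.inl (div_pos hδ hx).ne')).congr_deriv ?_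
  simp only [Pi.div_apply, id]
  rw [scaleRatio, rpow_sub_one (div_pos hδ hx).ne']
  field_simp
  ring

theorem scaleRatio_le (hχ : 0 ≤ χ) (hδ : 0 < δ) (hx : (χ + 2) * δ ≤ x) :
    scaleRatio χ δ x ≤ 1 / (χ + 2) := by
  have hx0 : 0 < x := lt_of_lt_of_le (by positivity) hx
  have hratio : δ / x ≤ 1 / (χ + 2) := by
    rw [div_le_div_iff₀ hx0 (by positivity)]
    linarith
  have hle_one : 1 / (χ + 2) ≤ 1 := by
    rw [div_le_one (by positivity)]
    linarith
  calc scaleRatio χ δ x ≤ (1 / (χ + 2)) ^ ((χ + 2) / 2) := by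
        unfold scaleRatio
        gcongr
    _ ≤ (1 / (χ + 2)) ^ (1 : ℝ) :=
        rpow_le_rpow_of_exponent_ge (by positivity) hle_one (by linarith)
    _ = 1 / (χ + 2) := rpow_one _

theorem exp_sq_div_two_le_two (hx : 0 ≤ x) (hx1 : x ≤ 1) : exp (x ^ 2 / 2) ≤ 2 := by
  rw [← le_log_iff_exp_le two_pos]
  nlinarith [log_two_gt_d9]

theorem wkbScale_le_of_le_one (hδ : 0 < δ) (hx : 0 < x) (hx1 : x ≤ 1) :
    wkbScale χ δ x ≤ 2 * (scaleRatio χ δ x * x) := by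
  rw [wkbScale_eq_scaleRatio_mul hδ hx, mul_comm 2]
  have := scaleRatio_pos (χ := χ) hδ hx
  gcongr
  exact exp_sq_div_two_le_two hx.le hx1

theorem abs_sub_div_le (hχ : 0 ≤ χ) (hx : 0 < x) : |x - χ / (2 * x)| ≤ x + χ / (2 * x) := by
  refine (abs_sub _ _).trans_eq ?_
  rw [abs_of_pos hx, abs_of_nonneg (by positivity)]

theorem sq_sub_div_le (hχ : 0 ≤ χ) (hx : 0 < x) :
    (x - χ / (2 * x)) ^ 2 ≤ x ^ 2 + χ ^ 2 / (4 * x ^ 2) := by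
  have : (x - χ / (2 * x)) ^ 2 = x ^ 2 + χ ^ 2 / (4 * x ^ 2) - χ := by field_simp; ring
  linarith

theorem abs_deriv_wkbScale_le_one_of_le_one (hχ : 0 ≤ χ) (hδ : 0 < δ) (hx : (χ + 2) * δ ≤ x)
    (hx1 : x ≤ 1) : |wkbScale χ δ x * (x - χ / (2 * x))| ≤ 1 := by
  have hx0 : 0 < x := lt_of_lt_of_le (by positivity) hx
  have hr0 := scaleRatio_pos (χ := χ) hδ hx0
  rw [abs_mul, abs_of_pos (wkbScale_pos hδ hx0)]
  calc wkbScale χ δ x * |x - χ / (2 * x)|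
      ≤ 2 * (scaleRatio χ δ x * x) * (x + χ / (2 * x)) := by
        gcongr
        exacts [wkbScale_le_of_le_one hδ hx0 hx1, abs_sub_div_le hχ hx0]
    _ = scaleRatio χ δ x * (2 * x ^ 2 + χ) := by field_simp
    _ ≤ 1 / (χ + 2) * (2 * 1 ^ 2 + χ) := by
        gcongr
        exact scaleRatio_le hχ hδ hx
    _ = 1 := by field_simp; ring

theorem wkbRate_le_of_le_one {κ : ℝ} (hχ : 0 ≤ χ) (hκ : 0 ≤ κ) (hδ : 0 < δ) (hx : 0 < x)
    (hx1 : x ≤ 1) :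
    wkbScale χ δ x * (4 * κ + (x - χ / (2 * x)) ^ 2 + (1 + χ / (2 * x ^ 2)))
      ≤ 2 * (4 * κ + 2 + χ ^ 2 / 4 + χ / 2) * (scaleRatio χ δ x / x) := by
  have hr0 := scaleRatio_pos (χ := χ) hδ hx
  have hbracket : 4 * κ + (x - χ / (2 * x)) ^ 2 + (1 + χ / (2 * x ^ 2))
      ≤ (4 * κ + 2 + χ ^ 2 / 4 + χ / 2) / x ^ 2 := by
    have hinv : 1 ≤ 1 / x ^ 2 := by
      rw [le_div_iff₀ (by positivity)]
      nlinarith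
    have hx2 : x ^ 2 ≤ 1 := by nlinarith
    have hexpand : (4 * κ + 2 + χ ^ 2 / 4 + χ / 2) / x ^ 2
        = 4 * κ * (1 / x ^ 2) + 2 * (1 / x ^ 2) + χ ^ 2 / (4 * x ^ 2) + χ / (2 * x ^ 2) := by
      field_simp
    rw [hexpand]
    nlinarith [sq_sub_div_le hχ hx]
  calc wkbScale χ δ x * (4 * κ + (x - χ / (2 * x)) ^ 2 + (1 + χ / (2 * x ^ 2)))
      ≤ 2 * (scaleRatio χ δ x * x) * ((4 * κ + 2 + χ ^ 2 / 4 + χ / 2) / x ^ 2) := by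
        gcongr
        exact wkbScale_le_of_le_one hδ hx hx1
    _ = 2 * (4 * κ + 2 + χ ^ 2 / 4 + χ / 2) * (scaleRatio χ δ x / x) := by field_simp

end WKBScale

/-- The point beyond which the semiclassical approximation is abandoned, normalised by
`e^{-cutoff²} = δ^{χ+3/2}`. The exponent is chosen between `χ + 1` and `χ + 2`, so that
`wkbScale` is still at most `δ^{1/4}` at the cutoff. -/
noncomputable def cutoff (χ δ : ℝ) : ℝ :=
  √((χ + 3 / 2) * log δ⁻¹)

section Cutoff

variable {χ δ : ℝ}

theorem cutoff_sq (hχ : 0 ≤ χ) (hδ : 0 < δ) (hδ1 : δ ≤ 1) :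
    cutoff χ δ ^ 2 = -((χ + 3 / 2) * log δ) := by
  have hlog : log δ ≤ 0 := log_nonpos hδ.le hδ1
  rw [cutoff, log_inv, sq_sqrt (by nlinarith), mul_neg]

theorem tendsto_cutoff (hχ : 0 ≤ χ) : Tendsto (cutoff χ) (𝓝[>] 0) atTop :=
  tendsto_sqrt_atTop.comp <|
    (tendsto_log_atTop.comp tendsto_inv_nhdsGT_zero).const_mul_atTop (by positivity)

theorem tendsto_rpow_mul_exp_cutoff (hχ : 0 ≤ χ) {e : ℝ} (he : 0 < e) (B : ℝ) :
    Tendsto (fun δ ↦ δ ^ e * exp (B * cutoff χ δ)) (𝓝[>] 0) (𝓝 0) := by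
  have hquad : Tendsto (fun y : ℝ ↦ exp (-(y * (e / (χ + 3 / 2) * y - B)))) atTop (𝓝 0) :=
    tendsto_exp_neg_atTop_nhds_zero.comp <| tendsto_id.atTop_mul_atTop₀ <|
      tendsto_atTop_add_const_right _ _ (tendsto_id.const_mul_atTop (by positivity))
  refine (hquad.comp (tendsto_cutoff hχ)).congr' ?_
  filter_upwards [self_mem_nhdsWithin, Ioc_mem_nhdsGT one_pos] with δ hδ hδ1
  have hsq := cutoff_sq hχ hδ hδ1.2
  simp only [Function.comp_apply]
  rw [rpow_def_of_pos hδ, ← exp_add]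
  congr 1
  field_simp
  linear_combination -2 * e * hsq

theorem eventually_mul_rpow_mul_exp_cutoff_le (hχ : 0 ≤ χ) {e ε : ℝ} (he : 0 < e) (hε : 0 < ε)
    (A B : ℝ) : ∀ᶠ δ in 𝓝[>] 0, A * (δ ^ e * exp (B * cutoff χ δ)) ≤ ε := by
  have hlim := (tendsto_rpow_mul_exp_cutoff hχ he B).const_mul A
  rw [mul_zero] at hlim
  exact hlim.eventually_le_const hε

theorem wkbScale_le_of_one_le (hχ : 0 ≤ χ) (hδ : 0 < δ) (hδ1 : δ ≤ 1) {x : ℝ} (hx : 1 ≤ x)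
    (hxy : x ≤ cutoff χ δ) : wkbScale χ δ x ≤ δ ^ (1 / 4 : ℝ) := by
  have hsq : x ^ 2 ≤ cutoff χ δ ^ 2 := by gcongr
  calc wkbScale χ δ x ≤ δ ^ ((χ + 2) / 2) * 1 * exp (cutoff χ δ ^ 2 / 2) := by
        unfold wkbScale
        gcongr
        exact rpow_le_one_of_one_le_of_nonpos hx (by linarith)
    _ = δ ^ (1 / 4 : ℝ) := by
        rw [mul_one, cutoff_sq hχ hδ hδ1, rpow_def_of_pos hδ, rpow_def_of_pos hδ, ← exp_add]
        ring_nf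

end Cutoff

/-! ### Decaying solutions -/

/-- A solution `φ`, with derivative `d`, of the rescaled eigenfunction equation
`φ'' = (k² - δ^{-(χ+2)} |x|^χ e^{-x²}) φ` that vanishes at the origin and decays at `+∞`. -/
structure IsDecayingSolution (χ k δ : ℝ) (φ d : ℝ → ℝ) : Prop where
  isSolutionOn : IsSolutionOn (fun x ↦ k ^ 2 - δ ^ (-(χ + 2)) * gaussWeight χ x) φ d univ
  map_zero : φ 0 = 0
  tendsto_fst : Tendsto φ atTop (𝓝 0)
  tendsto_snd : Tendsto d atTop (𝓝 0)

/-- The smallness conditions on `δ` under which the semiclassical estimates hold. -/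
structure IsSmallScale (χ k δ : ℝ) : Prop where
  pos : 0 < δ
  start_le_one : (χ + 2) * δ ≤ 1
  two_le_cutoff : 2 ≤ cutoff χ δ
  le_cutoff : χ ≤ cutoff χ δ
  rate_le : δ ^ (1 / 4 : ℝ) * (4 * k ^ 2 + cutoff χ δ ^ 2 + χ ^ 2 / 4 + 1 + χ / 2) * cutoff χ δ ≤ 1
  potential_le : ∀ x, 2 * cutoff χ δ ≤ x → δ ^ (-(χ + 2)) * gaussWeight χ x ≤ 3 / 4 * k ^ 2

section Eventually

variable {χ : ℝ}

theorem eventually_rate_le_one (hχ : 0 ≤ χ) {c : ℝ} (hc : 0 ≤ c) :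
    ∀ᶠ δ in 𝓝[>] 0, δ ^ (1 / 4 : ℝ) * (c + cutoff χ δ ^ 2) * cutoff χ δ ≤ 1 := by
  filter_upwards [eventually_mul_rpow_mul_exp_cutoff_le hχ (e := 1 / 4) (by norm_num) one_pos
    (c + 1) 3, (tendsto_cutoff hχ).eventually_ge_atTop 1, self_mem_nhdsWithin] with δ hδ hy hδ0
  set y := cutoff χ δ
  have hcube : (c + y ^ 2) * y ≤ (c + 1) * exp (3 * y) := by
    have hexp : y ^ 3 ≤ exp (3 * y) := by
      calc y ^ 3 ≤ exp y ^ 3 := by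
            gcongr
            linarith [add_one_le_exp y]
        _ = exp (3 * y) := by rw [← exp_nat_mul]; norm_num
    nlinarith [mul_nonneg hc (mul_nonneg (sub_nonneg.2 hy) (by positivity : 0 ≤ y * (y + 1)))]
  calc δ ^ (1 / 4 : ℝ) * (c + y ^ 2) * y = δ ^ (1 / 4 : ℝ) * ((c + y ^ 2) * y) := by ring
    _ ≤ δ ^ (1 / 4 : ℝ) * ((c + 1) * exp (3 * y)) :=
        mul_le_mul_of_nonneg_left hcube (rpow_nonneg (le_of_lt hδ0) _)
    _ = (c + 1) * (δ ^ (1 / 4 : ℝ) * exp (3 * y)) := by ring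
    _ ≤ 1 := hδ

theorem eventually_potential_le (hχ : 0 ≤ χ) {ε : ℝ} (hε : 0 < ε) :
    ∀ᶠ δ in 𝓝[>] 0, ∀ x, 2 * cutoff χ δ ≤ x → δ ^ (-(χ + 2)) * gaussWeight χ x ≤ ε := by
  have hlim : Tendsto (fun x : ℝ ↦ |x| ^ χ * exp (-(2 / 3) * x ^ 2)) atTop (𝓝 0) :=
    (tendsto_rpow_abs_mul_exp_neg_mul_sq_cocompact (by norm_num) χ).mono_left atTop_le_cocompact
  obtain ⟨Z, hZ⟩ := eventually_atTop.1 (hlim.eventually_le_const hε)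
  filter_upwards [(tendsto_cutoff hχ).eventually_ge_atTop (max 0 Z), Ioc_mem_nhdsGT one_pos]
    with δ hy hδ x hx
  have hy0 := (le_max_left 0 Z).trans hy
  refine le_trans ?_ (hZ x (by linarith [(le_max_right 0 Z).trans hy]))
  have hpow : δ ^ (-(χ + 2)) ≤ exp (x ^ 2 / 3) := by
    rw [rpow_def_of_pos hδ.1, exp_le_exp]
    nlinarith [cutoff_sq hχ hδ.1 hδ.2, log_nonpos hδ.1.le hδ.2]
  calc δ ^ (-(χ + 2)) * gaussWeight χ x ≤ exp (x ^ 2 / 3) * (|x| ^ χ * exp (-x ^ 2)) :=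
        mul_le_mul_of_nonneg_right hpow (gaussWeight_nonneg χ x)
    _ = |x| ^ χ * exp (-(2 / 3) * x ^ 2) := by
        rw [mul_left_comm, ← exp_add]
        ring_nf

theorem eventually_isSmallScale (hχ : 0 ≤ χ) {k : ℝ} (hk : 0 < k) :
    ∀ᶠ δ in 𝓝[>] 0, IsSmallScale χ k δ := by
  have hstart : ∀ᶠ δ : ℝ in 𝓝[>] 0, δ ∈ Ioc 0 (1 / (χ + 2)) := Ioc_mem_nhdsGT (by positivity)
  filter_upwards [hstart, (tendsto_cutoff hχ).eventually_ge_atTop (max 2 χ),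
    eventually_rate_le_one hχ (c := 4 * k ^ 2 + χ ^ 2 / 4 + 1 + χ / 2) (by positivity),
    eventually_potential_le hχ (ε := 3 / 4 * k ^ 2) (by positivity)] with δ hδ hy hrate hpot
  refine ⟨hδ.1, ?_, (le_max_left _ _).trans hy, (le_max_right _ _).trans hy, ?_, hpot⟩
  · have := hδ.2
    rw [le_div_iff₀ (by positivity)] at this
    linarith
  · convert hrate using 3
    ring

end Eventually

namespace IsSmallScale

variable {χ k δ x : ℝ}

theorem le_one (h : IsSmallScale χ k δ) (hχ : 0 ≤ χ) : δ ≤ 1 := by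
  nlinarith [h.start_le_one, h.pos]

theorem pos_of_start_le (h : IsSmallScale χ k δ) (hχ : 0 ≤ χ) (hx : (χ + 2) * δ ≤ x) : 0 < x :=
  lt_of_lt_of_le (by have := h.pos; positivity) hx

theorem rpow_mul_cutoff_le_one (h : IsSmallScale χ k δ) (hχ : 0 ≤ χ) :
    δ ^ (1 / 4 : ℝ) * (cutoff χ δ + χ / 2) ≤ 1 := by
  refine le_trans ?_ h.rate_le
  have hy := h.two_le_cutoff
  rw [mul_assoc]
  refine mul_le_mul_of_nonneg_left ?_ (rpow_nonneg h.pos.le _)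
  nlinarith [sq_nonneg k, sq_nonneg χ, sq_nonneg (cutoff χ δ)]

theorem wkbScale_le_one (h : IsSmallScale χ k δ) (hχ : 0 ≤ χ) (hx : (χ + 2) * δ ≤ x)
    (hxy : x ≤ cutoff χ δ) : wkbScale χ δ x ≤ 1 := by
  have hx0 := h.pos_of_start_le hχ hx
  rcases le_total x 1 with hx1 | hx1
  · have hratio : scaleRatio χ δ x ≤ 1 / 2 :=
      (scaleRatio_le hχ h.pos hx).trans (one_div_le_one_div_of_le two_pos (by linarith))
    nlinarith [wkbScale_le_of_le_one (χ := χ) h.pos hx0 hx1, scaleRatio_pos (χ := χ) h.pos hx0]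
  · exact (wkbScale_le_of_one_le hχ h.pos (h.le_one hχ) hx1 hxy).trans
      (rpow_le_one h.pos.le (h.le_one hχ) (by norm_num))

theorem abs_deriv_wkbScale_le_of_one_le (h : IsSmallScale χ k δ) (hχ : 0 ≤ χ) (hx : 1 ≤ x)
    (hxy : x ≤ cutoff χ δ) :
    |wkbScale χ δ x * (x - χ / (2 * x))| ≤ δ ^ (1 / 4 : ℝ) * (x + χ / 2) := by
  have hx0 : 0 < x := by linarith
  rw [abs_mul, abs_of_pos (wkbScale_pos h.pos hx0)]
  have := h.pos
  refine mul_le_mul (wkbScale_le_of_one_le hχ h.pos (h.le_one hχ) hx hxy) ?_ (abs_nonneg _)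
    (by positivity)
  refine (abs_sub_div_le hχ hx0).trans ?_
  gcongr
  linarith

theorem abs_deriv_wkbScale_le_one (h : IsSmallScale χ k δ) (hχ : 0 ≤ χ) (hx : (χ + 2) * δ ≤ x)
    (hxy : x ≤ cutoff χ δ) : |wkbScale χ δ x * (x - χ / (2 * x))| ≤ 1 := by
  rcases le_total x 1 with hx1 | hx1
  · exact abs_deriv_wkbScale_le_one_of_le_one hχ h.pos hx hx1
  · refine (h.abs_deriv_wkbScale_le_of_one_le hχ hx1 hxy).trans
      (le_trans ?_ (h.rpow_mul_cutoff_le_one hχ))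
    have := h.pos
    gcongr

theorem wkbRate_le (h : IsSmallScale χ k δ) (hχ : 0 ≤ χ) (hx : (χ + 2) * δ ≤ x)
    (hxy : x ≤ cutoff χ δ) :
    wkbScale χ δ x * (4 * k ^ 2 + (x - χ / (2 * x)) ^ 2 + (1 + χ / (2 * x ^ 2)))
      ≤ 2 * (4 * k ^ 2 + 2 + χ ^ 2 / 4 + χ / 2) * (scaleRatio χ δ x / x)
        + δ ^ (1 / 4 : ℝ) * (4 * k ^ 2 + cutoff χ δ ^ 2 + χ ^ 2 / 4 + 1 + χ / 2) := by
  have hδ := h.pos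
  have hx0 := h.pos_of_start_le hχ hx
  have hr0 := scaleRatio_pos (χ := χ) hδ hx0
  rcases le_total x 1 with hx1 | hx1
  · refine (wkbRate_le_of_le_one hχ (sq_nonneg k) hδ hx0 hx1).trans ?_
    rw [le_add_iff_nonneg_right]
    positivity
  · have hsq : x ^ 2 ≤ cutoff χ δ ^ 2 := by gcongr
    have hχ_sq : χ ^ 2 / (4 * x ^ 2) ≤ χ ^ 2 / 4 :=
      div_le_div_of_nonneg_left (by positivity) (by norm_num) (by nlinarith)
    have hχ_div : χ / (2 * x ^ 2) ≤ χ / 2 :=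
      div_le_div_of_nonneg_left hχ (by norm_num) (by nlinarith)
    refine (mul_le_mul (wkbScale_le_of_one_le hχ hδ (h.le_one hχ) hx1 hxy) ?_ (by positivity)
      (by positivity)).trans (le_add_of_nonneg_left (by positivity))
    linarith [sq_sub_div_le hχ hx0]

theorem exists_primitive_wkbRate (h : IsSmallScale χ k δ) (hχ : 0 ≤ χ) :
    ∃ K rate : ℝ → ℝ, ∀ x ∈ Icc ((χ + 2) * δ) (cutoff χ δ), HasDerivAt K (rate x) x ∧
      wkbScale χ δ x * (4 * k ^ 2 + (x - χ / (2 * x)) ^ 2 + (1 + χ / (2 * x ^ 2))) ≤ rate x ∧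
      K x - K ((χ + 2) * δ) ≤ 8 * k ^ 2 + χ ^ 2 / 2 + χ + 5 := by
  set A := 2 * (4 * k ^ 2 + 2 + χ ^ 2 / 4 + χ / 2) with hA_def
  set B := δ ^ (1 / 4 : ℝ) * (4 * k ^ 2 + cutoff χ δ ^ 2 + χ ^ 2 / 4 + 1 + χ / 2)
  have hδ := h.pos
  have hB : 0 ≤ B := by positivity
  have hA : 0 ≤ 2 * A / (χ + 2) := by positivity
  have hstart : 2 * A / (χ + 2) * scaleRatio χ δ ((χ + 2) * δ) ≤ A := by
    have hratio : scaleRatio χ δ ((χ + 2) * δ) ≤ 1 / 2 :=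
      (scaleRatio_le hχ hδ le_rfl).trans (one_div_le_one_div_of_le two_pos (by linarith))
    have hAn : 2 * A / (χ + 2) ≤ 2 * A :=
      div_le_self (by positivity) (by linarith)
    nlinarith [scaleRatio_pos (χ := χ) hδ (show 0 < (χ + 2) * δ by positivity)]
  refine ⟨fun x ↦ B * x - 2 * A / (χ + 2) * scaleRatio χ δ x,
    fun x ↦ A * (scaleRatio χ δ x / x) + B, fun x hx ↦ ⟨?_, h.wkbRate_le hχ hx.1 hx.2, ?_⟩⟩
  · exact (((hasDerivAt_id x).const_mul B).sub ((hasDerivAt_scaleRatio hδ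
      (h.pos_of_start_le hχ hx.1)).const_mul _)).congr_deriv (by field_simp; ring)
  · have hx0 := h.pos_of_start_le hχ hx.1
    have hend : 0 ≤ 2 * A / (χ + 2) * scaleRatio χ δ x :=
      mul_nonneg hA (scaleRatio_pos hδ hx0).le
    have hlin : B * x ≤ 1 := (mul_le_mul_of_nonneg_left hx.2 hB).trans h.rate_le
    have hlin' : 0 ≤ B * ((χ + 2) * δ) := by positivity
    linarith

end IsSmallScale

theorem rpow_neg_mul_gaussWeight_le {χ δ x : ℝ} (hχ : 0 ≤ χ) (hδ : 0 < δ) (hx0 : 0 ≤ x)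
    (hx : x ≤ (χ + 2) * δ) : δ ^ (-(χ + 2)) * gaussWeight χ x ≤ (χ + 2) ^ χ / δ ^ 2 :=
  calc δ ^ (-(χ + 2)) * gaussWeight χ x ≤ δ ^ (-(χ + 2)) * (((χ + 2) * δ) ^ χ * 1) := by
        rw [gaussWeight, abs_of_nonneg hx0]
        have hexp : exp (-x ^ 2) ≤ 1 := exp_le_one_iff.2 (by nlinarith)
        gcongr
    _ = (χ + 2) ^ χ * δ ^ (-2 : ℝ) := by
        rw [mul_rpow (by positivity) hδ.le, mul_one, mul_left_comm, ← rpow_add hδ]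
        ring_nf
    _ = (χ + 2) ^ χ / δ ^ 2 := by rw [rpow_neg hδ.le, rpow_two, div_eq_mul_inv]

namespace IsDecayingSolution

variable {χ k δ : ℝ} {φ d : ℝ → ℝ}

theorem isSolutionOn_wkb (S : IsDecayingSolution χ k δ φ d) (hδ : 0 < δ) :
    IsSolutionOn (fun x ↦ k ^ 2 - 1 / wkbScale χ δ x ^ 2) φ d (Ioi 0) where
  hasDerivAt_fst x _ := S.isSolutionOn.1 x (mem_univ x)
  hasDerivAt_snd x hx := by
    have := S.isSolutionOn.2 x (mem_univ x)
    rwa [rpow_mul_gaussWeight_eq hδ hx] at this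

theorem continuous (S : IsDecayingSolution χ k δ φ d) : Continuous φ :=
  continuous_iff_continuousAt.2 fun x ↦ (S.isSolutionOn.1 x (mem_univ x)).continuousAt

theorem scaledEnergy_inner_bounds (S : IsDecayingSolution χ k δ φ d) (hχ : 0 ≤ χ) (hδ : 0 < δ)
    (hδ1 : δ ≤ 1) {x : ℝ} (hx0 : 0 ≤ x) (hx : x ≤ (χ + 2) * δ) :
    exp (-((k ^ 2 + (χ + 2) ^ χ + 1) * (χ + 2))) * (δ * d 0 ^ 2)
        ≤ scaledEnergy δ (φ x) (d x) ∧
      scaledEnergy δ (φ x) (d x)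
        ≤ exp ((k ^ 2 + (χ + 2) ^ χ + 1) * (χ + 2)) * (δ * d 0 ^ 2) := by
  have hq : ∀ z ∈ Icc 0 x,
      |k ^ 2 - δ ^ (-(χ + 2)) * gaussWeight χ z| ≤ k ^ 2 + (χ + 2) ^ χ / δ ^ 2 := by
    intro z hz
    have h0 : 0 ≤ δ ^ (-(χ + 2)) * gaussWeight χ z :=
      mul_nonneg (rpow_nonneg hδ.le _) (gaussWeight_nonneg χ z)
    rw [abs_le]
    constructor <;> linarith [rpow_neg_mul_gaussWeight_le hχ hδ hz.1 (hz.2.trans hx), sq_nonneg k]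
  have hrate : (δ * (k ^ 2 + (χ + 2) ^ χ / δ ^ 2) + 1 / δ) * (x - 0)
      ≤ (k ^ 2 + (χ + 2) ^ χ + 1) * (χ + 2) := by
    calc _ ≤ (δ * (k ^ 2 + (χ + 2) ^ χ / δ ^ 2) + 1 / δ) * ((χ + 2) * δ) := by
          rw [sub_zero]
          gcongr
      _ = (k ^ 2 * δ ^ 2 + (χ + 2) ^ χ + 1) * (χ + 2) := by field_simp
      _ ≤ _ := by
          gcongr
          exact mul_le_of_le_one_right (sq_nonneg k) (pow_le_one₀ hδ.le hδ1)
  have henergy_zero : scaledEnergy δ (φ 0) (d 0) = δ * d 0 ^ 2 := by simp [scaledEnergy, S.map_zero]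
  obtain ⟨hlow, hupp⟩ :=
    (S.isSolutionOn.mono (subset_univ _)).scaledEnergy_const_bounds hx0 hδ hq
  rw [henergy_zero] at hlow hupp
  constructor
  · refine le_trans ?_ hlow
    gcongr
  · refine hupp.trans ?_
    gcongr

theorem scaledEnergy_outer_bounds (S : IsDecayingSolution χ k δ φ d) (hχ : 0 ≤ χ)
    (hsmall : IsSmallScale χ k δ) {x : ℝ} (hx : (χ + 2) * δ ≤ x) (hxy : x ≤ cutoff χ δ) :
    exp (-(8 * k ^ 2 + χ ^ 2 / 2 + χ + 5))
          * scaledEnergy (wkbScale χ δ ((χ + 2) * δ)) (φ ((χ + 2) * δ)) (d ((χ + 2) * δ))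
        ≤ 4 * scaledEnergy (wkbScale χ δ x) (φ x) (d x) ∧
      scaledEnergy (wkbScale χ δ x) (φ x) (d x)
        ≤ 4 * (exp (8 * k ^ 2 + χ ^ 2 / 2 + χ + 5)
          * scaledEnergy (wkbScale χ δ ((χ + 2) * δ)) (φ ((χ + 2) * δ)) (d ((χ + 2) * δ))) := by
  obtain ⟨K, rate, hK⟩ := hsmall.exists_primitive_wkbRate hχ
  have hδ := hsmall.pos
  have hx₀ : 0 < (χ + 2) * δ := by positivity
  have hmem : ∀ z ∈ Icc ((χ + 2) * δ) x, z ∈ Icc ((χ + 2) * δ) (cutoff χ δ) :=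
    fun z hz ↦ ⟨hz.1, hz.2.trans hxy⟩
  have hpos : ∀ z ∈ Icc ((χ + 2) * δ) x, 0 < z := fun z hz ↦ hx₀.trans_le hz.1
  have hbounds := IsSolutionOn.scaledEnergy_bounds (sq_nonneg k) hx
    ((S.isSolutionOn_wkb hδ).mono hpos) (fun z hz ↦ wkbScale_pos hδ (hpos z hz))
    (fun z hz ↦ hasDerivAt_wkbScale (hpos z hz))
    (fun z hz ↦ hasDerivAt_deriv_wkbScale (hpos z hz))
    (fun z hz ↦ hsmall.abs_deriv_wkbScale_le_one hχ hz.1 (hz.2.trans hxy))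
    (fun z hz ↦ (hK z (hmem z hz)).1) (fun z hz ↦ by
      have hz0 := hpos z hz
      have hg := wkbScale_pos (χ := χ) hδ hz0
      rw [abs_of_nonneg (by positivity)]
      linarith [(hK z (hmem z hz)).2.1])
  have hgrowth := (hK x ⟨hx, hxy⟩).2.2
  have hN := scaledEnergy_nonneg (wkbScale_pos (χ := χ) hδ hx₀) (φ ((χ + 2) * δ))
    (d ((χ + 2) * δ))
  constructor
  · refine le_trans ?_ hbounds.1
    gcongr
  · refine hbounds.2.trans ?_
    gcongr

end IsDecayingSolution

theorem wkbScale_start_le {χ δ : ℝ} (hχ : 0 ≤ χ) (hδ : 0 < δ) (h1 : (χ + 2) * δ ≤ 1) :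
    wkbScale χ δ ((χ + 2) * δ) ≤ 2 * δ := by
  have hx₀ : 0 < (χ + 2) * δ := by positivity
  calc wkbScale χ δ ((χ + 2) * δ) ≤ 2 * (scaleRatio χ δ ((χ + 2) * δ) * ((χ + 2) * δ)) :=
        wkbScale_le_of_le_one hδ hx₀ h1
    _ ≤ 2 * (1 / (χ + 2) * ((χ + 2) * δ)) := by
        gcongr
        exact scaleRatio_le hχ hδ le_rfl
    _ = 2 * δ := by field_simp

theorem le_rpow_mul_wkbScale_start {χ δ : ℝ} (hχ : 0 ≤ χ) (hδ : 0 < δ) :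
    δ ≤ (χ + 2) ^ (χ / 2) * wkbScale χ δ ((χ + 2) * δ) := by
  have hval : (χ + 2) ^ (χ / 2) * wkbScale χ δ ((χ + 2) * δ)
      = δ * exp (((χ + 2) * δ) ^ 2 / 2) := by
    have hδpow : δ ^ ((χ + 2) / 2) = δ * δ ^ (χ / 2) := by
      rw [← rpow_one_add' hδ.le (by positivity)]
      ring_nf
    rw [wkbScale, mul_rpow (by positivity) hδ.le, rpow_neg (by positivity), rpow_neg hδ.le, hδpow]
    have := rpow_pos_of_pos hδ (χ / 2)
    have := rpow_pos_of_pos (show 0 < χ + 2 by linarith) (χ / 2)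
    field_simp
  rw [hval]
  exact le_mul_of_one_le_right hδ.le (one_le_exp (by positivity))

theorem IsDecayingSolution.exists_scaledEnergy_bounds {χ : ℝ} (hχ : 0 ≤ χ) (k : ℝ) :
    ∃ C, 0 < C ∧ ∀ δ, IsSmallScale χ k δ → ∀ φ d, IsDecayingSolution χ k δ φ d →
      (∀ x ∈ Icc 0 ((χ + 2) * δ), φ x ^ 2 ≤ C * (δ ^ 2 * d 0 ^ 2)) ∧
      ∀ x ∈ Icc ((χ + 2) * δ) (cutoff χ δ),
        δ * d 0 ^ 2 ≤ C * scaledEnergy (wkbScale χ δ x) (φ x) (d x) ∧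
        scaledEnergy (wkbScale χ δ x) (φ x) (d x) ≤ C * (δ * d 0 ^ 2) := by
  set L₁ := (k ^ 2 + (χ + 2) ^ χ + 1) * (χ + 2)
  set L₂ := 8 * k ^ 2 + χ ^ 2 / 2 + χ + 5
  set A := 2 * (χ + 2) ^ (χ / 2)
  have hpow : 1 ≤ (χ + 2) ^ (χ / 2) := one_le_rpow (by linarith) (by positivity)
  have hL₂ : 1 ≤ exp L₂ := one_le_exp (by positivity)
  refine ⟨4 * exp L₂ * A * exp L₁, by positivity, fun δ hsmall φ d S ↦ ⟨fun x hx ↦ ?_, ?_⟩⟩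
  · have hδ := hsmall.pos
    calc φ x ^ 2 ≤ δ * scaledEnergy δ (φ x) (d x) := sq_le_mul_scaledEnergy hδ _ _
      _ ≤ δ * (exp L₁ * (δ * d 0 ^ 2)) := by
          gcongr
          exact (S.scaledEnergy_inner_bounds hχ hδ (hsmall.le_one hχ) hx.1 hx.2).2
      _ = 1 * exp L₁ * (δ ^ 2 * d 0 ^ 2) := by ring
      _ ≤ 4 * exp L₂ * A * exp L₁ * (δ ^ 2 * d 0 ^ 2) := by
          gcongr
          nlinarith
  · intro x hx
    have hδ := hsmall.pos
    have hx₀ : 0 < (χ + 2) * δ := by positivity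
    have hg := wkbScale_pos (χ := χ) hδ hx₀
    have hgδ : wkbScale χ δ ((χ + 2) * δ) ≤ A * δ :=
      (wkbScale_start_le hχ hδ hsmall.start_le_one).trans (by gcongr; linarith)
    have hδg : δ ≤ A * wkbScale χ δ ((χ + 2) * δ) := by
      nlinarith [le_rpow_mul_wkbScale_start hχ hδ]
    obtain ⟨hin, hin'⟩ :=
      S.scaledEnergy_inner_bounds hχ hδ (hsmall.le_one hχ) hx₀.le le_rfl
    obtain ⟨hout, hout'⟩ := S.scaledEnergy_outer_bounds hχ hsmall hx.1 hx.2
    have hmatch := scaledEnergy_le_mul hg hδ hgδ hδg (φ ((χ + 2) * δ)) (d ((χ + 2) * δ))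
    have hmatch' := scaledEnergy_le_mul hδ hg hδg hgδ (φ ((χ + 2) * δ)) (d ((χ + 2) * δ))
    rw [exp_neg, inv_mul_le_iff₀ (exp_pos _)] at hin hout
    constructor
    · calc δ * d 0 ^ 2 ≤ exp L₁ * scaledEnergy δ _ _ := hin
        _ ≤ exp L₁ * (A * (exp L₂ * (4 * scaledEnergy (wkbScale χ δ x) (φ x) (d x)))) := by
            gcongr
            exact hmatch'.trans (by gcongr)
        _ = _ := by ring
    · calc scaledEnergy (wkbScale χ δ x) (φ x) (d x) ≤ 4 * (exp L₂ * _) := hout'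
        _ ≤ 4 * (exp L₂ * (A * (exp L₁ * (δ * d 0 ^ 2)))) := by
            gcongr
            exact hmatch.trans (by gcongr)
        _ = _ := by ring

theorem inv_wkbScale_cutoff_le {χ δ : ℝ} (hχ : 0 ≤ χ) (hδ : 0 < δ) (hδ1 : δ ≤ 1)
    (hy : 0 < cutoff χ δ) :
    1 / wkbScale χ δ (cutoff χ δ) ≤ δ ^ (-(1 / 4) : ℝ) * exp (χ / 2 * cutoff χ δ) := by
  have hval : wkbScale χ δ (cutoff χ δ) = δ ^ (1 / 4 : ℝ) * (cutoff χ δ ^ (χ / 2))⁻¹ := by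
    rw [wkbScale, cutoff_sq hχ hδ hδ1, rpow_neg hy.le, mul_right_comm, rpow_def_of_pos hδ,
      rpow_def_of_pos hδ, ← exp_add]
    ring_nf
  have hpow : cutoff χ δ ^ (χ / 2) ≤ exp (χ / 2 * cutoff χ δ) := by
    rw [mul_comm, exp_mul]
    gcongr
    linarith [add_one_le_exp (cutoff χ δ)]
  rw [hval, rpow_neg hδ.le, one_div, mul_inv, inv_inv]
  gcongr

namespace IsDecayingSolution

variable {χ k δ M : ℝ} {φ d : ℝ → ℝ}

theorem energy_cutoff_le (hχ : 0 ≤ χ) (hsmall : IsSmallScale χ k δ)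
    (hM : scaledEnergy (wkbScale χ δ (cutoff χ δ)) (φ (cutoff χ δ)) (d (cutoff χ δ)) ≤ M) :
    d (cutoff χ δ) ^ 2 + (1 / wkbScale χ δ (cutoff χ δ) ^ 2 + k ^ 2) * φ (cutoff χ δ) ^ 2
      ≤ 2 * (δ ^ (-(1 / 4) : ℝ) * exp (χ / 2 * cutoff χ δ)) * M := by
  have hδ := hsmall.pos
  have hy := hsmall.two_le_cutoff
  have hinv := inv_wkbScale_cutoff_le hχ hδ (hsmall.le_one hχ) (by linarith)
  set y := cutoff χ δ
  set g := wkbScale χ δ y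
  have hg : 0 < g := wkbScale_pos hδ (by linarith)
  have hq := rpow_pos_of_pos hδ (1 / 4)
  have hgq : g ≤ δ ^ (1 / 4 : ℝ) :=
    wkbScale_le_of_one_le hχ hδ (hsmall.le_one hχ) (by linarith) le_rfl
  have hg1 : g ≤ 1 := hgq.trans (rpow_le_one hδ.le (hsmall.le_one hχ) (by norm_num))
  have hkq : k ^ 2 * δ ^ (1 / 4 : ℝ) ≤ 1 := by
    refine le_trans ?_ hsmall.rate_le
    rw [mul_comm, mul_assoc]
    refine mul_le_mul_of_nonneg_left ?_ hq.le
    nlinarith [sq_nonneg k, sq_nonneg χ, sq_nonneg y]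
  have hkg : k ^ 2 * g ^ 2 ≤ 1 := by
    refine le_trans ?_ hkq
    gcongr
    nlinarith
  calc d y ^ 2 + (1 / g ^ 2 + k ^ 2) * φ y ^ 2
      ≤ 2 * d y ^ 2 + (1 / g ^ 2 + 1 / g ^ 2) * φ y ^ 2 := by
        gcongr
        · linarith [sq_nonneg (d y)]
        · rwa [le_div_iff₀ (by positivity)]
    _ = 2 * (1 / g) * scaledEnergy g (φ y) (d y) := by
        rw [scaledEnergy]
        field_simp
        ring
    _ ≤ 2 * (δ ^ (-(1 / 4) : ℝ) * exp (χ / 2 * y)) * M := by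
        have := scaledEnergy_nonneg hg (φ y) (d y)
        gcongr

theorem sq_le_of_mem_barrier (S : IsDecayingSolution χ k δ φ d) (hχ : 0 ≤ χ) (hk : 0 ≤ k)
    (hsmall : IsSmallScale χ k δ)
    (hM : scaledEnergy (wkbScale χ δ (cutoff χ δ)) (φ (cutoff χ δ)) (d (cutoff χ δ)) ≤ M)
    {x : ℝ} (hx : x ∈ Icc (cutoff χ δ) (2 * cutoff χ δ)) :
    k ^ 2 * φ x ^ 2 ≤ 2 * (δ ^ (-(1 / 4) : ℝ) * exp ((χ / 2 + 2 * k) * cutoff χ δ)) * M := by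
  have hδ := hsmall.pos
  have hy := hsmall.two_le_cutoff
  have hχy := hsmall.le_cutoff
  set y := cutoff χ δ
  have hpos : ∀ z ∈ Icc y x, 0 < z := fun z hz ↦ by linarith [hz.1]
  have hM0 : 0 ≤ M := (scaledEnergy_nonneg (wkbScale_pos hδ (by linarith)) _ _).trans hM
  have hbarrier := IsSolutionOn.energy_le_of_antitone_potential
    (P := fun z ↦ 1 / wkbScale χ δ z ^ 2)
    (P' := fun z ↦ -(2 * (z - χ / (2 * z)) / wkbScale χ δ z ^ 2)) hk hx.1
    ((S.isSolutionOn_wkb hδ).mono hpos) (fun z _ ↦ by positivity)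
    (fun z hz ↦ by
      have hg := wkbScale_pos (χ := χ) hδ (hpos z hz)
      refine ((hasDerivAt_const z (1 : ℝ)).div ((hasDerivAt_wkbScale (hpos z hz)).pow 2)
        (pow_pos hg 2).ne').congr_deriv ?_
      simp only [Pi.pow_apply]
      field_simp
      push_cast
      ring)
    (fun z hz ↦ by
      have hslope : χ / (2 * z) ≤ z := by
        rw [div_le_iff₀ (by linarith [hpos z hz])]
        nlinarith [hz.1]
      rw [neg_nonpos]
      exact div_nonneg (by linarith) (sq_nonneg _))
  calc k ^ 2 * φ x ^ 2 ≤ d x ^ 2 + (1 / wkbScale χ δ x ^ 2 + k ^ 2) * φ x ^ 2 := by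
        nlinarith [sq_nonneg (d x),
          mul_nonneg (by positivity : 0 ≤ 1 / wkbScale χ δ x ^ 2) (sq_nonneg (φ x))]
    _ ≤ _ := hbarrier
    _ ≤ 2 * (δ ^ (-(1 / 4) : ℝ) * exp (χ / 2 * y)) * M * exp (2 * k * y) := by
        refine mul_le_mul (energy_cutoff_le hχ hsmall hM) (exp_le_exp.2 ?_) (exp_pos _).le
          (by positivity)
        nlinarith [hx.2]
    _ = 2 * (δ ^ (-(1 / 4) : ℝ) * exp ((χ / 2 + 2 * k) * y)) * M := by
        rw [add_mul, exp_add]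
        ring

theorem sq_le_mul_exp_of_cutoff_le (S : IsDecayingSolution χ k δ φ d) (hχ : 0 ≤ χ) (hk : 0 ≤ k)
    (hsmall : IsSmallScale χ k δ)
    (hM : scaledEnergy (wkbScale χ δ (cutoff χ δ)) (φ (cutoff χ δ)) (d (cutoff χ δ)) ≤ M)
    {x : ℝ} (hx : cutoff χ δ ≤ x) :
    k ^ 2 * φ x ^ 2
      ≤ 2 * (δ ^ (-(1 / 4) : ℝ) * exp ((χ / 2 + 4 * k) * cutoff χ δ)) * M * exp (-k * x) := by
  have hδ := hsmall.pos
  have hy := hsmall.two_le_cutoff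
  have hbarrier := fun z hz ↦ S.sq_le_of_mem_barrier (x := z) hχ hk hsmall hM hz
  set y := cutoff χ δ
  have hM0 : 0 ≤ M := (scaledEnergy_nonneg (wkbScale_pos hδ (by linarith)) _ _).trans hM
  have hsplit : 2 * (δ ^ (-(1 / 4) : ℝ) * exp ((χ / 2 + 4 * k) * y)) * M * exp (-k * x)
      = 2 * (δ ^ (-(1 / 4) : ℝ) * exp ((χ / 2 + 2 * k) * y)) * M * exp (-k * (x - 2 * y)) := by
    rw [show (χ / 2 + 4 * k) * y = (χ / 2 + 2 * k) * y + 2 * k * y by ring,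
      show -k * (x - 2 * y) = 2 * k * y + -k * x by ring, exp_add, exp_add]
    ring
  rw [hsplit]
  rcases le_total x (2 * y) with hx2 | hx2
  · refine (hbarrier x ⟨hx, hx2⟩).trans (le_mul_of_one_le_right (by positivity) (one_le_exp ?_))
    nlinarith
  · have hdecay := IsSolutionOn.sq_le_mul_exp_of_tendsto_zero (s := k / 2)
      (S.isSolutionOn.mono (subset_univ (Ici (2 * y))))
      (fun z hz ↦ by linarith [hsmall.potential_le z hz]) S.tendsto_fst S.tendsto_snd hx2
    calc k ^ 2 * φ x ^ 2 ≤ k ^ 2 * (φ (2 * y) ^ 2 * exp (-k * (x - 2 * y))) := by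
          rw [show -k * (x - 2 * y) = -(2 * (k / 2)) * x - -(2 * (k / 2)) * (2 * y) by ring]
          gcongr
      _ = k ^ 2 * φ (2 * y) ^ 2 * exp (-k * (x - 2 * y)) := by ring
      _ ≤ _ := mul_le_mul_of_nonneg_right (hbarrier _ ⟨by linarith, le_rfl⟩) (exp_pos _).le

theorem exists_sq_le_of_le_cutoff (hχ : 0 ≤ χ) (k : ℝ) :
    ∃ C, 0 < C ∧ ∀ δ, IsSmallScale χ k δ → ∀ φ d, IsDecayingSolution χ k δ φ d →
      (∀ x ∈ Icc 0 (cutoff χ δ), φ x ^ 2 ≤ C * (δ * d 0 ^ 2)) ∧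
      scaledEnergy (wkbScale χ δ (cutoff χ δ)) (φ (cutoff χ δ)) (d (cutoff χ δ))
        ≤ C * (δ * d 0 ^ 2) := by
  obtain ⟨C, hC, hbounds⟩ := exists_scaledEnergy_bounds hχ k
  refine ⟨C, hC, fun δ hsmall φ d S ↦ ?_⟩
  obtain ⟨hinner, houter⟩ := hbounds δ hsmall φ d S
  have hδ := hsmall.pos
  have hδ1 := hsmall.le_one hχ
  have hy := hsmall.two_le_cutoff
  have hstart := hsmall.start_le_one
  refine ⟨fun x hx ↦ ?_, (houter _ ⟨by linarith, le_rfl⟩).2⟩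
  rcases le_total x ((χ + 2) * δ) with hx₀ | hx₀
  · refine (hinner x ⟨hx.1, hx₀⟩).trans ?_
    gcongr
    nlinarith
  · have hg := wkbScale_pos (χ := χ) hδ (hsmall.pos_of_start_le hχ hx₀)
    calc φ x ^ 2 ≤ wkbScale χ δ x * scaledEnergy (wkbScale χ δ x) (φ x) (d x) :=
          sq_le_mul_scaledEnergy hg _ _
      _ ≤ scaledEnergy (wkbScale χ δ x) (φ x) (d x) :=
          mul_le_of_le_one_left (scaledEnergy_nonneg hg _ _) (hsmall.wkbScale_le_one hχ hx₀ hx.2)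
      _ ≤ C * (δ * d 0 ^ 2) := (houter x ⟨hx₀, hx.2⟩).2

theorem exists_sq_le_mul_exp (hχ : 0 ≤ χ) (hk : 0 < k) :
    ∃ C, ∀ δ, IsSmallScale χ k δ → ∀ φ d, IsDecayingSolution χ k δ φ d → ∀ x, 0 ≤ x →
      φ x ^ 2 ≤ C * (δ ^ (3 / 4 : ℝ) * exp ((χ / 2 + 4 * k) * cutoff χ δ)) * d 0 ^ 2
        * exp (-k * x) := by
  obtain ⟨C, hC, hbounds⟩ := exists_sq_le_of_le_cutoff hχ k
  refine ⟨C + 2 * C / k ^ 2, fun δ hsmall φ d S x hx ↦ ?_⟩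
  obtain ⟨hnear, hM⟩ := hbounds δ hsmall φ d S
  have hδ := hsmall.pos
  have hy := hsmall.two_le_cutoff
  rcases le_total x (cutoff χ δ) with hxy | hxy
  · have hpow : δ ≤ δ ^ (3 / 4 : ℝ) := by
      simpa using rpow_le_rpow_of_exponent_ge hδ (hsmall.le_one hχ)
        (show (3 / 4 : ℝ) ≤ 1 by norm_num)
    have hexp : 1 ≤ exp ((χ / 2 + 4 * k) * cutoff χ δ) * exp (-k * x) := by
      rw [← exp_add]
      refine one_le_exp ?_
      nlinarith [mul_nonneg hχ (by linarith : 0 ≤ cutoff χ δ),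
        mul_nonneg hk.le (by linarith : 0 ≤ cutoff χ δ)]
    calc φ x ^ 2 ≤ C * (δ * d 0 ^ 2) := hnear x ⟨hx, hxy⟩
      _ ≤ (C + 2 * C / k ^ 2) * (δ ^ (3 / 4 : ℝ) * d 0 ^ 2)
          * (exp ((χ / 2 + 4 * k) * cutoff χ δ) * exp (-k * x)) := by
          refine le_trans ?_ (le_mul_of_one_le_right (by positivity) hexp)
          gcongr
          exact le_add_of_nonneg_right (by positivity)
      _ = _ := by ring
  · have hfar := S.sq_le_mul_exp_of_cutoff_le hχ hk.le hsmall hM hxy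
    have hpow : δ ^ (-(1 / 4) : ℝ) * δ = δ ^ (3 / 4 : ℝ) := by
      rw [← rpow_add_one hδ.ne']
      norm_num
    calc φ x ^ 2 ≤ 2 * C / k ^ 2 * ((δ ^ (-(1 / 4) : ℝ) * δ)
          * exp ((χ / 2 + 4 * k) * cutoff χ δ)) * d 0 ^ 2 * exp (-k * x) := by
          rw [div_mul_eq_mul_div, div_mul_eq_mul_div, div_mul_eq_mul_div,
            le_div_iff₀ (by positivity)]
          linarith
      _ ≤ _ := by
          rw [hpow]
          gcongr
          exact le_add_of_nonneg_left hC.le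

theorem eventually_sq_le_mul_exp (hχ : 0 ≤ χ) (hk : 0 < k) :
    ∀ᶠ δ in 𝓝[>] 0, ∀ φ d, IsDecayingSolution χ k δ φ d → ∀ x, 0 ≤ x →
      φ x ^ 2 ≤ δ ^ (5 / 8 : ℝ) * d 0 ^ 2 * exp (-k * x) := by
  obtain ⟨C, hC⟩ := exists_sq_le_mul_exp hχ hk
  filter_upwards [eventually_isSmallScale hχ hk, eventually_mul_rpow_mul_exp_cutoff_le hχ
    (e := 1 / 8) (by norm_num) one_pos C (χ / 2 + 4 * k)] with δ hsmall habsorb φ d S x hx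
  have hδ := hsmall.pos
  refine (hC δ hsmall φ d S x hx).trans ?_
  gcongr
  calc C * (δ ^ (3 / 4 : ℝ) * exp ((χ / 2 + 4 * k) * cutoff χ δ))
      = δ ^ (5 / 8 : ℝ) * (C * (δ ^ (1 / 8 : ℝ) * exp ((χ / 2 + 4 * k) * cutoff χ δ))) := by
        rw [show (3 / 4 : ℝ) = 5 / 8 + 1 / 8 by norm_num, rpow_add hδ]
        ring
    _ ≤ δ ^ (5 / 8 : ℝ) := mul_le_of_le_one_right (by positivity) habsorb

end IsDecayingSolution

/-! ### Mass of a decaying solution -/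

theorem continuous_gaussWeight {χ : ℝ} (hχ : 0 ≤ χ) : Continuous (gaussWeight χ) :=
  (continuous_abs.rpow_const fun _ ↦ .inr hχ).mul (continuous_pow 2).neg.rexp

theorem gaussWeight_eq_mul_div_wkbScale {χ δ x : ℝ} (hδ : 0 < δ) (hx : 0 < x) :
    gaussWeight χ x
      = δ ^ ((χ + 2) / 2) * (x ^ (χ / 2) * exp (-(1 / 2) * x ^ 2)) / wkbScale χ δ x := by
  have hexp : exp (-x ^ 2) * exp (x ^ 2 / 2) = exp (-(1 / 2) * x ^ 2) := by
    rw [← exp_add]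
    ring_nf
  have hpow : x ^ χ * x ^ (-(χ / 2)) = x ^ (χ / 2) := by
    rw [← rpow_add hx]
    ring_nf
  rw [eq_div_iff (wkbScale_pos hδ hx).ne', gaussWeight, wkbScale, abs_of_pos hx, ← hexp, ← hpow]
  ring

/-- An integrable profile dominating the rescaled mass density `|x|^χ e^{-x²} φ²` of every
decaying solution on the half-line. Its three terms serve the boundary layer, the oscillatory
region and the tail. -/
noncomputable def massProfile (χ k x : ℝ) : ℝ :=
  exp (-x) + x ^ (χ / 2) * exp (-(1 / 2) * x ^ 2) + x ^ χ * exp (-k * x)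

section MassProfile

variable {χ k : ℝ}

theorem integrableOn_massProfile (hχ : 0 ≤ χ) (hk : 0 < k) :
    IntegrableOn (massProfile χ k) (Ioi 0) := by
  have htail := integrableOn_rpow_mul_exp_neg_mul_rpow (s := χ) (by linarith) one_pos hk
  simp only [rpow_one] at htail
  exact ((integrableOn_exp_neg_Ioi 0).add
    (integrableOn_rpow_mul_exp_neg_mul_sq one_half_pos (by linarith))).add htail

theorem exp_neg_le_massProfile {x : ℝ} (hx : 0 ≤ x) : exp (-x) ≤ massProfile χ k x := by
  rw [massProfile, add_assoc]
  exact le_add_of_nonneg_right (by positivity)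

theorem rpow_mul_exp_neg_sq_le_massProfile {x : ℝ} (hx : 0 ≤ x) :
    x ^ (χ / 2) * exp (-(1 / 2) * x ^ 2) ≤ massProfile χ k x := by
  rw [massProfile, add_right_comm]
  exact le_add_of_nonneg_left (by positivity)

theorem rpow_mul_exp_neg_le_massProfile {x : ℝ} (hx : 0 ≤ x) :
    x ^ χ * exp (-k * x) ≤ massProfile χ k x :=
  le_add_of_nonneg_left (by positivity)

theorem massProfile_nonneg {x : ℝ} (hx : 0 ≤ x) : 0 ≤ massProfile χ k x :=
  (exp_pos _).le.trans (exp_neg_le_massProfile hx)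

end MassProfile

namespace IsDecayingSolution

variable {χ k δ C x : ℝ} {φ d : ℝ → ℝ}

theorem eventually_integral_abs_le (hχ : 0 ≤ χ) (hk : 0 < k) {ε : ℝ} (hε : 0 < ε) :
    ∀ᶠ δ in 𝓝[>] 0, ∀ φ d, IsDecayingSolution χ k δ φ d →
      IntegrableOn φ (Ioi 0) ∧ ∫ x in Ioi 0, |φ x| ≤ ε * |d 0| := by
  have hsmall : Tendsto (fun δ : ℝ ↦ δ ^ (5 / 16 : ℝ) * (2 / k)) (𝓝[>] 0) (𝓝 0) := by
    have := ((continuous_rpow_const (q := 5 / 16) (by norm_num)).tendsto (0 : ℝ)).mul_const (2 / k)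
    rw [zero_rpow (by norm_num), zero_mul] at this
    exact this.mono_left nhdsWithin_le_nhds
  filter_upwards [eventually_sq_le_mul_exp hχ hk, hsmall.eventually_le_const hε,
    self_mem_nhdsWithin] with δ hdecay hδε hδ φ d S
  have hδ0 : 0 ≤ δ := le_of_lt hδ
  have hbound : ∀ x ∈ Ioi (0 : ℝ), |φ x| ≤ δ ^ (5 / 16 : ℝ) * |d 0| * exp (-(k / 2) * x) := by
    intro x hx
    refine abs_le_of_sq_le_sq ((hdecay φ d S x (le_of_lt hx)).trans_eq ?_) (by positivity)
    rw [mul_pow, mul_pow, sq_abs, ← exp_nat_mul, ← rpow_mul_natCast hδ0]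
    congr 2 <;> [norm_num; (push_cast; ring)]
  have hdom : IntegrableOn (fun x ↦ δ ^ (5 / 16 : ℝ) * |d 0| * exp (-(k / 2) * x)) (Ioi 0) :=
    (integrableOn_exp_mul_Ioi (by linarith) 0).const_mul _
  have hint : IntegrableOn φ (Ioi 0) :=
    hdom.mono' S.continuous.aestronglyMeasurable
      ((ae_restrict_iff' measurableSet_Ioi).2 (.of_forall hbound))
  refine ⟨hint, ?_⟩
  calc ∫ x in Ioi 0, |φ x|
      ≤ ∫ x in Ioi 0, δ ^ (5 / 16 : ℝ) * |d 0| * exp (-(k / 2) * x) :=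
        setIntegral_mono_on hint.abs hdom measurableSet_Ioi hbound
    _ = δ ^ (5 / 16 : ℝ) * (2 / k) * |d 0| := by
        rw [integral_const_mul, integral_exp_mul_Ioi (by linarith)]
        simp only [mul_zero, exp_zero]
        field_simp
    _ ≤ ε * |d 0| := by gcongr

theorem gaussWeight_mul_sq_le_of_le_start (hχ : 0 ≤ χ) (hsmall : IsSmallScale χ k δ)
    (hC : 0 ≤ C) (hx : 0 ≤ x) (hx₀ : x ≤ (χ + 2) * δ) (hφ : φ x ^ 2 ≤ C * (δ ^ 2 * d 0 ^ 2)) :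
    gaussWeight χ x * φ x ^ 2
      ≤ C * ((χ + 2) ^ χ * exp 1) * (δ ^ (χ / 2 + 2) * d 0 ^ 2 * massProfile χ k x) := by
  have hδ := hsmall.pos
  have hweight : gaussWeight χ x ≤ ((χ + 2) * δ) ^ χ * (exp 1 * exp (-x)) := by
    rw [gaussWeight, abs_of_nonneg hx, ← exp_add]
    gcongr
    nlinarith [hsmall.start_le_one]
  have hpow : δ ^ χ * δ ^ 2 ≤ δ ^ (χ / 2 + 2) := by
    rw [← rpow_two, ← rpow_add hδ]
    exact rpow_le_rpow_of_exponent_ge hδ (hsmall.le_one hχ) (by linarith)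
  calc gaussWeight χ x * φ x ^ 2
      ≤ ((χ + 2) * δ) ^ χ * (exp 1 * exp (-x)) * (C * (δ ^ 2 * d 0 ^ 2)) := by gcongr
    _ = C * ((χ + 2) ^ χ * exp 1) * (δ ^ χ * δ ^ 2 * d 0 ^ 2 * exp (-x)) := by
        rw [mul_rpow (by linarith) hδ.le]
        ring
    _ ≤ _ := by
        gcongr
        exact exp_neg_le_massProfile hx

theorem gaussWeight_mul_sq_le_of_mem_oscillatory (hδ : 0 < δ) (hx : 0 < x)
    (hN : scaledEnergy (wkbScale χ δ x) (φ x) (d x) ≤ C * (δ * d 0 ^ 2)) :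
    gaussWeight χ x * φ x ^ 2 ≤ C * (δ ^ (χ / 2 + 2) * d 0 ^ 2 * massProfile χ k x) := by
  have hg := wkbScale_pos (χ := χ) hδ hx
  have hφ : φ x ^ 2 / wkbScale χ δ x ≤ C * (δ * d 0 ^ 2) := by
    rw [div_le_iff₀' hg]
    exact (sq_le_mul_scaledEnergy hg _ _).trans (mul_le_mul_of_nonneg_left hN hg.le)
  calc gaussWeight χ x * φ x ^ 2
      = δ ^ ((χ + 2) / 2) * (x ^ (χ / 2) * exp (-(1 / 2) * x ^ 2))
          * (φ x ^ 2 / wkbScale χ δ x) := by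
        rw [gaussWeight_eq_mul_div_wkbScale hδ hx]
        ring
    _ ≤ δ ^ ((χ + 2) / 2) * massProfile χ k x * (C * (δ * d 0 ^ 2)) := by
        gcongr
        · exact mul_nonneg (rpow_nonneg hδ.le _) (massProfile_nonneg hx.le)
        · exact rpow_mul_exp_neg_sq_le_massProfile hx.le
    _ = _ := by
        rw [show χ / 2 + 2 = (χ + 2) / 2 + 1 by ring, rpow_add_one hδ.ne']
        ring

theorem gaussWeight_mul_sq_le_of_cutoff_le (hχ : 0 ≤ χ) (hsmall : IsSmallScale χ k δ)
    (hx : cutoff χ δ ≤ x) (hφ : φ x ^ 2 ≤ δ ^ (5 / 8 : ℝ) * d 0 ^ 2 * exp (-k * x)) :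
    gaussWeight χ x * φ x ^ 2 ≤ δ ^ (χ / 2 + 2) * d 0 ^ 2 * massProfile χ k x := by
  have hδ := hsmall.pos
  have hδ1 := hsmall.le_one hχ
  have hy := hsmall.two_le_cutoff
  have hx0 : 0 ≤ x := by linarith
  have hweight : gaussWeight χ x ≤ x ^ χ * δ ^ (χ + 3 / 2) := by
    rw [gaussWeight, abs_of_nonneg hx0, rpow_def_of_pos hδ]
    gcongr
    nlinarith [cutoff_sq hχ hδ hδ1]
  have hpow : δ ^ (χ + 3 / 2) * δ ^ (5 / 8 : ℝ) ≤ δ ^ (χ / 2 + 2) := by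
    rw [← rpow_add hδ]
    exact rpow_le_rpow_of_exponent_ge hδ hδ1 (by linarith)
  calc gaussWeight χ x * φ x ^ 2
      ≤ x ^ χ * δ ^ (χ + 3 / 2) * (δ ^ (5 / 8 : ℝ) * d 0 ^ 2 * exp (-k * x)) := by gcongr
    _ = δ ^ (χ + 3 / 2) * δ ^ (5 / 8 : ℝ) * d 0 ^ 2 * (x ^ χ * exp (-k * x)) := by ring
    _ ≤ _ := by
        gcongr
        exact rpow_mul_exp_neg_le_massProfile hx0

theorem exists_gaussWeight_mul_sq_le (hχ : 0 ≤ χ) (hk : 0 < k) :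
    ∃ C, 0 ≤ C ∧ ∀ᶠ δ in 𝓝[>] 0, ∀ φ d, IsDecayingSolution χ k δ φ d → ∀ x ∈ Ioi (0 : ℝ),
      gaussWeight χ x * φ x ^ 2 ≤ C * (δ ^ (χ / 2 + 2) * d 0 ^ 2 * massProfile χ k x) := by
  obtain ⟨C, hC, hbounds⟩ := exists_scaledEnergy_bounds hχ k
  refine ⟨C * ((χ + 2) ^ χ * exp 1) + C + 1, by positivity, ?_⟩
  filter_upwards [eventually_isSmallScale hχ hk, eventually_sq_le_mul_exp hχ hk]
    with δ hsmall hdecay φ d S x hx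
  obtain ⟨hinner, houter⟩ := hbounds δ hsmall φ d S
  have hx0 : 0 < x := hx
  have hδ := hsmall.pos
  have hprofile : 0 ≤ δ ^ (χ / 2 + 2) * d 0 ^ 2 * massProfile χ k x :=
    mul_nonneg (by positivity) (massProfile_nonneg hx0.le)
  have hinner_nonneg : 0 ≤ C * ((χ + 2) ^ χ * exp 1) := by positivity
  rcases le_total x ((χ + 2) * δ) with hx₀ | hx₀
  · refine (gaussWeight_mul_sq_le_of_le_start hχ hsmall hC.le hx0.le hx₀
      (hinner x ⟨hx0.le, hx₀⟩)).trans (mul_le_mul_of_nonneg_right ?_ hprofile)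
    linarith
  rcases le_total x (cutoff χ δ) with hxy | hxy
  · refine (gaussWeight_mul_sq_le_of_mem_oscillatory hδ hx0 (houter x ⟨hx₀, hxy⟩).2).trans
      (mul_le_mul_of_nonneg_right ?_ hprofile)
    linarith
  · refine (gaussWeight_mul_sq_le_of_cutoff_le hχ hsmall hxy (hdecay φ d S x hx0.le)).trans
      (le_mul_of_one_le_left hprofile ?_)
    linarith

theorem exists_mass_le (hχ : 0 ≤ χ) (hk : 0 < k) :
    ∃ C, 0 ≤ C ∧ ∀ᶠ δ in 𝓝[>] 0, ∀ φ d, IsDecayingSolution χ k δ φ d →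
      IntegrableOn (fun x ↦ gaussWeight χ x * φ x ^ 2) (Ioi 0) ∧
      ∫ x in Ioi 0, gaussWeight χ x * φ x ^ 2 ≤ C * (δ ^ (χ / 2 + 2) * d 0 ^ 2) := by
  obtain ⟨C, hC, hev⟩ := exists_gaussWeight_mul_sq_le hχ hk
  refine ⟨C * ∫ x in Ioi 0, massProfile χ k x, mul_nonneg hC
    (setIntegral_nonneg measurableSet_Ioi fun x hx ↦ massProfile_nonneg (le_of_lt hx)), ?_⟩
  filter_upwards [hev] with δ hδ φ d S
  have hdom : IntegrableOn
      (fun x ↦ C * (δ ^ (χ / 2 + 2) * d 0 ^ 2 * massProfile χ k x)) (Ioi 0) :=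
    ((integrableOn_massProfile hχ hk).const_mul _).const_mul _
  have hint : IntegrableOn (fun x ↦ gaussWeight χ x * φ x ^ 2) (Ioi 0) := by
    refine hdom.mono' ?_ ((ae_restrict_iff' measurableSet_Ioi).2 (.of_forall fun x hx ↦ ?_))
    · exact ((continuous_gaussWeight hχ).mul (S.continuous.pow 2)).aestronglyMeasurable
    · rw [norm_of_nonneg (mul_nonneg (gaussWeight_nonneg _ _) (sq_nonneg _))]
      exact hδ φ d S x hx
  refine ⟨hint, (setIntegral_mono_on hint hdom measurableSet_Ioi (hδ φ d S)).trans_eq ?_⟩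
  rw [integral_const_mul, integral_const_mul]
  ring

theorem integral_sq_div_wkbScale_ge (S : IsDecayingSolution χ k δ φ d) (hχ : 0 ≤ χ)
    (hsmall : IsSmallScale χ k δ) {c : ℝ}
    (hN : ∀ x ∈ Icc (1 : ℝ) 2, c ≤ scaledEnergy (wkbScale χ δ x) (φ x) (d x) ∧
      scaledEnergy (wkbScale χ δ x) (φ x) (d x) ≤ C) :
    c - δ ^ (1 / 4 : ℝ) * (2 + χ / 4) * C ≤ 2 * ∫ x in (1 : ℝ)..2, φ x ^ 2 / wkbScale χ δ x := by
  have hδ := hsmall.pos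
  have hy := hsmall.two_le_cutoff
  have hpos : ∀ x ∈ Icc (1 : ℝ) 2, 0 < x := fun x hx ↦ by linarith [hx.1]
  have key := IsSolutionOn.integral_sq_div_ge (sq_nonneg k) one_le_two
    ((S.isSolutionOn_wkb hδ).mono hpos)
    (fun x hx ↦ wkbScale_pos hδ (hpos x hx)) (fun x hx ↦ hasDerivAt_wkbScale (hpos x hx))
    (fun x hx ↦ wkbScale_le_of_one_le hχ hδ (hsmall.le_one hχ) hx.1 (hx.2.trans hy))
    (fun x hx ↦ (hsmall.abs_deriv_wkbScale_le_of_one_le hχ hx.1 (hx.2.trans hy)).trans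
      (mul_le_mul_of_nonneg_left (add_le_add_left hx.2 (χ / 2)) (by positivity)))
    (fun x hx ↦ (hN x hx).1) (fun x hx ↦ (hN x hx).2)
  linarith

theorem mass_ge_integral_sq_div_wkbScale (S : IsDecayingSolution χ k δ φ d) (hχ : 0 ≤ χ)
    (hδ : 0 < δ) (hint : IntegrableOn (fun x ↦ gaussWeight χ x * φ x ^ 2) (Ioi 0)) :
    exp (-2) * δ ^ ((χ + 2) / 2) * ∫ x in (1 : ℝ)..2, φ x ^ 2 / wkbScale χ δ x
      ≤ ∫ x in Ioi 0, gaussWeight χ x * φ x ^ 2 := by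
  have hpos : ∀ x ∈ uIcc (1 : ℝ) 2, 0 < x := fun x hx ↦ by
    rw [uIcc_of_le one_le_two] at hx
    linarith [hx.1]
  have hcont : ContinuousOn (fun x ↦ φ x ^ 2 / wkbScale χ δ x) (uIcc 1 2) := fun x hx ↦
    ((S.continuous.continuousAt.pow 2).div (hasDerivAt_wkbScale (hpos x hx)).continuousAt
      (wkbScale_pos hδ (hpos x hx)).ne').continuousWithinAt
  have hdensity : ∀ x ∈ Icc (1 : ℝ) 2,
      exp (-2) * δ ^ ((χ + 2) / 2) * (φ x ^ 2 / wkbScale χ δ x) ≤ gaussWeight χ x * φ x ^ 2 := by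
    intro x hx
    have hx0 : 0 < x := by linarith [hx.1]
    have hg := wkbScale_pos (χ := χ) hδ hx0
    have hprofile : exp (-2) ≤ x ^ (χ / 2) * exp (-(1 / 2) * x ^ 2) :=
      (exp_le_exp.2 (by nlinarith [hx.2])).trans
        (le_mul_of_one_le_left (exp_pos _).le (one_le_rpow hx.1 (by linarith)))
    calc exp (-2) * δ ^ ((χ + 2) / 2) * (φ x ^ 2 / wkbScale χ δ x)
        ≤ x ^ (χ / 2) * exp (-(1 / 2) * x ^ 2) * δ ^ ((χ + 2) / 2)
          * (φ x ^ 2 / wkbScale χ δ x) := by gcongr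
      _ = gaussWeight χ x * φ x ^ 2 := by
          rw [gaussWeight_eq_mul_div_wkbScale hδ hx0]
          ring
  rw [← intervalIntegral.integral_const_mul]
  calc ∫ x in (1 : ℝ)..2, exp (-2) * δ ^ ((χ + 2) / 2) * (φ x ^ 2 / wkbScale χ δ x)
      ≤ ∫ x in (1 : ℝ)..2, gaussWeight χ x * φ x ^ 2 :=
        intervalIntegral.integral_mono_on one_le_two (hcont.intervalIntegrable.const_mul _)
          (((continuous_gaussWeight hχ).mul (S.continuous.pow 2)).intervalIntegrable _ _) hdensity
    _ ≤ _ := by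
        rw [intervalIntegral.integral_of_le one_le_two]
        refine setIntegral_mono_set hint (.of_forall fun x ↦ ?_) ?_
        · exact mul_nonneg (gaussWeight_nonneg _ _) (sq_nonneg _)
        · exact (Ioc_subset_Ioi_self.trans (Ioi_subset_Ioi zero_le_one)).eventuallyLE

theorem exists_mass_bounds (hχ : 0 ≤ χ) (hk : 0 < k) :
    ∃ C, 0 < C ∧ ∀ᶠ δ in 𝓝[>] 0, ∀ φ d, IsDecayingSolution χ k δ φ d →
      δ ^ (χ / 2 + 2) * d 0 ^ 2 ≤ C * ∫ x in Ioi 0, gaussWeight χ x * φ x ^ 2 ∧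
      ∫ x in Ioi 0, gaussWeight χ x * φ x ^ 2 ≤ C * (δ ^ (χ / 2 + 2) * d 0 ^ 2) := by
  obtain ⟨A, hA, hupper⟩ := exists_mass_le hχ hk
  obtain ⟨C, hC, hbounds⟩ := exists_scaledEnergy_bounds hχ k
  refine ⟨4 * C * exp 2 + A, by positivity, ?_⟩
  filter_upwards [eventually_isSmallScale hχ hk, hupper, eventually_mul_rpow_mul_exp_cutoff_le hχ
    (e := 1 / 4) (by norm_num) (ε := 1 / (2 * C)) (by positivity) ((2 + χ / 4) * C) 0]
    with δ hsmall hmass habsorb φ d S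
  obtain ⟨hint, hle⟩ := hmass φ d S
  have hδ := hsmall.pos
  have hm : 0 ≤ ∫ x in Ioi 0, gaussWeight χ x * φ x ^ 2 :=
    integral_nonneg fun x ↦ mul_nonneg (gaussWeight_nonneg _ _) (sq_nonneg _)
  rw [zero_mul, exp_zero, mul_one] at habsorb
  have hosc := S.integral_sq_div_wkbScale_ge hχ hsmall (c := δ * d 0 ^ 2 / C) fun x hx ↦ by
    have hx' := (hbounds δ hsmall φ d S).2 x
      ⟨hsmall.start_le_one.trans hx.1, hx.2.trans hsmall.two_le_cutoff⟩
    exact ⟨(div_le_iff₀' hC).2 hx'.1, hx'.2⟩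
  have hosc_ge : δ * d 0 ^ 2 / (4 * C) ≤ ∫ x in (1 : ℝ)..2, φ x ^ 2 / wkbScale χ δ x := by
    have := mul_le_mul_of_nonneg_right habsorb (by positivity : 0 ≤ δ * d 0 ^ 2)
    have hhalf : 1 / (2 * C) * (δ * d 0 ^ 2) = δ * d 0 ^ 2 / C - 2 * (δ * d 0 ^ 2 / (4 * C)) := by
      field_simp
      ring
    linarith
  refine ⟨?_, hle.trans (mul_le_mul_of_nonneg_right (by linarith [mul_pos hC (exp_pos 2)])
    (by positivity))⟩
  calc δ ^ (χ / 2 + 2) * d 0 ^ 2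
      = 4 * C * exp 2 * (exp (-2) * δ ^ ((χ + 2) / 2) * (δ * d 0 ^ 2 / (4 * C))) := by
        rw [show χ / 2 + 2 = (χ + 2) / 2 + 1 by ring, rpow_add_one hδ.ne', exp_neg]
        field_simp
    _ ≤ 4 * C * exp 2 * ∫ x in Ioi 0, gaussWeight χ x * φ x ^ 2 := by
        refine mul_le_mul_of_nonneg_left (le_trans ?_
          (S.mass_ge_integral_sq_div_wkbScale hχ hδ hint)) (by positivity)
        gcongr
    _ ≤ _ := by
        gcongr
        exact le_add_of_nonneg_right hA

end IsDecayingSolution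

/-! ### Incomplete Gamma function and Laplace transforms -/

theorem integral_Ioi_eq_sub_of_hasDerivAt {f f' : ℝ → ℝ} {a l m : ℝ}
    (hf : ∀ x ∈ Ioi a, HasDerivAt f (f' x) x) (hf' : IntegrableOn f' (Ioi a))
    (hl : Tendsto f (𝓝[>] a) (𝓝 l)) (hm : Tendsto f atTop (𝓝 m)) :
    ∫ x in Ioi a, f' x = m - l := by
  have := integral_Ioi_deriv_mul_eq_sub (u := f) (v := 1) (u' := f') (v' := 0) hf
    (fun x _ ↦ hasDerivAt_const x 1) (by simpa using hf') (by simpa using hl) (by simpa using hm)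
  simpa using this

theorem hasDerivAt_integral_Ioi {f : ℝ → ℝ} {a x : ℝ} (hf : IntegrableOn f (Ioi a)) (hx : a < x)
    (hfx : ContinuousAt f x) : HasDerivAt (fun y ↦ ∫ r in Ioi y, f r) (-f x) x := by
  have hprim : HasDerivAt (fun y ↦ ∫ r in a..y, f r) (f x) x :=
    intervalIntegral.integral_hasDerivAt_right
      ((intervalIntegrable_iff_integrableOn_Ioc_of_le hx.le).2 (hf.mono_set Ioc_subset_Ioi_self))
      ⟨Ioi a, Ioi_mem_nhds hx, hf.aestronglyMeasurable⟩ hfx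
  refine (hprim.const_sub (∫ r in Ioi a, f r)).congr_of_eventuallyEq ?_
  filter_upwards [Ioi_mem_nhds hx] with y hy
  rw [← intervalIntegral.integral_interval_add_Ioi hf (hf.mono_set (Ioi_subset_Ioi (le_of_lt hy))),
    add_sub_cancel_left]

theorem integral_Ioi_pos {f : ℝ → ℝ} {a : ℝ} (hf : IntegrableOn f (Ioi a))
    (hpos : ∀ x ∈ Ioi a, 0 < f x) : 0 < ∫ x in Ioi a, f x := by
  rw [setIntegral_pos_iff_support_of_nonneg_ae
    ((ae_restrict_iff' measurableSet_Ioi).2 (.of_forall fun x hx ↦ (hpos x hx).le)) hf,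
    inter_eq_right.2 fun x hx ↦ Function.mem_support.2 (hpos x hx).ne']
  simp

/-- The upper incomplete Gamma function `Γ(s, x)`. -/
noncomputable def upperGamma (s x : ℝ) : ℝ :=
  ∫ r in Ioi x, exp (-r) * r ^ (s - 1)

section UpperGamma

variable {s x : ℝ}

theorem hasDerivAt_upperGamma (hs : 0 < s) (hx : 0 < x) :
    HasDerivAt (upperGamma s) (-(exp (-x) * x ^ (s - 1))) x :=
  hasDerivAt_integral_Ioi (GammaIntegral_convergent hs) hx
    (continuous_neg.rexp.continuousAt.mul (continuousAt_rpow_const _ _ (.inl hx.ne')))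

theorem upperGamma_pos (hs : 0 < s) (hx : 0 ≤ x) : 0 < upperGamma s x :=
  integral_Ioi_pos ((GammaIntegral_convergent hs).mono_set (Ioi_subset_Ioi hx)) fun r hr ↦ by
    have : 0 < r := hx.trans_lt hr
    positivity

theorem upperGamma_le_Gamma (hs : 0 < s) (hx : 0 ≤ x) : upperGamma s x ≤ Gamma s := by
  rw [Gamma_eq_integral hs]
  refine setIntegral_mono_set (GammaIntegral_convergent hs) ?_ (Ioi_subset_Ioi hx).eventuallyLE
  refine (ae_restrict_iff' measurableSet_Ioi).2 (.of_forall fun r hr ↦ ?_)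
  have : (0 : ℝ) < r := hr
  positivity

theorem upperGamma_le_rpow_mul_exp (hs : 0 < s) (hs1 : s ≤ 1) (hx : 0 < x) :
    upperGamma s x ≤ x ^ (s - 1) * exp (-x) := by
  rw [upperGamma, ← integral_exp_neg_Ioi x, ← integral_const_mul]
  refine setIntegral_mono_on ((GammaIntegral_convergent hs).mono_set (Ioi_subset_Ioi hx.le))
    ((integrableOn_exp_neg_Ioi x).const_mul _) measurableSet_Ioi fun r hr ↦ ?_
  rw [mul_comm]
  exact mul_le_mul_of_nonneg_right (rpow_le_rpow_of_nonpos hx (le_of_lt hr) (by linarith))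
    (exp_pos _).le

end UpperGamma

/-- The positive solution `w` of `v² w' + (1 + ν) v w + w = v^{α-1}` that is integrable on the
half-line. Its Laplace transform yields the comparison function. -/
noncomputable def laplaceDensity (α ν v : ℝ) : ℝ :=
  v ^ (-1 - ν) * (exp v⁻¹ * upperGamma (1 - α - ν) v⁻¹)

section LaplaceDensity

variable {α ν v : ℝ}

theorem rpow_sub_one_eq_mul_inv_rpow (hv : 0 < v) :
    v ^ (α - 1) = v ^ (-1 - ν) * v⁻¹ ^ (1 - α - ν - 1) := by
  rw [inv_rpow hv.le, ← rpow_neg hv.le, ← rpow_add hv]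
  ring_nf

theorem hasDerivAt_laplaceDensity (hγ : α + ν < 1) (hv : 0 < v) :
    HasDerivAt (laplaceDensity α ν)
      ((v ^ (α - 1) - (1 + ν) * v * laplaceDensity α ν v - laplaceDensity α ν v) / v ^ 2) v := by
  have hinv := hasDerivAt_inv hv.ne'
  have hΓ := (hasDerivAt_upperGamma (s := 1 - α - ν) (by linarith) (inv_pos.2 hv)).comp v hinv
  refine ((hasDerivAt_rpow_const (p := -1 - ν) (.inl hv.ne')).mul
    (hinv.exp.mul hΓ)).congr_deriv ?_
  rw [rpow_sub_one_eq_mul_inv_rpow hv (α := α) (ν := ν), laplaceDensity,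
    rpow_sub_one hv.ne' (-1 - ν), exp_neg]
  simp only [Pi.mul_apply, Function.comp_apply]
  field_simp
  ring

theorem laplaceDensity_pos (hγ : α + ν < 1) (hv : 0 < v) : 0 < laplaceDensity α ν v := by
  have := upperGamma_pos (s := 1 - α - ν) (by linarith) (inv_pos.2 hv).le
  unfold laplaceDensity
  positivity

theorem laplaceDensity_le_rpow (hα : 0 ≤ α) (hν : 0 ≤ ν) (hγ : α + ν < 1) (hv : 0 < v) :
    laplaceDensity α ν v ≤ v ^ (α - 1) := by
  rw [rpow_sub_one_eq_mul_inv_rpow hv (ν := ν), laplaceDensity]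
  gcongr
  calc exp v⁻¹ * upperGamma (1 - α - ν) v⁻¹
      ≤ exp v⁻¹ * (v⁻¹ ^ (1 - α - ν - 1) * exp (-v⁻¹)) := by
        gcongr
        exact upperGamma_le_rpow_mul_exp (by linarith) (by linarith) (inv_pos.2 hv)
    _ = v⁻¹ ^ (1 - α - ν - 1) := by
        rw [exp_neg]
        field_simp

theorem integrableOn_laplaceDensity (hα : 0 < α) (hν : 0 < ν) (hγ : α + ν < 1) :
    IntegrableOn (laplaceDensity α ν) (Ioi 0) := by
  have hcont : ContinuousOn (laplaceDensity α ν) (Ioi 0) := fun v hv ↦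
    (hasDerivAt_laplaceDensity hγ hv).continuousAt.continuousWithinAt
  rw [← Ioc_union_Ioi_eq_Ioi zero_le_one]
  refine IntegrableOn.union ?_ ?_
  · have hdom : IntegrableOn (fun v : ℝ ↦ v ^ (α - 1)) (Ioc 0 1) := by
      rw [← intervalIntegrable_iff_integrableOn_Ioc_of_le zero_le_one]
      exact intervalIntegral.intervalIntegrable_rpow' (by linarith)
    refine hdom.mono' ((hcont.mono Ioc_subset_Ioi_self).aestronglyMeasurable measurableSet_Ioc)
      ((ae_restrict_iff' measurableSet_Ioc).2 (.of_forall fun v hv ↦ ?_))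
    rw [norm_of_nonneg (laplaceDensity_pos hγ hv.1).le]
    exact laplaceDensity_le_rpow hα.le hν.le hγ hv.1
  · have hdom : IntegrableOn (fun v : ℝ ↦ v ^ (-1 - ν) * (exp 1 * Gamma (1 - α - ν))) (Ioi 1) :=
      (integrableOn_Ioi_rpow_of_lt (by linarith) one_pos).mul_const _
    refine hdom.mono' ((hcont.mono (Ioi_subset_Ioi zero_le_one)).aestronglyMeasurable
      measurableSet_Ioi) ((ae_restrict_iff' measurableSet_Ioi).2 (.of_forall fun v hv ↦ ?_))
    have hv0 : 0 < v := one_pos.trans hv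
    have hΓ := upperGamma_pos (s := 1 - α - ν) (by linarith) (inv_pos.2 hv0).le
    rw [norm_of_nonneg (laplaceDensity_pos hγ hv0).le, laplaceDensity]
    gcongr
    · exact inv_le_one_of_one_le₀ (le_of_lt hv)
    · exact upperGamma_le_Gamma (by linarith) (inv_pos.2 hv0).le

end LaplaceDensity

/-- The `k`-th moment `∫₀^∞ vᵏ e^{-Yv} w(v) dv` of the Laplace transform of `w`. -/
noncomputable def laplaceMoment (w : ℝ → ℝ) (k : ℕ) (Y : ℝ) : ℝ :=
  ∫ v in Ioi (0 : ℝ), v ^ k * exp (-(Y * v)) * w v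

section LaplaceMoment

variable {w : ℝ → ℝ} {Y : ℝ}

theorem pow_mul_exp_neg_le_factorial (k : ℕ) {x : ℝ} (hx : 0 ≤ x) :
    x ^ k * exp (-x) ≤ k.factorial := by
  have h := pow_div_factorial_le_exp x hx k
  rw [div_le_iff₀ (by positivity)] at h
  rw [exp_neg, ← div_eq_mul_inv, div_le_iff₀ (exp_pos _)]
  linarith

theorem aestronglyMeasurable_laplaceMoment (hw : IntegrableOn w (Ioi 0)) (k : ℕ) (Y : ℝ) :
    AEStronglyMeasurable (fun v ↦ v ^ k * exp (-(Y * v)) * w v) (volume.restrict (Ioi 0)) :=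
  AEStronglyMeasurable.mul (by fun_prop) hw.aestronglyMeasurable

theorem pow_mul_exp_neg_mul_le (k : ℕ) {v : ℝ} (hY : 0 < Y) (hv : 0 < v) :
    v ^ k * exp (-(Y * v)) ≤ k.factorial / Y ^ k := by
  rw [le_div_iff₀ (by positivity)]
  calc v ^ k * exp (-(Y * v)) * Y ^ k = (Y * v) ^ k * exp (-(Y * v)) := by
        rw [mul_pow]
        ring
    _ ≤ k.factorial := pow_mul_exp_neg_le_factorial k (by positivity)

theorem ae_norm_laplaceMoment_le (w : ℝ → ℝ) (k : ℕ) (hY : 0 < Y) :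
    ∀ᵐ v ∂volume.restrict (Ioi 0),
      ‖v ^ k * exp (-(Y * v)) * w v‖ ≤ k.factorial / Y ^ k * |w v| := by
  filter_upwards [ae_restrict_mem measurableSet_Ioi] with v hv
  have hv0 : (0 : ℝ) < v := hv
  rw [norm_mul, norm_of_nonneg (by positivity), Real.norm_eq_abs]
  exact mul_le_mul_of_nonneg_right (pow_mul_exp_neg_mul_le k hY hv) (abs_nonneg _)

theorem integrableOn_laplaceMoment (hw : IntegrableOn w (Ioi 0)) (k : ℕ) (hY : 0 < Y) :
    IntegrableOn (fun v ↦ v ^ k * exp (-(Y * v)) * w v) (Ioi 0) :=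
  (hw.abs.const_mul _).mono' (aestronglyMeasurable_laplaceMoment hw k Y)
    (ae_norm_laplaceMoment_le w k hY)

theorem abs_pow_mul_laplaceMoment_le (hw : IntegrableOn w (Ioi 0)) (k : ℕ) (hY : 0 < Y) :
    |Y ^ k * laplaceMoment w k Y| ≤ k.factorial * ∫ v in Ioi (0 : ℝ), |w v| := by
  have hmoment : |laplaceMoment w k Y| ≤ k.factorial / Y ^ k * ∫ v in Ioi (0 : ℝ), |w v| := by
    rw [← integral_const_mul]
    exact norm_integral_le_of_norm_le (hw.abs.const_mul _) (ae_norm_laplaceMoment_le w k hY)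
  rw [abs_mul, abs_of_pos (by positivity)]
  calc Y ^ k * |laplaceMoment w k Y|
      ≤ Y ^ k * (k.factorial / Y ^ k * ∫ v in Ioi (0 : ℝ), |w v|) := by gcongr
    _ = k.factorial * ∫ v in Ioi (0 : ℝ), |w v| := by field_simp

theorem hasDerivAt_laplaceMoment (hw : IntegrableOn w (Ioi 0)) (k : ℕ) (hY : 0 < Y) :
    HasDerivAt (laplaceMoment w k) (-laplaceMoment w (k + 1) Y) Y := by
  have hY2 : 0 < Y / 2 := half_pos hY
  have hderiv := (hasDerivAt_integral_of_dominated_loc_of_deriv_le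
    (μ := volume.restrict (Ioi (0 : ℝ)))
    (F := fun Y v ↦ v ^ k * exp (-(Y * v)) * w v)
    (F' := fun Y v ↦ -(v ^ (k + 1) * exp (-(Y * v)) * w v))
    (bound := fun v ↦ (k + 1).factorial / (Y / 2) ^ (k + 1) * |w v|)
    (Ioi_mem_nhds (half_lt_self hY))
    (.of_forall fun y ↦ aestronglyMeasurable_laplaceMoment hw k y)
    (integrableOn_laplaceMoment hw k hY) (aestronglyMeasurable_laplaceMoment hw (k + 1) Y).neg
    ?_ (hw.abs.const_mul _) ?_).2
  · rwa [integral_neg] at hderiv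
  · filter_upwards [ae_restrict_mem measurableSet_Ioi] with v hv y hy
    have hv0 : (0 : ℝ) < v := hv
    have hy2 : Y / 2 < y := hy
    rw [norm_neg, norm_mul, norm_of_nonneg (by positivity), Real.norm_eq_abs]
    refine mul_le_mul_of_nonneg_right ?_ (abs_nonneg _)
    refine (pow_mul_exp_neg_mul_le (k + 1) (hY2.trans hy2) hv).trans ?_
    gcongr
  · refine .of_forall fun v y _ ↦ ?_
    refine ((((hasDerivAt_id y).mul_const v).neg.exp.const_mul (v ^ k)).mul_const
      (w v)).congr_deriv ?_
    simp only [Pi.neg_apply, id]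
    ring

theorem tendsto_pow_mul_laplaceMoment (hw : IntegrableOn w (Ioi 0)) (k : ℕ) :
    Tendsto (fun Y ↦ Y ^ k * laplaceMoment w k Y) (𝓝[>] 0)
      (𝓝 (∫ v in Ioi (0 : ℝ), 0 ^ k * w v)) := by
  have hlim := tendsto_integral_filter_of_dominated_convergence (μ := volume.restrict (Ioi 0))
    (F := fun Y v ↦ Y ^ k * (v ^ k * exp (-(Y * v)) * w v)) (f := fun v ↦ 0 ^ k * w v)
    (l := 𝓝[>] (0 : ℝ)) (fun v ↦ k.factorial * |w v|)
    (.of_forall fun y ↦ (aestronglyMeasurable_laplaceMoment hw k y).const_mul _) ?_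
    (hw.abs.const_mul _) ?_
  · exact hlim.congr fun Y ↦ integral_const_mul _ _
  · filter_upwards [self_mem_nhdsWithin] with Y hY
    have hY0 : 0 < Y := hY
    filter_upwards [ae_norm_laplaceMoment_le w k hY0] with v hv
    rw [norm_mul, norm_of_nonneg (by positivity)]
    calc Y ^ k * ‖v ^ k * exp (-(Y * v)) * w v‖ ≤ Y ^ k * (k.factorial / Y ^ k * |w v|) := by
          gcongr
      _ = k.factorial * |w v| := by field_simp
  · refine .of_forall fun v ↦ ?_
    have hcont : Continuous fun Y : ℝ ↦ Y ^ k * (v ^ k * exp (-(Y * v)) * w v) := by fun_prop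
    have h := (hcont.tendsto 0).mono_left (nhdsWithin_le_nhds (s := Ioi (0 : ℝ)))
    convert h using 2
    rcases k with _ | k <;> simp

end LaplaceMoment

/-! ### The comparison function -/

section LaplaceODE

variable {α ν Y : ℝ}

theorem integrableOn_rpow_mul_exp_neg_mul (hα : 0 < α) (hY : 0 < Y) :
    IntegrableOn (fun v : ℝ ↦ v ^ (α - 1) * exp (-(Y * v))) (Ioi 0) := by
  have := integrableOn_rpow_mul_exp_neg_mul_rpow (s := α - 1) (by linarith) one_pos hY
  simpa only [rpow_one, neg_mul] using this

theorem hasDerivAt_sq_mul_exp_mul_laplaceDensity (hγ : α + ν < 1) (Y : ℝ) {v : ℝ} (hv : 0 < v) :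
    HasDerivAt (fun v ↦ v ^ 2 * exp (-(Y * v)) * laplaceDensity α ν v)
      (-Y * (v ^ 2 * exp (-(Y * v)) * laplaceDensity α ν v)
        + (1 - ν) * (v ^ 1 * exp (-(Y * v)) * laplaceDensity α ν v)
        - v ^ 0 * exp (-(Y * v)) * laplaceDensity α ν v + v ^ (α - 1) * exp (-(Y * v))) v := by
  refine (((hasDerivAt_pow 2 v).mul ((hasDerivAt_id v).const_mul Y).neg.exp).mul
    (hasDerivAt_laplaceDensity hγ hv)).congr_deriv ?_
  simp only [Pi.mul_apply, Pi.neg_apply, id]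
  field_simp
  push_cast
  ring

theorem sq_mul_exp_mul_laplaceDensity_nonneg (hγ : α + ν < 1) (Y : ℝ) {v : ℝ} (hv : 0 < v) :
    0 ≤ v ^ 2 * exp (-(Y * v)) * laplaceDensity α ν v :=
  mul_nonneg (by positivity) (laplaceDensity_pos hγ hv).le

theorem sq_mul_exp_mul_laplaceDensity_le (hα : 0 ≤ α) (hν : 0 ≤ ν) (hγ : α + ν < 1) (Y : ℝ)
    {v : ℝ} (hv : 0 < v) :
    v ^ 2 * exp (-(Y * v)) * laplaceDensity α ν v ≤ v ^ (α + 1) * exp (-(Y * v)) := by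
  calc v ^ 2 * exp (-(Y * v)) * laplaceDensity α ν v
      ≤ v ^ 2 * exp (-(Y * v)) * v ^ (α - 1) := by
        gcongr
        exact laplaceDensity_le_rpow hα hν hγ hv
    _ = v ^ (α + 1) * exp (-(Y * v)) := by
        rw [show α + 1 = 2 + (α - 1) by ring, rpow_add hv, rpow_two]
        ring

theorem tendsto_sq_mul_exp_mul_laplaceDensity_zero (hα : 0 ≤ α) (hν : 0 ≤ ν) (hγ : α + ν < 1)
    (Y : ℝ) :
    Tendsto (fun v ↦ v ^ 2 * exp (-(Y * v)) * laplaceDensity α ν v) (𝓝[>] 0) (𝓝 0) := by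
  have hcont : Continuous fun v : ℝ ↦ v ^ (α + 1) * exp (-(Y * v)) :=
    (continuous_rpow_const (by linarith)).mul (by fun_prop)
  have hlim := (hcont.tendsto 0).mono_left (nhdsWithin_le_nhds (s := Ioi (0 : ℝ)))
  rw [zero_rpow (by linarith), zero_mul] at hlim
  exact squeeze_zero'
    (eventually_nhdsWithin_of_forall fun v hv ↦ sq_mul_exp_mul_laplaceDensity_nonneg hγ Y hv)
    (eventually_nhdsWithin_of_forall fun v hv ↦ sq_mul_exp_mul_laplaceDensity_le hα hν hγ Y hv)
    hlim

theorem tendsto_sq_mul_exp_mul_laplaceDensity_atTop (hα : 0 ≤ α) (hν : 0 ≤ ν) (hγ : α + ν < 1)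
    (hY : 0 < Y) :
    Tendsto (fun v ↦ v ^ 2 * exp (-(Y * v)) * laplaceDensity α ν v) atTop (𝓝 0) := by
  have hlim := tendsto_rpow_mul_exp_neg_mul_atTop_nhds_zero (α + 1) Y hY
  simp only [neg_mul] at hlim
  refine squeeze_zero' ?_ ?_ hlim
  · filter_upwards [eventually_gt_atTop 0] with v hv
      using sq_mul_exp_mul_laplaceDensity_nonneg hγ Y hv
  · filter_upwards [eventually_gt_atTop 0] with v hv
      using sq_mul_exp_mul_laplaceDensity_le hα hν hγ Y hv

theorem laplaceMoment_laplaceDensity_ode (hα : 0 < α) (hν : 0 < ν) (hγ : α + ν < 1) (hY : 0 < Y) :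
    Y * laplaceMoment (laplaceDensity α ν) 2 Y - (1 - ν) * laplaceMoment (laplaceDensity α ν) 1 Y
      + laplaceMoment (laplaceDensity α ν) 0 Y = Gamma α * Y ^ (-α) := by
  have hmom := fun k : ℕ ↦
    integrableOn_laplaceMoment (integrableOn_laplaceDensity hα hν hγ) k hY
  have hpow := integrableOn_rpow_mul_exp_neg_mul hα hY
  have h21 : IntegrableOn (fun v ↦ -Y * (v ^ 2 * exp (-(Y * v)) * laplaceDensity α ν v)
      + (1 - ν) * (v ^ 1 * exp (-(Y * v)) * laplaceDensity α ν v)) (Ioi 0) :=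
    ((hmom 2).const_mul (-Y)).add ((hmom 1).const_mul (1 - ν))
  have h210 : IntegrableOn (fun v ↦ -Y * (v ^ 2 * exp (-(Y * v)) * laplaceDensity α ν v)
      + (1 - ν) * (v ^ 1 * exp (-(Y * v)) * laplaceDensity α ν v)
      - v ^ 0 * exp (-(Y * v)) * laplaceDensity α ν v) (Ioi 0) := h21.sub (hmom 0)
  have hftc := integral_Ioi_eq_sub_of_hasDerivAt
    (fun v hv ↦ hasDerivAt_sq_mul_exp_mul_laplaceDensity hγ Y hv)
    (h210.add hpow)
    (tendsto_sq_mul_exp_mul_laplaceDensity_zero hα.le hν.le hγ Y)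
    (tendsto_sq_mul_exp_mul_laplaceDensity_atTop hα.le hν.le hγ hY)
  rw [integral_add h210 hpow, integral_sub h21 (hmom 0),
    integral_add ((hmom 2).const_mul _) ((hmom 1).const_mul _), integral_const_mul,
    integral_const_mul, integral_rpow_mul_exp_neg_mul_Ioi hα hY, one_div, inv_rpow hY.le,
    ← rpow_neg hY.le] at hftc
  unfold laplaceMoment
  linarith

end LaplaceODE

/-- `Ψ` is a bounded solution of `Ψ'' + t^χ Ψ = t^{χ-ξ}` on the half-line with `Ψ(0⁺) = Ψ₀`, the
bounds being uniform in `t`. It is the profile, at unit scale, against which the eigenfunctions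
are tested near the origin. -/
structure IsComparisonFunction (χ ξ Ψ₀ C : ℝ) (Ψ Ψ' : ℝ → ℝ) : Prop where
  hasDerivAt : ∀ t, 0 < t → HasDerivAt Ψ (Ψ' t) t
  hasDerivAt_deriv : ∀ t, 0 < t → HasDerivAt Ψ' (t ^ χ * (t ^ (-ξ) - Ψ t)) t
  tendsto_zero : Tendsto Ψ (𝓝[>] 0) (𝓝 Ψ₀)
  abs_le : ∀ t, 0 < t → |Ψ t| ≤ C
  abs_mul_deriv_le : ∀ t, 0 < t → |t * Ψ' t| ≤ C
  tendsto_mul_deriv : Tendsto (fun t ↦ t * Ψ' t) (𝓝[>] 0) (𝓝 0)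
  rpow_mul_abs_sub_le : ∀ t, 0 < t → t ^ (χ + 2) * |t ^ (-ξ) - Ψ t| ≤ C

theorem isComparisonFunction_one (χ : ℝ) :
    IsComparisonFunction χ 0 1 1 (fun _ ↦ 1) (fun _ ↦ 0) where
  hasDerivAt t _ := hasDerivAt_const t 1
  hasDerivAt_deriv t _ := by simpa using hasDerivAt_const t (0 : ℝ)
  tendsto_zero := tendsto_const_nhds
  abs_le t _ := by simp
  abs_mul_deriv_le t _ := by simp
  tendsto_mul_deriv := by simp
  rpow_mul_abs_sub_le t _ := by simp

/-- The variable `Y = t^{χ+2}/(χ+2)²`, in which `Ψ'' + t^χ Ψ = t^{χ-ξ}` becomes the equation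
`Y Ψ_YY + (1 - ν) Ψ_Y + Ψ = (χ+2)^{-2α} Y^{-α}` with `ν = 1/(χ+2)` and `α = ξ/(χ+2)`. -/
noncomputable def stretchedVar (χ t : ℝ) : ℝ :=
  t ^ (χ + 2) / (χ + 2) ^ 2

/-- The Laplace moments of `laplaceDensity` in the stretched variable, normalised so that the
zeroth one is asymptotic to `t^{-ξ}`. -/
noncomputable def comparisonMoment (χ ξ : ℝ) (k : ℕ) (t : ℝ) : ℝ :=
  laplaceMoment (laplaceDensity (ξ / (χ + 2)) (1 / (χ + 2))) k (stretchedVar χ t)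
    / (Gamma (ξ / (χ + 2)) * ((χ + 2) ^ 2) ^ (ξ / (χ + 2)))

/-- The limit at `0` of the zeroth comparison moment, which bounds all the moments up to
factorials. -/
noncomputable def comparisonMass (χ ξ : ℝ) : ℝ :=
  (∫ v in Ioi 0, laplaceDensity (ξ / (χ + 2)) (1 / (χ + 2)) v)
    / (Gamma (ξ / (χ + 2)) * ((χ + 2) ^ 2) ^ (ξ / (χ + 2)))

section ComparisonMoment

variable {χ ξ t : ℝ}

theorem stretchedVar_pos (hχ : 0 ≤ χ) (ht : 0 < t) : 0 < stretchedVar χ t := by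
  unfold stretchedVar
  positivity

theorem rpow_eq_mul_stretchedVar (hχ : 0 ≤ χ) (t : ℝ) :
    t ^ (χ + 2) = (χ + 2) ^ 2 * stretchedVar χ t := by
  unfold stretchedVar
  field_simp

theorem hasDerivAt_stretchedVar (hχ : 0 ≤ χ) (ht : 0 < t) :
    HasDerivAt (stretchedVar χ) (t ^ (χ + 1) / (χ + 2)) t := by
  refine ((hasDerivAt_rpow_const (p := χ + 2) (.inl ht.ne')).div_const _).congr_deriv ?_
  rw [show χ + 2 - 1 = χ + 1 by ring]
  field_simp

theorem tendsto_stretchedVar (hχ : 0 ≤ χ) : Tendsto (stretchedVar χ) (𝓝[>] 0) (𝓝[>] 0) := by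
  have hlim := ((continuous_rpow_const (q := χ + 2) (by linarith)).tendsto 0).div_const
    ((χ + 2) ^ 2)
  rw [zero_rpow (by linarith), zero_div] at hlim
  exact tendsto_nhdsWithin_iff.2 ⟨hlim.mono_left nhdsWithin_le_nhds,
    eventually_nhdsWithin_of_forall fun t ht ↦ stretchedVar_pos hχ ht⟩

theorem comparisonExponents_pos_lt (hχ : 0 ≤ χ) (hξ : 0 < ξ) (hξχ : ξ < χ + 1) :
    0 < ξ / (χ + 2) ∧ 0 < 1 / (χ + 2) ∧ ξ / (χ + 2) + 1 / (χ + 2) < 1 := by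
  refine ⟨by positivity, by positivity, ?_⟩
  rw [← add_div, div_lt_one (by linarith)]
  linarith

theorem hasDerivAt_comparisonMoment (hχ : 0 ≤ χ) (hξ : 0 < ξ) (hξχ : ξ < χ + 1) (k : ℕ)
    (ht : 0 < t) :
    HasDerivAt (comparisonMoment χ ξ k)
      (-(comparisonMoment χ ξ (k + 1) t * (t ^ (χ + 1) / (χ + 2)))) t := by
  obtain ⟨hα, hν, hγ⟩ := comparisonExponents_pos_lt hχ hξ hξχ
  refine (((hasDerivAt_laplaceMoment (integrableOn_laplaceDensity hα hν hγ) k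
    (stretchedVar_pos hχ ht)).comp t (hasDerivAt_stretchedVar hχ ht)).div_const _).congr_deriv ?_
  unfold comparisonMoment
  ring

theorem rpow_neg_sub_comparisonMoment_zero (hχ : 0 ≤ χ) (hξ : 0 < ξ) (hξχ : ξ < χ + 1)
    (ht : 0 < t) :
    t ^ (-ξ) - comparisonMoment χ ξ 0 t
      = stretchedVar χ t * comparisonMoment χ ξ 2 t
        - (1 - 1 / (χ + 2)) * comparisonMoment χ ξ 1 t := by
  obtain ⟨hα, hν, hγ⟩ := comparisonExponents_pos_lt hχ hξ hξχ
  have hode := laplaceMoment_laplaceDensity_ode hα hν hγ (stretchedVar_pos hχ ht)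
  have hΓ := Gamma_pos_of_pos hα
  have hsource : stretchedVar χ t ^ (-(ξ / (χ + 2)))
      = t ^ (-ξ) * ((χ + 2) ^ 2) ^ (ξ / (χ + 2)) := by
    rw [stretchedVar, div_rpow (by positivity) (by positivity), ← rpow_mul ht.le,
      rpow_neg (by positivity : 0 ≤ (χ + 2) ^ 2), div_inv_eq_mul]
    congr 2
    field_simp
  have hc : 0 < ((χ + 2) ^ 2) ^ (ξ / (χ + 2)) := by positivity
  rw [hsource] at hode
  unfold comparisonMoment
  rw [eq_comm, ← mul_right_inj' (mul_pos hΓ hc).ne']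
  generalize ((χ + 2) ^ 2) ^ (ξ / (χ + 2)) = c at *
  generalize Gamma (ξ / (χ + 2)) = G at *
  simp only [mul_sub, mul_left_comm (G * c), mul_div_cancel₀ _ (mul_pos hΓ hc).ne']
  linarith

theorem comparisonMass_pos (hχ : 0 ≤ χ) (hξ : 0 < ξ) (hξχ : ξ < χ + 1) :
    0 < comparisonMass χ ξ := by
  obtain ⟨hα, hν, hγ⟩ := comparisonExponents_pos_lt hχ hξ hξχ
  have hint := integral_Ioi_pos (integrableOn_laplaceDensity hα hν hγ)
    fun v hv ↦ laplaceDensity_pos hγ hv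
  have := Gamma_pos_of_pos hα
  unfold comparisonMass
  positivity

theorem abs_pow_mul_comparisonMoment_le (hχ : 0 ≤ χ) (hξ : 0 < ξ) (hξχ : ξ < χ + 1) (k : ℕ)
    (ht : 0 < t) :
    |stretchedVar χ t ^ k * comparisonMoment χ ξ k t| ≤ k.factorial * comparisonMass χ ξ := by
  obtain ⟨hα, hν, hγ⟩ := comparisonExponents_pos_lt hχ hξ hξχ
  have := Gamma_pos_of_pos hα
  have hle := abs_pow_mul_laplaceMoment_le (integrableOn_laplaceDensity hα hν hγ) k
    (stretchedVar_pos hχ ht)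
  have habs : ∫ v in Ioi 0, |laplaceDensity (ξ / (χ + 2)) (1 / (χ + 2)) v|
      = ∫ v in Ioi 0, laplaceDensity (ξ / (χ + 2)) (1 / (χ + 2)) v :=
    setIntegral_congr_fun measurableSet_Ioi fun v hv ↦ abs_of_pos (laplaceDensity_pos hγ hv)
  rw [habs] at hle
  unfold comparisonMoment comparisonMass
  rw [← mul_div_assoc, ← mul_div_assoc, abs_div, abs_of_pos (by positivity : 0 < Gamma _ * _)]
  gcongr

theorem tendsto_pow_mul_comparisonMoment (hχ : 0 ≤ χ) (hξ : 0 < ξ) (hξχ : ξ < χ + 1) (k : ℕ) :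
    Tendsto (fun t ↦ stretchedVar χ t ^ k * comparisonMoment χ ξ k t) (𝓝[>] 0)
      (𝓝 (0 ^ k * comparisonMass χ ξ)) := by
  obtain ⟨hα, hν, hγ⟩ := comparisonExponents_pos_lt hχ hξ hξχ
  have hlim := ((tendsto_pow_mul_laplaceMoment (integrableOn_laplaceDensity hα hν hγ) k).comp
    (tendsto_stretchedVar hχ)).div_const
      (Gamma (ξ / (χ + 2)) * ((χ + 2) ^ 2) ^ (ξ / (χ + 2)))
  rw [integral_const_mul] at hlim
  simpa only [comparisonMoment, comparisonMass, mul_div_assoc, Function.comp_def] using hlim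

theorem mul_deriv_comparisonMoment_zero (hχ : 0 ≤ χ) (ξ : ℝ) (ht : 0 < t) :
    t * -(comparisonMoment χ ξ 1 t * (t ^ (χ + 1) / (χ + 2)))
      = -(χ + 2) * (stretchedVar χ t ^ 1 * comparisonMoment χ ξ 1 t) := by
  have hpow : t * t ^ (χ + 1) = (χ + 2) ^ 2 * stretchedVar χ t := by
    rw [← rpow_eq_mul_stretchedVar hχ, mul_comm, ← rpow_add_one ht.ne']
    ring_nf
  have hn : χ + 2 ≠ 0 := by positivity
  calc t * -(comparisonMoment χ ξ 1 t * (t ^ (χ + 1) / (χ + 2)))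
      = -(comparisonMoment χ ξ 1 t * (t * t ^ (χ + 1)) / (χ + 2)) := by ring
    _ = -(χ + 2) * (stretchedVar χ t ^ 1 * comparisonMoment χ ξ 1 t) := by
        rw [hpow]
        field_simp

theorem hasDerivAt_deriv_comparisonMoment_zero (hχ : 0 ≤ χ) (hξ : 0 < ξ) (hξχ : ξ < χ + 1)
    (ht : 0 < t) :
    HasDerivAt (fun t ↦ -(comparisonMoment χ ξ 1 t * (t ^ (χ + 1) / (χ + 2))))
      (t ^ χ * (t ^ (-ξ) - comparisonMoment χ ξ 0 t)) t := by
  have hpow := (hasDerivAt_rpow_const (p := χ + 1) (.inl ht.ne')).div_const (χ + 2)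
  refine (((hasDerivAt_comparisonMoment hχ hξ hξχ 1 ht).mul hpow).neg).congr_deriv ?_
  rw [rpow_neg_sub_comparisonMoment_zero hχ hξ hξχ ht, add_sub_cancel_right, stretchedVar,
    show χ + 2 = χ + 1 + 1 by ring, rpow_add_one ht.ne' (χ + 1), rpow_add_one ht.ne' χ]
  have hn : χ + 1 + 1 ≠ 0 := by positivity
  field_simp
  ring

theorem rpow_mul_abs_rpow_neg_sub_comparisonMoment_le (hχ : 0 ≤ χ) (hξ : 0 < ξ)
    (hξχ : ξ < χ + 1) (ht : 0 < t) :
    t ^ (χ + 2) * |t ^ (-ξ) - comparisonMoment χ ξ 0 t|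
      ≤ 3 * (χ + 2) ^ 2 * comparisonMass χ ξ := by
  have hle₁ := abs_pow_mul_comparisonMoment_le hχ hξ hξχ 1 ht
  have hle₂ := abs_pow_mul_comparisonMoment_le hχ hξ hξχ 2 ht
  have hY := stretchedVar_pos hχ ht
  have hν : |1 - 1 / (χ + 2)| ≤ 1 := by
    have : 1 / (χ + 2) ≤ 1 := (div_le_one (by linarith)).2 (by linarith)
    rw [abs_of_nonneg (by linarith)]
    linarith [show 0 ≤ 1 / (χ + 2) by positivity]
  calc t ^ (χ + 2) * |t ^ (-ξ) - comparisonMoment χ ξ 0 t|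
      = (χ + 2) ^ 2 * |stretchedVar χ t ^ 2 * comparisonMoment χ ξ 2 t
          - (1 - 1 / (χ + 2)) * (stretchedVar χ t ^ 1 * comparisonMoment χ ξ 1 t)| := by
        rw [rpow_neg_sub_comparisonMoment_zero hχ hξ hξχ ht, rpow_eq_mul_stretchedVar hχ, mul_assoc]
        nth_rw 1 [← abs_of_pos hY]
        rw [← abs_mul]
        ring_nf
    _ ≤ (χ + 2) ^ 2 * (2 * comparisonMass χ ξ + 1 * comparisonMass χ ξ) := by
        gcongr
        refine (abs_sub _ _).trans (add_le_add (by simpa using hle₂) ?_)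
        rw [abs_mul]
        exact mul_le_mul hν (by simpa using hle₁) (abs_nonneg _) zero_le_one
    _ = 3 * (χ + 2) ^ 2 * comparisonMass χ ξ := by ring

theorem isComparisonFunction_comparisonMoment_zero (hχ : 0 ≤ χ) (hξ : 0 < ξ)
    (hξχ : ξ < χ + 1) :
    IsComparisonFunction χ ξ (comparisonMass χ ξ) (3 * (χ + 2) ^ 2 * comparisonMass χ ξ)
      (comparisonMoment χ ξ 0) (fun t ↦ -(comparisonMoment χ ξ 1 t * (t ^ (χ + 1) / (χ + 2)))) := by
  have hmass := (comparisonMass_pos hχ hξ hξχ).le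
  refine
    { hasDerivAt := fun t ht ↦ hasDerivAt_comparisonMoment hχ hξ hξχ 0 ht
      hasDerivAt_deriv := fun t ht ↦ hasDerivAt_deriv_comparisonMoment_zero hχ hξ hξχ ht
      tendsto_zero := by
        simpa only [pow_zero, one_mul] using tendsto_pow_mul_comparisonMoment hχ hξ hξχ 0
      abs_le := fun t ht ↦ ?_
      abs_mul_deriv_le := fun t ht ↦ ?_
      tendsto_mul_deriv := ?_
      rpow_mul_abs_sub_le := fun t ht ↦
        rpow_mul_abs_rpow_neg_sub_comparisonMoment_le hχ hξ hξχ ht }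
  · have hle := abs_pow_mul_comparisonMoment_le hχ hξ hξχ 0 ht
    simp only [pow_zero, Nat.factorial_zero, Nat.cast_one, one_mul] at hle
    exact hle.trans (le_mul_of_one_le_left hmass (by nlinarith))
  · have hle := abs_pow_mul_comparisonMoment_le hχ hξ hξχ 1 ht
    rw [Nat.factorial_one, Nat.cast_one, one_mul] at hle
    rw [mul_deriv_comparisonMoment_zero hχ ξ ht, abs_mul, abs_neg,
      abs_of_pos (by linarith : 0 < χ + 2)]
    gcongr
    nlinarith
  · have hlim := (tendsto_pow_mul_comparisonMoment hχ hξ hξχ 1).const_mul (-(χ + 2))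
    rw [pow_one, zero_mul, mul_zero] at hlim
    exact hlim.congr' (eventually_nhdsWithin_of_forall fun t ht ↦
      (mul_deriv_comparisonMoment_zero hχ ξ ht).symm)

end ComparisonMoment

theorem exists_isComparisonFunction {χ ξ : ℝ} (hχ : 0 ≤ χ) (hξ : 0 ≤ ξ) (hξχ : ξ < χ + 1) :
    ∃ Ψ₀ C : ℝ, ∃ Ψ Ψ' : ℝ → ℝ, 0 < Ψ₀ ∧ IsComparisonFunction χ ξ Ψ₀ C Ψ Ψ' := by
  rcases hξ.eq_or_lt with rfl | hξpos
  · exact ⟨1, 1, _, _, one_pos, isComparisonFunction_one χ⟩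
  · exact ⟨_, _, _, _, comparisonMass_pos hχ hξpos hξχ,
      isComparisonFunction_comparisonMoment_zero hχ hξpos hξχ⟩

/-! ### Green's identity -/

theorem integrableOn_rpow_mul_exp_neg_sq {s : ℝ} (hs : -1 < s) :
    IntegrableOn (fun x : ℝ ↦ x ^ s * exp (-x ^ 2)) (Ioi 0) := by
  simpa using integrableOn_rpow_mul_exp_neg_mul_sq one_pos hs

theorem exists_abs_le_of_continuous_of_tendsto {φ : ℝ → ℝ} (hφ : Continuous φ) {l : ℝ}
    (hlim : Tendsto φ atTop (𝓝 l)) (a : ℝ) : ∃ B, ∀ x, a ≤ x → |φ x| ≤ B := by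
  obtain ⟨T, hT⟩ := eventually_atTop.1 (hlim.abs.eventually (ge_mem_nhds (lt_add_one |l|)))
  obtain ⟨B, hB⟩ := (isCompact_Icc (a := a) (b := T)).exists_bound_of_continuousOn hφ.continuousOn
  refine ⟨max B (|l| + 1), fun x hx ↦ ?_⟩
  rcases le_total x T with h | h
  · exact (hB x ⟨hx, h⟩).trans (le_max_left _ _)
  · exact (hT x h).trans (le_max_right _ _)

theorem IsDecayingSolution.integrableOn_rpow_mul_exp_mul {χ k δ : ℝ} {φ d : ℝ → ℝ}
    (S : IsDecayingSolution χ k δ φ d) {s : ℝ} (hs : -1 < s) :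
    IntegrableOn (fun x ↦ x ^ s * exp (-x ^ 2) * φ x) (Ioi 0) := by
  obtain ⟨B, hB⟩ := exists_abs_le_of_continuous_of_tendsto S.continuous S.tendsto_fst 0
  refine Integrable.mul_bdd (c := B) (integrableOn_rpow_mul_exp_neg_sq hs)
    S.continuous.aestronglyMeasurable ?_
  filter_upwards [ae_restrict_mem measurableSet_Ioi] with x hx using hB x (le_of_lt hx)

theorem abs_one_sub_exp_neg_sq_le (x : ℝ) : |1 - exp (-x ^ 2)| ≤ x ^ 2 := by
  rw [abs_of_nonneg (sub_nonneg.2 (exp_le_one_iff.2 (neg_nonpos.2 (sq_nonneg x))))]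
  linarith [add_one_le_exp (-x ^ 2)]

theorem tendsto_div_const_nhdsGT_zero {δ : ℝ} (hδ : 0 < δ) :
    Tendsto (fun x ↦ x / δ) (𝓝[>] 0) (𝓝[>] 0) := by
  refine tendsto_nhdsWithin_iff.2 ⟨?_, eventually_nhdsWithin_of_forall fun x hx ↦ div_pos hx hδ⟩
  have hlim : Tendsto (fun x : ℝ ↦ x / δ) (𝓝 0) (𝓝 (0 / δ)) := tendsto_id.div_const δ
  rw [zero_div] at hlim
  exact hlim.mono_left nhdsWithin_le_nhds

/-- The defect of the rescaled comparison function `u = Ψ(·/δ)` in the eigenfunction equation: for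
`x > 0`, `u'' - (k² - δ^{-(χ+2)} x^χ e^{-x²}) u` is `δ^{ξ-(χ+2)} x^{χ-ξ} e^{-x²}` plus this term. -/
noncomputable def comparisonResidual (χ ξ k δ : ℝ) (Ψ : ℝ → ℝ) (x : ℝ) : ℝ :=
  δ⁻¹ ^ 2 * (1 - exp (-x ^ 2)) * ((x / δ) ^ χ * ((x / δ) ^ (-ξ) - Ψ (x / δ))) - k ^ 2 * Ψ (x / δ)

/-- The Wronskian `u' φ - u φ'` of the rescaled comparison function `u = Ψ(·/δ)` and a solution
`φ` with derivative `d`. -/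
noncomputable def comparisonWronskian (δ : ℝ) (Ψ Ψ' φ d : ℝ → ℝ) (x : ℝ) : ℝ :=
  Ψ' (x / δ) / δ * φ x - Ψ (x / δ) * d x

namespace IsComparisonFunction

variable {χ ξ k δ Ψ₀ C : ℝ} {Ψ Ψ' φ d : ℝ → ℝ}

theorem abs_residual_le (P : IsComparisonFunction χ ξ Ψ₀ C Ψ Ψ') (k : ℝ) (hδ : 0 < δ) {x : ℝ}
    (hx : 0 < x) : |comparisonResidual χ ξ k δ Ψ x| ≤ C * (1 + k ^ 2) := by
  have ht : 0 < x / δ := div_pos hx hδ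
  have hpow : (x / δ) ^ (χ + 2) = (x / δ) ^ χ * (x / δ) ^ 2 := by rw [rpow_add ht, rpow_two]
  have hweight : |δ⁻¹ ^ 2 * (1 - exp (-x ^ 2)) * ((x / δ) ^ χ * ((x / δ) ^ (-ξ) - Ψ (x / δ)))|
      ≤ C :=
    calc _ = δ⁻¹ ^ 2 * |1 - exp (-x ^ 2)| * ((x / δ) ^ χ * |(x / δ) ^ (-ξ) - Ψ (x / δ)|) := by
          rw [abs_mul, abs_mul, abs_mul, abs_of_pos (by positivity : 0 < δ⁻¹ ^ 2),
            abs_of_pos (by positivity : 0 < (x / δ) ^ χ)]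
      _ ≤ δ⁻¹ ^ 2 * x ^ 2 * ((x / δ) ^ χ * |(x / δ) ^ (-ξ) - Ψ (x / δ)|) := by
          gcongr
          exact abs_one_sub_exp_neg_sq_le x
      _ = (x / δ) ^ (χ + 2) * |(x / δ) ^ (-ξ) - Ψ (x / δ)| := by
          rw [hpow]
          ring
      _ ≤ C := P.rpow_mul_abs_sub_le _ ht
  calc |comparisonResidual χ ξ k δ Ψ x| ≤ C + k ^ 2 * C := by
        refine (abs_sub _ _).trans (add_le_add hweight ?_)
        rw [abs_mul, abs_sq]
        gcongr
        exact P.abs_le _ ht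
    _ = C * (1 + k ^ 2) := by ring

theorem continuousOn_residual (P : IsComparisonFunction χ ξ Ψ₀ C Ψ Ψ') (k : ℝ) (hδ : 0 < δ) :
    ContinuousOn (comparisonResidual χ ξ k δ Ψ) (Ioi 0) := by
  have hmaps : MapsTo (fun x : ℝ ↦ x / δ) (Ioi 0) (Ioi 0) := fun x hx ↦ div_pos hx hδ
  have hdiv : ContinuousOn (fun x : ℝ ↦ x / δ) (Ioi 0) := by fun_prop
  have hΨ : ContinuousOn (fun x ↦ Ψ (x / δ)) (Ioi 0) :=
    ContinuousOn.comp (fun t ht ↦ (P.hasDerivAt t ht).continuousAt.continuousWithinAt) hdiv hmaps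
  have hrpow (e : ℝ) : ContinuousOn (fun x : ℝ ↦ (x / δ) ^ e) (Ioi 0) :=
    hdiv.rpow_const fun x hx ↦ .inl (hmaps hx).ne'
  have hexp : Continuous fun x : ℝ ↦ δ⁻¹ ^ 2 * (1 - exp (-x ^ 2)) := by fun_prop
  exact (hexp.continuousOn.mul ((hrpow χ).mul ((hrpow (-ξ)).sub hΨ))).sub
    (continuousOn_const.mul hΨ)

theorem integrableOn_residual_mul (P : IsComparisonFunction χ ξ Ψ₀ C Ψ Ψ') (k : ℝ) (hδ : 0 < δ)
    (hφ : IntegrableOn φ (Ioi 0)) :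
    IntegrableOn (fun x ↦ comparisonResidual χ ξ k δ Ψ x * φ x) (Ioi 0) := by
  refine Integrable.bdd_mul (c := C * (1 + k ^ 2)) hφ
    ((P.continuousOn_residual k hδ).aestronglyMeasurable measurableSet_Ioi) ?_
  filter_upwards [ae_restrict_mem measurableSet_Ioi] with x hx using P.abs_residual_le k hδ hx

theorem hasDerivAt_wronskian (P : IsComparisonFunction χ ξ Ψ₀ C Ψ Ψ')
    (S : IsDecayingSolution χ k δ φ d) (hδ : 0 < δ) {x : ℝ} (hx : 0 < x) :
    HasDerivAt (comparisonWronskian δ Ψ Ψ' φ d)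
      (δ ^ (ξ - (χ + 2)) * (x ^ (χ - ξ) * exp (-x ^ 2) * φ x)
        + comparisonResidual χ ξ k δ Ψ x * φ x) x := by
  have ht : 0 < x / δ := div_pos hx hδ
  have hdiv : HasDerivAt (fun x : ℝ ↦ x / δ) (1 / δ) x := (hasDerivAt_id x).div_const δ
  have hpotential : δ ^ (-(χ + 2)) * x ^ χ = δ⁻¹ ^ 2 * (x / δ) ^ χ := by
    rw [div_rpow hx.le hδ.le, rpow_neg hδ.le, rpow_add hδ, rpow_two]
    field_simp
  have hsource : δ ^ (ξ - (χ + 2)) * x ^ (χ - ξ) = δ⁻¹ ^ 2 * ((x / δ) ^ χ * (x / δ) ^ (-ξ)) := by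
    rw [← rpow_add ht, ← sub_eq_add_neg, div_rpow hx.le hδ.le,
      show ξ - (χ + 2) = -(χ - ξ) - 2 by ring, rpow_sub hδ, rpow_neg hδ.le, rpow_two]
    field_simp
  refine ((((P.hasDerivAt_deriv _ ht).comp x hdiv).div_const δ |>.mul
    (S.isSolutionOn.hasDerivAt_fst x (mem_univ x))).sub (((P.hasDerivAt _ ht).comp x hdiv).mul
    (S.isSolutionOn.hasDerivAt_snd x (mem_univ x)))).congr_deriv ?_
  simp only [Function.comp, comparisonResidual, gaussWeight, abs_of_pos hx]
  linear_combination Ψ (x / δ) * exp (-x ^ 2) * φ x * hpotential - exp (-x ^ 2) * φ x * hsource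

theorem tendsto_wronskian_zero (P : IsComparisonFunction χ ξ Ψ₀ C Ψ Ψ')
    (S : IsDecayingSolution χ k δ φ d) (hδ : 0 < δ) :
    Tendsto (comparisonWronskian δ Ψ Ψ' φ d) (𝓝[>] 0) (𝓝 (-(Ψ₀ * d 0))) := by
  have hscale := tendsto_div_const_nhdsGT_zero hδ
  have hslope := (S.isSolutionOn.hasDerivAt_fst 0 (mem_univ 0)).tendsto_slope_zero_right
  have hd := (S.isSolutionOn.hasDerivAt_snd 0 (mem_univ 0)).continuousAt.tendsto.mono_left
    (nhdsWithin_le_nhds (s := Ioi 0))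
  have hlim := ((P.tendsto_mul_deriv.comp hscale).mul hslope).sub
    ((P.tendsto_zero.comp hscale).mul hd)
  rw [zero_mul, zero_sub] at hlim
  refine hlim.congr' (eventually_nhdsWithin_of_forall fun x (hx : 0 < x) ↦ ?_)
  simp only [comparisonWronskian, Function.comp, zero_add, S.map_zero, sub_zero, smul_eq_mul]
  field_simp

theorem tendsto_wronskian_atTop (P : IsComparisonFunction χ ξ Ψ₀ C Ψ Ψ')
    (S : IsDecayingSolution χ k δ φ d) (hδ : 0 < δ) :
    Tendsto (comparisonWronskian δ Ψ Ψ' φ d) atTop (𝓝 0) := by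
  have hlim : Tendsto (fun x ↦ C * |φ x| + C * |d x|) atTop (𝓝 0) := by
    simpa using (S.tendsto_fst.abs.const_mul C).add (S.tendsto_snd.abs.const_mul C)
  refine squeeze_zero_norm' ?_ hlim
  filter_upwards [eventually_ge_atTop 1] with x hx
  have hx0 : 0 < x := by linarith
  have ht : 0 < x / δ := div_pos hx0 hδ
  have hC : 0 ≤ C := (abs_nonneg _).trans (P.abs_le _ ht)
  have hderiv : Ψ' (x / δ) / δ * φ x = (x / δ * Ψ' (x / δ)) * (φ x / x) := by field_simp
  rw [comparisonWronskian, Real.norm_eq_abs, hderiv]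
  refine (abs_sub _ _).trans (add_le_add ?_ ?_)
  · rw [abs_mul, abs_div (φ x), abs_of_pos hx0]
    exact mul_le_mul (P.abs_mul_deriv_le _ ht) (div_le_self (abs_nonneg _) hx) (by positivity) hC
  · rw [abs_mul]
    gcongr
    exact P.abs_le _ ht

theorem rpow_mul_integral_sub_eq (P : IsComparisonFunction χ ξ Ψ₀ C Ψ Ψ')
    (S : IsDecayingSolution χ k δ φ d) (hδ : 0 < δ) (hξ : ξ < χ + 1)
    (hφ : IntegrableOn φ (Ioi 0)) :
    δ ^ (ξ - (χ + 2)) * (∫ x in Ioi 0, x ^ (χ - ξ) * exp (-x ^ 2) * φ x) - Ψ₀ * d 0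
      = -∫ x in Ioi 0, comparisonResidual χ ξ k δ Ψ x * φ x := by
  have hsource := (S.integrableOn_rpow_mul_exp_mul (s := χ - ξ) (by linarith)).const_mul
    (δ ^ (ξ - (χ + 2)))
  have hresidual := P.integrableOn_residual_mul k hδ hφ
  have hgreen := integral_Ioi_eq_sub_of_hasDerivAt
    (fun x hx ↦ P.hasDerivAt_wronskian S hδ hx) (hsource.add hresidual)
    (P.tendsto_wronskian_zero S hδ) (P.tendsto_wronskian_atTop S hδ)
  rw [integral_add hsource hresidual, integral_const_mul] at hgreen
  linarith

theorem abs_rpow_mul_integral_sub_le (P : IsComparisonFunction χ ξ Ψ₀ C Ψ Ψ')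
    (S : IsDecayingSolution χ k δ φ d) (hδ : 0 < δ) (hξ : ξ < χ + 1)
    (hφ : IntegrableOn φ (Ioi 0)) :
    |δ ^ (ξ - (χ + 2)) * (∫ x in Ioi 0, x ^ (χ - ξ) * exp (-x ^ 2) * φ x) - Ψ₀ * d 0|
      ≤ C * (1 + k ^ 2) * ∫ x in Ioi 0, |φ x| := by
  rw [P.rpow_mul_integral_sub_eq S hδ hξ hφ, abs_neg, ← integral_const_mul, ← Real.norm_eq_abs]
  refine norm_integral_le_of_norm_le (hφ.abs.const_mul _) ?_
  filter_upwards [ae_restrict_mem measurableSet_Ioi] with x hx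
  rw [norm_mul]
  exact mul_le_mul_of_nonneg_right (P.abs_residual_le k hδ hx) (norm_nonneg _)

end IsComparisonFunction

/-! ### Eigenfunctions of the Laplace kernel -/

section LaplaceKernel

variable {σ : ℝ} {h : ℝ → ℝ}

theorem tendsto_setIntegral_exp_neg_abs_sub_mul (hσ : 0 < σ) (hh : Integrable h) {s : ℝ → Set ℝ}
    (hs : ∀ x, MeasurableSet (s x)) :
    Tendsto (fun x ↦ ∫ y in s x, exp (-|x - y| / σ) * h y) atTop (𝓝 0) := by
  have hmeas (x : ℝ) : AEStronglyMeasurable (fun y ↦ exp (-|x - y| / σ) * h y) :=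
    (by fun_prop : Continuous fun y ↦ exp (-|x - y| / σ)).aestronglyMeasurable.mul
      hh.aestronglyMeasurable
  have hbound (x y : ℝ) : ‖exp (-|x - y| / σ) * h y‖ ≤ ‖h y‖ := by
    rw [norm_mul, norm_of_nonneg (exp_nonneg _)]
    refine mul_le_of_le_one_left (norm_nonneg _) (exp_le_one_iff.2 ?_)
    exact div_nonpos_of_nonpos_of_nonneg (neg_nonpos.2 (abs_nonneg _)) hσ.le
  have hlim (y : ℝ) : Tendsto (fun x ↦ exp (-|x - y| / σ) * h y) atTop (𝓝 0) := by
    have habs : Tendsto (fun x ↦ |x - y|) atTop atTop :=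
      tendsto_abs_atTop_atTop.comp (tendsto_atTop_add_const_right _ (-y) tendsto_id)
    have hexp := (tendsto_exp_neg_atTop_nhds_zero.comp (habs.atTop_div_const hσ)).mul_const (h y)
    simpa only [Function.comp_def, neg_div, zero_mul] using hexp
  have hdom := tendsto_integral_filter_of_dominated_convergence (μ := volume) (l := atTop)
    (F := fun x ↦ (s x).indicator fun y ↦ exp (-|x - y| / σ) * h y) (f := fun _ ↦ 0) (fun y ↦ ‖h y‖)
    (.of_forall fun x ↦ (hmeas x).indicator (hs x))
    (.of_forall fun x ↦ .of_forall fun y ↦ (norm_indicator_le_norm_self _ _).trans (hbound x y))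
    hh.norm (.of_forall fun y ↦ squeeze_zero_norm (fun x ↦ norm_indicator_le_norm_self _ _)
      (by simpa using (hlim y).norm))
  simpa only [integral_indicator (hs _), integral_zero] using hdom

theorem integrableOn_exp_neg_div_mul (hσ : 0 < σ) (hh : Integrable h) (a : ℝ) :
    IntegrableOn (fun y ↦ exp (-(y / σ)) * h y) (Ioi a) := by
  refine Integrable.bdd_mul (c := exp (-(a / σ))) hh.integrableOn
    (by fun_prop : Continuous fun y ↦ exp (-(y / σ))).aestronglyMeasurable ?_
  filter_upwards [ae_restrict_mem measurableSet_Ioi] with y (hy : a < y)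
  rw [norm_of_nonneg (exp_nonneg _)]
  gcongr

theorem hasDerivAt_setIntegral_Ioi_exp_neg_abs_sub_mul (hσ : 0 < σ) (hc : Continuous h)
    (hh : Integrable h) (x : ℝ) :
    HasDerivAt (fun x ↦ ∫ y in Ioi x, exp (-|x - y| / σ) * h y)
      ((∫ y in Ioi x, exp (-|x - y| / σ) * h y) / σ - h x) x := by
  have hfactor (x : ℝ) : ∫ y in Ioi x, exp (-|x - y| / σ) * h y
      = exp (x / σ) * ∫ y in Ioi x, exp (-(y / σ)) * h y := by
    rw [← integral_const_mul]
    refine setIntegral_congr_fun measurableSet_Ioi fun y (hy : x < y) ↦ ?_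
    rw [abs_of_neg (by linarith), ← mul_assoc, ← exp_add]
    ring_nf
  have hprim := hasDerivAt_integral_Ioi (integrableOn_exp_neg_div_mul hσ hh (x - 1))
    (sub_one_lt x) (by fun_prop)
  rw [funext hfactor, hfactor x]
  refine ((((hasDerivAt_id x).div_const σ).exp).mul hprim).congr_deriv ?_
  rw [id, mul_neg, ← mul_assoc, ← exp_add, add_neg_cancel, exp_zero]
  ring

theorem hasDerivAt_setIntegral_Iic_exp_neg_abs_sub_mul (hσ : 0 < σ) (hc : Continuous h)
    (hh : Integrable h) (x : ℝ) :
    HasDerivAt (fun x ↦ ∫ y in Iic x, exp (-|x - y| / σ) * h y)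
      (h x - (∫ y in Iic x, exp (-|x - y| / σ) * h y) / σ) x := by
  have hreflect (x : ℝ) : ∫ y in Iic x, exp (-|x - y| / σ) * h y
      = ∫ y in Ioi (-x), exp (-|-x - y| / σ) * h (-y) := by
    rw [← integral_comp_neg_Iic]
    refine setIntegral_congr_fun measurableSet_Iic fun y _ ↦ ?_
    rw [neg_neg, ← abs_neg, neg_sub, neg_sub_neg, abs_sub_comm]
  rw [funext hreflect, hreflect x]
  refine ((hasDerivAt_setIntegral_Ioi_exp_neg_abs_sub_mul hσ (hc.comp continuous_neg)
    hh.comp_neg (-x)).comp x (hasDerivAt_neg x)).congr_deriv ?_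
  simp only [Function.comp, neg_neg]
  ring

/-- The derivative of `x ↦ ∫ e^{-|x-y|/σ} h(y) dy`. -/
noncomputable def laplaceKernelDeriv (σ : ℝ) (h : ℝ → ℝ) (x : ℝ) : ℝ :=
  ((∫ y in Ioi x, exp (-|x - y| / σ) * h y) - ∫ y in Iic x, exp (-|x - y| / σ) * h y) / σ

theorem integral_exp_neg_abs_sub_mul_eq_add (hσ : 0 < σ) (hh : Integrable h) (x : ℝ) :
    ∫ y, exp (-|x - y| / σ) * h y
      = (∫ y in Iic x, exp (-|x - y| / σ) * h y) + ∫ y in Ioi x, exp (-|x - y| / σ) * h y := by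
  have hint : Integrable fun y ↦ exp (-|x - y| / σ) * h y := by
    refine Integrable.bdd_mul (c := 1) hh
      (by fun_prop : Continuous fun y ↦ exp (-|x - y| / σ)).aestronglyMeasurable
      (.of_forall fun y ↦ ?_)
    rw [norm_of_nonneg (exp_nonneg _), exp_le_one_iff]
    exact div_nonpos_of_nonpos_of_nonneg (neg_nonpos.2 (abs_nonneg _)) hσ.le
  exact (intervalIntegral.integral_Iic_add_Ioi hint.integrableOn hint.integrableOn).symm

theorem hasDerivAt_integral_exp_neg_abs_sub_mul (hσ : 0 < σ) (hc : Continuous h)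
    (hh : Integrable h) (x : ℝ) :
    HasDerivAt (fun x ↦ ∫ y, exp (-|x - y| / σ) * h y) (laplaceKernelDeriv σ h x) x := by
  rw [funext (integral_exp_neg_abs_sub_mul_eq_add hσ hh)]
  refine ((hasDerivAt_setIntegral_Iic_exp_neg_abs_sub_mul hσ hc hh x).add
    (hasDerivAt_setIntegral_Ioi_exp_neg_abs_sub_mul hσ hc hh x)).congr_deriv ?_
  rw [laplaceKernelDeriv]
  ring

theorem hasDerivAt_laplaceKernelDeriv (hσ : 0 < σ) (hc : Continuous h) (hh : Integrable h)
    (x : ℝ) :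
    HasDerivAt (laplaceKernelDeriv σ h)
      ((∫ y, exp (-|x - y| / σ) * h y) / σ ^ 2 - 2 / σ * h x) x := by
  refine (((hasDerivAt_setIntegral_Ioi_exp_neg_abs_sub_mul hσ hc hh x).sub
    (hasDerivAt_setIntegral_Iic_exp_neg_abs_sub_mul hσ hc hh x)).div_const σ).congr_deriv ?_
  rw [integral_exp_neg_abs_sub_mul_eq_add hσ hh]
  ring

theorem tendsto_integral_exp_neg_abs_sub_mul (hσ : 0 < σ) (hh : Integrable h) :
    Tendsto (fun x ↦ ∫ y, exp (-|x - y| / σ) * h y) atTop (𝓝 0) := by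
  simpa only [Measure.restrict_univ] using
    tendsto_setIntegral_exp_neg_abs_sub_mul hσ hh (s := fun _ ↦ univ) fun _ ↦ .univ

theorem tendsto_laplaceKernelDeriv (hσ : 0 < σ) (hh : Integrable h) :
    Tendsto (laplaceKernelDeriv σ h) atTop (𝓝 0) := by
  have hright := tendsto_setIntegral_exp_neg_abs_sub_mul hσ hh fun x ↦ measurableSet_Ioi (a := x)
  have hleft := tendsto_setIntegral_exp_neg_abs_sub_mul hσ hh fun x ↦ measurableSet_Iic (a := x)
  have hlim := (hright.sub hleft).div_const σ
  rwa [sub_zero, zero_div] at hlim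

end LaplaceKernel

/-- `(lam, φ)` is an eigenpair, with `φ` odd and normalised in `L²(p)`, of the Laplace kernel of
width `σ` with respect to the density `p = dataDensity χ`. -/
structure IsOddEigenpair (χ σ lam : ℝ) (φ : ℝ → ℝ) : Prop where
  continuous : Continuous φ
  integrable : Integrable fun y ↦ dataDensity χ y * |φ y|
  eigen : ∀ x, lam * φ x = ∫ y, dataDensity χ y * exp (-|x - y| / σ) * φ y
  odd : ∀ x, φ (-x) = -φ x
  normalized : ∫ x, dataDensity χ x * φ x ^ 2 = 1

/-- The width `δ` of the boundary layer at the origin of the eigenfunctions with eigenvalue `lam`,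
for which `δ^{-(χ+2)} |x|^χ e^{-x²} = 2 p(x) / (σ lam)`. -/
noncomputable def eigenScale (χ σ lam : ℝ) : ℝ :=
  (Gamma ((1 + χ) / 2) * σ / 2 * lam) ^ (1 / (χ + 2))

section Density

variable {χ σ lam : ℝ}

theorem gamma_half_add_pos (hχ : 0 ≤ χ) : 0 < Gamma ((1 + χ) / 2) :=
  Gamma_pos_of_pos (by linarith)

theorem dataDensity_eq (χ x : ℝ) : dataDensity χ x = gaussWeight χ x / Gamma ((1 + χ) / 2) := rfl

theorem continuous_dataDensity (hχ : 0 ≤ χ) : Continuous (dataDensity χ) :=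
  (continuous_gaussWeight hχ).div_const _

theorem eigenScale_pos (hχ : 0 ≤ χ) (hσ : 0 < σ) (hlam : 0 < lam) : 0 < eigenScale χ σ lam := by
  have := gamma_half_add_pos hχ
  unfold eigenScale
  positivity

theorem eigenScale_rpow (hχ : 0 ≤ χ) (hσ : 0 < σ) (hlam : 0 < lam) (e : ℝ) :
    eigenScale χ σ lam ^ e
      = (Gamma ((1 + χ) / 2) * σ / 2) ^ (e / (χ + 2)) * lam ^ (e / (χ + 2)) := by
  have := gamma_half_add_pos hχ
  rw [eigenScale, ← rpow_mul (by positivity), ← mul_rpow (by positivity) hlam.le,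
    one_div_mul_eq_div]

theorem tendsto_eigenScale (hχ : 0 ≤ χ) (hσ : 0 < σ) :
    Tendsto (eigenScale χ σ) (𝓝[>] 0) (𝓝[>] 0) := by
  refine tendsto_nhdsWithin_iff.2
    ⟨?_, eventually_nhdsWithin_of_forall fun lam hlam ↦ eigenScale_pos hχ hσ hlam⟩
  have hlim : Tendsto (eigenScale χ σ) (𝓝 0) (𝓝 (eigenScale χ σ 0)) :=
    (tendsto_id.const_mul _).rpow_const (.inr (by positivity))
  rw [eigenScale, mul_zero, zero_rpow (by positivity)] at hlim
  exact hlim.mono_left nhdsWithin_le_nhds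

end Density

namespace IsOddEigenpair

variable {χ ξ σ lam : ℝ} {φ : ℝ → ℝ}

theorem integrable_dataDensity_mul (H : IsOddEigenpair χ σ lam φ) (hχ : 0 ≤ χ) :
    Integrable fun y ↦ dataDensity χ y * φ y := by
  refine H.integrable.mono ((continuous_dataDensity hχ).mul H.continuous).aestronglyMeasurable
    (.of_forall fun y ↦ ?_)
  rw [norm_mul, norm_mul, norm_eq_abs (φ y), norm_abs_eq_norm, norm_eq_abs (φ y)]

theorem eq_inv_mul_integral (H : IsOddEigenpair χ σ lam φ) (hlam : 0 < lam) :
    φ = fun x ↦ lam⁻¹ * ∫ y, exp (-|x - y| / σ) * (dataDensity χ y * φ y) := by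
  funext x
  rw [eq_inv_mul_iff_mul_eq₀ hlam.ne', H.eigen]
  congr 1 with y
  ring

theorem isDecayingSolution (H : IsOddEigenpair χ σ lam φ) (hχ : 0 ≤ χ) (hσ : 0 < σ)
    (hlam : 0 < lam) :
    IsDecayingSolution χ σ⁻¹ (eigenScale χ σ lam) φ
      (fun x ↦ lam⁻¹ * laplaceKernelDeriv σ (fun y ↦ dataDensity χ y * φ y) x) := by
  have := gamma_half_add_pos hχ
  have hc : Continuous fun y ↦ dataDensity χ y * φ y :=
    (continuous_dataDensity hχ).mul H.continuous
  have hh := H.integrable_dataDensity_mul hχ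
  have hφ := H.eq_inv_mul_integral hlam
  refine ⟨⟨fun x _ ↦ ?_, fun x _ ↦ ?_⟩, ?_, ?_, ?_⟩
  · have hderiv := (hasDerivAt_integral_exp_neg_abs_sub_mul hσ hc hh x).const_mul lam⁻¹
    exact hderiv.congr_of_eventuallyEq (.of_eq hφ)
  · refine ((hasDerivAt_laplaceKernelDeriv hσ hc hh x).const_mul lam⁻¹).congr_deriv ?_
    have hscale : eigenScale χ σ lam ^ (-(χ + 2)) = 2 / (Gamma ((1 + χ) / 2) * σ * lam) := by
      rw [eigenScale_rpow hχ hσ hlam, neg_div, div_self (by linarith), rpow_neg_one, rpow_neg_one]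
      field_simp
    have hψ := congrFun hφ x
    rw [eq_inv_mul_iff_mul_eq₀ hlam.ne'] at hψ
    rw [← hψ, hscale, dataDensity_eq]
    field_simp
  · linarith [neg_zero (G := ℝ) ▸ H.odd 0]
  · rw [hφ]
    simpa only [mul_zero] using (tendsto_integral_exp_neg_abs_sub_mul hσ hh).const_mul lam⁻¹
  · simpa only [mul_zero] using (tendsto_laplaceKernelDeriv hσ hh).const_mul lam⁻¹

theorem integral_gaussWeight_mul_sq (H : IsOddEigenpair χ σ lam φ) (hχ : 0 ≤ χ) :
    ∫ x in Ioi 0, gaussWeight χ x * φ x ^ 2 = Gamma ((1 + χ) / 2) / 2 := by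
  have := gamma_half_add_pos hχ
  have heven (x : ℝ) : dataDensity χ |x| * φ |x| ^ 2 = dataDensity χ x * φ x ^ 2 := by
    rcases abs_choice x with hx | hx
    · rw [hx]
    · rw [hx, H.odd, neg_sq, dataDensity, dataDensity, abs_neg, neg_sq]
  have hhalf := integral_comp_abs (f := fun x ↦ dataDensity χ x * φ x ^ 2)
  simp only [heven, H.normalized] at hhalf
  have hscale (x : ℝ) :
      gaussWeight χ x * φ x ^ 2 = Gamma ((1 + χ) / 2) * (dataDensity χ x * φ x ^ 2) := by
    rw [dataDensity_eq]
    field_simp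
  simp only [hscale, integral_const_mul]
  linear_combination -Gamma ((1 + χ) / 2) / 2 * hhalf

theorem integral_mul_targetFun_mul (H : IsOddEigenpair χ σ lam φ) (ξ : ℝ) :
    ∫ x, dataDensity χ x * targetFun ξ x * φ x
      = 2 / Gamma ((1 + χ) / 2) * ∫ x in Ioi 0, x ^ (χ - ξ) * exp (-x ^ 2) * φ x := by
  have heven (x : ℝ) : dataDensity χ |x| * targetFun ξ |x| * φ |x|
      = dataDensity χ x * targetFun ξ x * φ x := by
    rcases lt_trichotomy x 0 with hx | rfl | hx
    · rw [abs_of_neg hx, H.odd]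
      unfold dataDensity targetFun
      rw [abs_neg, Real.sign_neg, neg_sq]
      ring
    · rw [abs_zero]
    · rw [abs_of_pos hx]
  have hhalf := integral_comp_abs (f := fun x ↦ dataDensity χ x * targetFun ξ x * φ x)
  simp only [heven] at hhalf
  rw [hhalf, div_mul_eq_mul_div, mul_div_assoc, ← integral_div]
  congr 1
  refine setIntegral_congr_fun measurableSet_Ioi fun x (hx : 0 < x) ↦ ?_
  simp only [dataDensity, targetFun, abs_of_pos hx, Real.sign_of_pos hx, sub_eq_add_neg,
    rpow_add hx]
  ring

end IsOddEigenpair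

/-! ### Coefficients -/

theorem sq_bounds_of_abs_sub_le_half {u v : ℝ} (h : |u - v| ≤ |v| / 2) :
    v ^ 2 / 4 ≤ u ^ 2 ∧ u ^ 2 ≤ 9 / 4 * v ^ 2 := by
  have hlower : |v| / 2 ≤ |u| := by
    linarith [abs_sub_abs_le_abs_sub v u, abs_sub_comm u v]
  have hupper : |u| ≤ 3 / 2 * |v| := by linarith [abs_sub_abs_le_abs_sub u v]
  rw [← sq_abs u, ← sq_abs v]
  constructor <;> nlinarith [abs_nonneg u, abs_nonneg v]

namespace IsDecayingSolution

variable {χ ξ k : ℝ}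

theorem exists_sq_bounds_deriv_zero (hχ : 0 ≤ χ) (hk : 0 < k) (hξ : 0 ≤ ξ) (hξχ : ξ < χ + 1) :
    ∃ c C, 0 < c ∧ 0 < C ∧ ∀ᶠ δ in 𝓝[>] 0, ∀ φ d, IsDecayingSolution χ k δ φ d →
      c * d 0 ^ 2 ≤ (δ ^ (ξ - (χ + 2)) * ∫ x in Ioi 0, x ^ (χ - ξ) * exp (-x ^ 2) * φ x) ^ 2 ∧
      (δ ^ (ξ - (χ + 2)) * ∫ x in Ioi 0, x ^ (χ - ξ) * exp (-x ^ 2) * φ x) ^ 2 ≤ C * d 0 ^ 2 := by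
  obtain ⟨Ψ₀, C, Ψ, Ψ', hΨ₀, P⟩ := exists_isComparisonFunction hχ hξ hξχ
  have hC : 0 ≤ C := (abs_nonneg _).trans (P.abs_le 1 one_pos)
  refine ⟨Ψ₀ ^ 2 / 4, 9 / 4 * Ψ₀ ^ 2, by positivity, by positivity, ?_⟩
  filter_upwards [eventually_integral_abs_le hχ hk
    (ε := Ψ₀ / 2 / ((C + 1) * (1 + k ^ 2))) (by positivity), self_mem_nhdsWithin]
    with δ hsmall hδ φ d S
  obtain ⟨hφ, hle⟩ := hsmall φ d S
  have herror : |δ ^ (ξ - (χ + 2)) * (∫ x in Ioi 0, x ^ (χ - ξ) * exp (-x ^ 2) * φ x) - Ψ₀ * d 0|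
      ≤ |Ψ₀ * d 0| / 2 :=
    calc _ ≤ C * (1 + k ^ 2) * ∫ x in Ioi 0, |φ x| :=
          P.abs_rpow_mul_integral_sub_le S hδ hξχ hφ
      _ ≤ (C + 1) * (1 + k ^ 2) * (Ψ₀ / 2 / ((C + 1) * (1 + k ^ 2)) * |d 0|) := by
          gcongr
          linarith
      _ = |Ψ₀ * d 0| / 2 := by
          rw [abs_mul, abs_of_pos hΨ₀]
          field_simp
  obtain ⟨hlower, hupper⟩ := sq_bounds_of_abs_sub_le_half herror
  exact ⟨by linarith, by linarith⟩

theorem exists_sq_bounds_mass (hχ : 0 ≤ χ) (hk : 0 < k) (hξ : 0 ≤ ξ) (hξχ : ξ < χ + 1) :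
    ∃ c C, 0 < c ∧ 0 < C ∧ ∀ᶠ δ in 𝓝[>] 0, ∀ φ d, IsDecayingSolution χ k δ φ d →
      c * δ ^ ((3 * χ + 4 - 4 * ξ) / 2) * (∫ x in Ioi 0, gaussWeight χ x * φ x ^ 2)
        ≤ (∫ x in Ioi 0, x ^ (χ - ξ) * exp (-x ^ 2) * φ x) ^ 2 ∧
      (∫ x in Ioi 0, x ^ (χ - ξ) * exp (-x ^ 2) * φ x) ^ 2
        ≤ C * δ ^ ((3 * χ + 4 - 4 * ξ) / 2) * ∫ x in Ioi 0, gaussWeight χ x * φ x ^ 2 := by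
  obtain ⟨c, C, hc, hC, hcoef⟩ := exists_sq_bounds_deriv_zero hχ hk hξ hξχ
  obtain ⟨M, hM, hmass⟩ := exists_mass_bounds hχ hk
  refine ⟨c / M, C * M, by positivity, by positivity, ?_⟩
  filter_upwards [hcoef, hmass, self_mem_nhdsWithin] with δ hcoef hmass (hδ : 0 < δ) φ d S
  obtain ⟨hcoef_lower, hcoef_upper⟩ := hcoef φ d S
  obtain ⟨hmass_lower, hmass_upper⟩ := hmass φ d S
  set I := ∫ x in Ioi 0, x ^ (χ - ξ) * exp (-x ^ 2) * φ x
  set m := ∫ x in Ioi 0, gaussWeight χ x * φ x ^ 2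
  have hexponent :
      δ ^ ((3 * χ + 4 - 4 * ξ) / 2) * δ ^ (χ / 2 + 2) * (δ ^ (ξ - (χ + 2))) ^ 2 = 1 := by
    rw [← rpow_mul_natCast hδ.le, ← rpow_add hδ, ← rpow_add hδ]
    convert rpow_zero δ using 2
    push_cast
    ring
  have hI : I ^ 2 = δ ^ ((3 * χ + 4 - 4 * ξ) / 2) * δ ^ (χ / 2 + 2)
      * (δ ^ (ξ - (χ + 2)) * I) ^ 2 := by
    linear_combination -I ^ 2 * hexponent
  rw [hI]
  constructor
  · calc c / M * δ ^ ((3 * χ + 4 - 4 * ξ) / 2) * m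
        ≤ c / M * δ ^ ((3 * χ + 4 - 4 * ξ) / 2) * (M * (δ ^ (χ / 2 + 2) * d 0 ^ 2)) := by gcongr
      _ = δ ^ ((3 * χ + 4 - 4 * ξ) / 2) * δ ^ (χ / 2 + 2) * (c * d 0 ^ 2) := by field_simp
      _ ≤ _ := by gcongr
  · calc _ ≤ δ ^ ((3 * χ + 4 - 4 * ξ) / 2) * δ ^ (χ / 2 + 2) * (C * d 0 ^ 2) := by gcongr
      _ = C * δ ^ ((3 * χ + 4 - 4 * ξ) / 2) * (δ ^ (χ / 2 + 2) * d 0 ^ 2) := by ring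
      _ ≤ C * δ ^ ((3 * χ + 4 - 4 * ξ) / 2) * (M * m) := by gcongr
      _ = C * M * δ ^ ((3 * χ + 4 - 4 * ξ) / 2) * m := by ring

end IsDecayingSolution

theorem IsOddEigenpair.exists_sq_coefficient_bounds {χ ξ σ : ℝ} (hχ : 0 ≤ χ) (hξ : 0 ≤ ξ)
    (hξχ : ξ < χ + 1) (hσ : 0 < σ) :
    ∃ c C, 0 < c ∧ 0 < C ∧ ∀ᶠ lam in 𝓝[>] 0, ∀ φ, IsOddEigenpair χ σ lam φ →
      c * lam ^ ((3 * χ + 4 - 4 * ξ) / 2 / (χ + 2))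
        ≤ (∫ x, dataDensity χ x * targetFun ξ x * φ x) ^ 2 ∧
      (∫ x, dataDensity χ x * targetFun ξ x * φ x) ^ 2
        ≤ C * lam ^ ((3 * χ + 4 - 4 * ξ) / 2 / (χ + 2)) := by
  obtain ⟨c, C, hc, hC, hbounds⟩ :=
    IsDecayingSolution.exists_sq_bounds_mass hχ (inv_pos.2 hσ) hξ hξχ
  have := gamma_half_add_pos hχ
  set E := (3 * χ + 4 - 4 * ξ) / 2
  set B := 2 / Gamma ((1 + χ) / 2) * (Gamma ((1 + χ) / 2) * σ / 2) ^ (E / (χ + 2)) with hB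
  refine ⟨c * B, C * B, by positivity, by positivity, ?_⟩
  filter_upwards [(tendsto_eigenScale hχ hσ).eventually hbounds, self_mem_nhdsWithin]
    with lam hbounds hlam φ H
  obtain ⟨hlower, hupper⟩ := hbounds φ _ (H.isDecayingSolution hχ hσ hlam)
  have hconst (a : ℝ) : a * B * lam ^ (E / (χ + 2))
      = (2 / Gamma ((1 + χ) / 2)) ^ 2
        * (a * eigenScale χ σ lam ^ E * (Gamma ((1 + χ) / 2) / 2)) := by
    rw [eigenScale_rpow hχ hσ hlam, hB]
    field_simp
  rw [H.integral_gaussWeight_mul_sq hχ] at hlower hupper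
  rw [H.integral_mul_targetFun_mul, mul_pow, hconst, hconst]
  exact ⟨by gcongr, by gcongr⟩

theorem rpow_mem_Icc_of_mem_Icc {a b x : ℝ} (ha : 0 < a) (hx : x ∈ Icc a b) (e : ℝ) :
    x ^ e ∈ Icc (min (a ^ e) (b ^ e)) (max (a ^ e) (b ^ e)) := by
  have hx0 : 0 < x := ha.trans_le hx.1
  rcases le_total 0 e with he | he
  · exact ⟨min_le_of_left_le (rpow_le_rpow ha.le hx.1 he),
      le_max_of_le_right (rpow_le_rpow hx0.le hx.2 he)⟩
  · exact ⟨min_le_of_right_le (rpow_le_rpow_of_nonpos hx0 hx.2 he),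
      le_max_of_le_left (rpow_le_rpow_of_nonpos ha hx.1 he)⟩

theorem rpow_bounds_of_zpow_neg_two_bounds {a b l t : ℝ} (ha : 0 < a) (ht : 0 < t)
    (hlower : a * t ^ (-2 : ℤ) ≤ l) (hupper : l ≤ b * t ^ (-2 : ℤ)) (e : ℝ) :
    min (a ^ e) (b ^ e) * t ^ (-(2 * e)) ≤ l ^ e ∧
      l ^ e ≤ max (a ^ e) (b ^ e) * t ^ (-(2 * e)) := by
  have hr : 0 < t ^ (-2 : ℤ) := by positivity
  have hquot : l / t ^ (-2 : ℤ) ∈ Icc a b := ⟨(le_div_iff₀ hr).2 hlower, (div_le_iff₀ hr).2 hupper⟩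
  have hpow : t ^ (-(2 * e)) = (t ^ (-2 : ℤ)) ^ e := by
    rw [← rpow_intCast, ← rpow_mul ht.le]
    congr 1
    push_cast
    ring
  have hl : l ^ e = (l / t ^ (-2 : ℤ)) ^ e * t ^ (-(2 * e)) := by
    rw [hpow, ← mul_rpow (ha.le.trans hquot.1) hr.le, div_mul_cancel₀ _ hr.ne']
  obtain ⟨hmin, hmax⟩ := rpow_mem_Icc_of_mem_Icc ha hquot e
  rw [hl]
  exact ⟨by gcongr, by gcongr⟩

theorem tendsto_nhdsGT_zero_of_eventually_le_zpow {lam : ℕ → ℝ} {b : ℝ} (hpos : ∀ ρ, 0 < lam ρ)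
    (hle : ∀ᶠ ρ : ℕ in atTop, lam ρ ≤ b * (ρ : ℝ) ^ (-2 : ℤ)) : Tendsto lam atTop (𝓝[>] 0) := by
  have hlim : Tendsto (fun ρ : ℕ ↦ b * (ρ : ℝ) ^ (-2 : ℤ)) atTop (𝓝 (b * 0)) :=
    ((tendsto_zpow_atTop_zero (by norm_num)).comp tendsto_natCast_atTop_atTop).const_mul b
  rw [mul_zero] at hlim
  exact tendsto_nhdsWithin_iff.2
    ⟨squeeze_zero' (.of_forall fun ρ ↦ (hpos ρ).le) hle hlim, .of_forall hpos⟩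

theorem coefficient_rank_scaling_general {χ ξ σ a b : ℝ} (hχ : 0 ≤ χ) (hξ : 0 ≤ ξ)
    (hξχ : ξ < χ + 1) (hσ : 0 < σ) {lam : ℕ → ℝ} {φ : ℕ → ℝ → ℝ}
    (hφ : ∀ ρ, IsOddEigenpair χ σ (lam ρ) (φ ρ)) (hpos : ∀ ρ, 0 < lam ρ) (ha : 0 < a)
    (hscal : ∀ᶠ ρ : ℕ in atTop,
      a * (ρ : ℝ) ^ (-2 : ℤ) ≤ lam ρ ∧ lam ρ ≤ b * (ρ : ℝ) ^ (-2 : ℤ)) :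
    ∃ c C : ℝ, 0 < c ∧ c ≤ C ∧ ∃ ρ₀ : ℕ, ∀ ρ : ℕ, ρ₀ ≤ ρ →
      c * (ρ : ℝ) ^ (-((3 * χ + 4 - 4 * ξ) / (χ + 2)))
          ≤ (∫ x : ℝ, dataDensity χ x * targetFun ξ x * φ ρ x) ^ 2 ∧
      (∫ x : ℝ, dataDensity χ x * targetFun ξ x * φ ρ x) ^ 2
          ≤ C * (ρ : ℝ) ^ (-((3 * χ + 4 - 4 * ξ) / (χ + 2))) := by
  obtain ⟨c, C, hc, hC, hbounds⟩ := IsOddEigenpair.exists_sq_coefficient_bounds hχ hξ hξχ hσ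
  set e := (3 * χ + 4 - 4 * ξ) / 2 / (χ + 2) with he
  have hexponent : (3 * χ + 4 - 4 * ξ) / (χ + 2) = 2 * e := by
    rw [he]
    ring
  have hab : a ≤ b := by
    obtain ⟨ρ, ⟨hlower, hupper⟩, hρ⟩ := (hscal.and (eventually_ge_atTop 1)).exists
    have hr : 0 < (ρ : ℝ) ^ (-2 : ℤ) := by positivity
    exact le_of_mul_le_mul_right (hlower.trans hupper) hr
  have hb : 0 < b := ha.trans_le hab
  have hlam := tendsto_nhdsGT_zero_of_eventually_le_zpow hpos (hscal.mono fun _ h ↦ h.2)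
  obtain ⟨ρ₀, hρ₀⟩ := eventually_atTop.1
    ((hlam.eventually hbounds).and (hscal.and (eventually_ge_atTop 1)))
  rw [hexponent]
  refine ⟨c * min (a ^ e) (b ^ e), max (c * min (a ^ e) (b ^ e)) (C * max (a ^ e) (b ^ e)),
    by positivity, le_max_left _ _, ρ₀, fun ρ hρ ↦ ?_⟩
  obtain ⟨hcoef, hscal, hρ1⟩ := hρ₀ ρ hρ
  obtain ⟨hcoef_lower, hcoef_upper⟩ := hcoef (φ ρ) (hφ ρ)
  have hρpos : 0 < (ρ : ℝ) := by positivity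
  obtain ⟨hlower, hupper⟩ := rpow_bounds_of_zpow_neg_two_bounds ha hρpos hscal.1 hscal.2 e
  constructor
  · refine le_trans ?_ hcoef_lower
    rw [mul_assoc]
    gcongr
  · calc _ ≤ C * lam ρ ^ e := hcoef_upper
      _ ≤ C * (max (a ^ e) (b ^ e) * (ρ : ℝ) ^ (-(2 * e))) := by gcongr
      _ = C * max (a ^ e) (b ^ e) * (ρ : ℝ) ^ (-(2 * e)) := by ring
      _ ≤ _ := by
          gcongr
          exact le_max_right _ _

/-- For a sequence of normalized odd eigenpairs of the Laplace kernel
with eigenvalues `λ_ρ ≍ ρ^{−2}`, the squared coefficients of the target satisfy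
`c_ρ² ≍ ρ^{−(3χ+4−4ξ)/(χ+2)}`. -/
theorem coefficient_rank_scaling
    (χ ξ σ : ℝ) (hχ : 0 ≤ χ) (hξ0 : 0 ≤ ξ) (hξ : ξ < (χ + 1) / 2) (hσ : 0 < σ)
    (lam : ℕ → ℝ) (φ : ℕ → ℝ → ℝ)
    (hcont : ∀ ρ, Continuous (φ ρ))
    (hint : ∀ ρ, Integrable (fun y => dataDensity χ y * |φ ρ y|))
    (heig : ∀ (ρ : ℕ) (x : ℝ),
      lam ρ * φ ρ x = ∫ y : ℝ, dataDensity χ y * Real.exp (-|x - y| / σ) * φ ρ y)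
    (hodd : ∀ (ρ : ℕ) (x : ℝ), φ ρ (-x) = -φ ρ x)
    (hnorm : ∀ ρ : ℕ, (∫ x : ℝ, dataDensity χ x * φ ρ x ^ 2) = 1)
    (hpos : ∀ ρ, 0 < lam ρ)
    (a b : ℝ) (ha : 0 < a) (hab : a ≤ b)
    (hscal : ∀ᶠ ρ : ℕ in atTop,
      a * (ρ : ℝ) ^ (-2 : ℤ) ≤ lam ρ ∧ lam ρ ≤ b * (ρ : ℝ) ^ (-2 : ℤ)) :
    ∃ c C : ℝ, 0 < c ∧ c ≤ C ∧ ∃ ρ₀ : ℕ, ∀ ρ : ℕ, ρ₀ ≤ ρ →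
      c * (ρ : ℝ) ^ (-((3 * χ + 4 - 4 * ξ) / (χ + 2)))
          ≤ (∫ x : ℝ, dataDensity χ x * targetFun ξ x * φ ρ x) ^ 2 ∧
      (∫ x : ℝ, dataDensity χ x * targetFun ξ x * φ ρ x) ^ 2
          ≤ C * (ρ : ℝ) ^ (-((3 * χ + 4 - 4 * ξ) / (χ + 2))) :=
  coefficient_rank_scaling_general hχ hξ0 (by linarith) hσ
    (fun ρ ↦ ⟨hcont ρ, hint ρ, heig ρ, hodd ρ, hnorm ρ⟩) hpos ha hscal
end

section
/- Let σ > 0, λ̃ > 0, let p : ℝ → ℝ be continuous, nonnegative and integrable, and let f* : ℝ → ℝ be continuous with ∫_ℝ p (f*)² < ∞. Define the functional E[u] = (λ̃/σ) ( ∫_ℝ u² + σ² ∫_ℝ (u')² ) + ∫_ℝ p (u − f*)². Suppose f : ℝ → ℝ is twice continuously differentiable, with f and f' square-integrable and ∫_ℝ p (f − f*)² < ∞, and suppose f minimizes E in the sense that E[f] ≤ E[f + η] for every smooth compactly supported η : ℝ → ℝ. Then for all x ∈ ℝ, σ² f''(x) = ( (σ/λ̃) p(x) + 1 ) f(x) −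 (σ/λ̃) p(x) f*(x). -/
open MeasureTheory Real

/-- The infinite-data ridge regression objective for the Laplace kernel:
`E[u] = (λ̃/σ)(∫u² + σ²∫(u')²) + ∫ p (u − f*)²`. -/
noncomputable def ridgeObjective (σ lamt : ℝ) (p fstar : ℝ → ℝ) (u : ℝ → ℝ) : ℝ :=
  (lamt / σ) * ((∫ x : ℝ, u x ^ 2) + σ ^ 2 * ∫ x : ℝ, deriv u x ^ 2)
    + ∫ x : ℝ, p x * (u x - fstar x) ^ 2

/-!
Along a line `t ↦ f + t η` the objective is exactly quadratic in `t`, and its second-order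
coefficient is again the objective, with target `0`, evaluated at `η`. A quadratic polynomial in `t`
that is minimal at `t = 0` has no linear term, so the first variation vanishes at every test
function `η`. One integration by parts turns the first variation into `2 ∫ η g` with `g` continuous,
and the fundamental lemma of the calculus of variations gives `g = 0`, which is the Euler–Lagrange
equation.
-/

lemma eq_zero_of_forall_linear_add_quadratic_nonneg {K : Type*} [Field K] [LinearOrder K]
    [IsStrictOrderedRing K] {a b : K} (h : ∀ t : K, 0 ≤ t * b + t ^ 2 * a) : b = 0 := by
  have hdiscrim : discrim a b 0 ≤ 0 := discrim_le_zero fun t => by linarith [h t]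
  have hsq : b ^ 2 ≤ 0 := by simpa [discrim] using hdiscrim
  exact pow_eq_zero_iff two_ne_zero |>.1 (hsq.antisymm (sq_nonneg b))

lemma integral_mul_add_const_mul_sq {α : Type*} [MeasurableSpace α] {μ : Measure α}
    {w a b : α → ℝ} (haa : Integrable (fun x => w x * a x ^ 2) μ)
    (hab : Integrable (fun x => w x * a x * b x) μ)
    (hbb : Integrable (fun x => w x * b x ^ 2) μ) (t : ℝ) :
    ∫ x, w x * (a x + t * b x) ^ 2 ∂μ
      = (∫ x, w x * a x ^ 2 ∂μ) + t * (2 * ∫ x, w x * a x * b x ∂μ)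
        + t ^ 2 * ∫ x, w x * b x ^ 2 ∂μ := by
  have hlin : Integrable (fun x => w x * a x ^ 2 + t * 2 * (w x * a x * b x)) μ :=
    haa.add (hab.const_mul _)
  calc ∫ x, w x * (a x + t * b x) ^ 2 ∂μ
      = ∫ x, w x * a x ^ 2 + t * 2 * (w x * a x * b x) + t ^ 2 * (w x * b x ^ 2) ∂μ := by
        congr with x; ring
    _ = _ := by
        rw [integral_add hlin (hbb.const_mul _), integral_add haa (hab.const_mul _),
          integral_const_mul, integral_const_mul, mul_assoc]

section CompactSupport

variable {X : Type*} [TopologicalSpace X] [MeasurableSpace X] [OpensMeasurableSpace X]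
  {μ : Measure X} [IsFiniteMeasureOnCompacts μ]

lemma integrable_mul_of_hasCompactSupport_right {R : Type*} [NormedRing R] {u η : X → R}
    (hu : Continuous u) (hη : Continuous η) (hηc : HasCompactSupport η) :
    Integrable (fun x => u x * η x) μ :=
  (hu.mul hη).integrable_of_hasCompactSupport (hηc.mul_left (f := u))

lemma integral_mul_add_const_mul_sq_of_hasCompactSupport {w a b : X → ℝ} (hw : Continuous w)
    (ha : Continuous a) (hb : Continuous b) (hbc : HasCompactSupport b)
    (haa : Integrable (fun x => w x * a x ^ 2) μ) (t : ℝ) :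
    ∫ x, w x * (a x + t * b x) ^ 2 ∂μ
      = (∫ x, w x * a x ^ 2 ∂μ) + t * (2 * ∫ x, w x * a x * b x ∂μ)
        + t ^ 2 * ∫ x, w x * b x ^ 2 ∂μ := by
  have hbb : Integrable (fun x => w x * b x ^ 2) μ := by
    simpa only [sq, mul_assoc, Pi.mul_apply] using
      integrable_mul_of_hasCompactSupport_right (μ := μ) (hw.mul hb) hb hbc
  exact integral_mul_add_const_mul_sq haa
    (integrable_mul_of_hasCompactSupport_right (hw.mul ha) hb hbc) hbb t

end CompactSupport

lemma integral_mul_deriv_eq_neg_integral_deriv_mul_of_hasCompactSupport {A : Type*}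
    [NormedRing A] [NormedAlgebra ℝ A] {u η : ℝ → A} (hu : ContDiff ℝ 1 u)
    (hη : ContDiff ℝ 1 η) (hηc : HasCompactSupport η) :
    ∫ x, u x * deriv η x = -∫ x, deriv u x * η x :=
  integral_mul_deriv_eq_deriv_mul_of_integrable
    (fun x _ => (hu.differentiable one_ne_zero x).hasDerivAt)
    (fun x _ => (hη.differentiable one_ne_zero x).hasDerivAt)
    (integrable_mul_of_hasCompactSupport_right hu.continuous hη.continuous_deriv_one hηc.deriv)
    (integrable_mul_of_hasCompactSupport_right hu.continuous_deriv_one hη.continuous hηc)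
    (integrable_mul_of_hasCompactSupport_right hu.continuous hη.continuous hηc)

lemma eq_zero_of_continuous_of_integral_contDiff_smul_eq_zero {E F : Type*}
    [NormedAddCommGroup E] [NormedSpace ℝ E] [FiniteDimensional ℝ E] [MeasurableSpace E]
    [BorelSpace E] [NormedAddCommGroup F] [NormedSpace ℝ F] [CompleteSpace F] {μ : Measure E}
    [IsLocallyFiniteMeasure μ] [μ.IsOpenPosMeasure] {g : E → F} (hg : Continuous g)
    (h : ∀ η : E → ℝ, ContDiff ℝ (⊤ : ℕ∞) η → HasCompactSupport η → ∫ x, η x • g x ∂μ = 0) :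
    g = 0 :=
  (hg.ae_eq_iff_eq μ continuous_zero).1
    (ae_eq_zero_of_integral_contDiff_smul_eq_zero hg.locallyIntegrable h)

section Ridge

variable {σ lamt : ℝ} {p fstar f η : ℝ → ℝ}

/-- The first variation (Gateaux derivative) of the ridge objective at `f` in the direction `η`,
in its weak form: only first derivatives of `f` and `η` occur. -/
noncomputable def ridgeFirstVariation (σ lamt : ℝ) (p fstar f η : ℝ → ℝ) : ℝ :=
  2 * ((lamt / σ) * ((∫ x, f x * η x) + σ ^ 2 * ∫ x, deriv f x * deriv η x)
    + ∫ x, p x * (f x - fstar x) * η x)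

/-- Half the `L²` gradient of the ridge objective at `f`; the Euler–Lagrange equation says that it
vanishes. -/
noncomputable def ridgeGradient (σ lamt : ℝ) (p fstar f : ℝ → ℝ) (x : ℝ) : ℝ :=
  (lamt / σ) * (f x - σ ^ 2 * deriv (deriv f) x) + p x * (f x - fstar x)

lemma ridgeObjective_add_smul (hp : Continuous p) (hfstar : Continuous fstar)
    (hf : ContDiff ℝ 1 f) (hf_L2 : Integrable (fun x => f x ^ 2))
    (hf'_L2 : Integrable (fun x => deriv f x ^ 2))
    (hf_err : Integrable (fun x => p x * (f x - fstar x) ^ 2))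
    (hη : ContDiff ℝ 1 η) (hηc : HasCompactSupport η) (t : ℝ) :
    ridgeObjective σ lamt p fstar (f + t • η)
      = ridgeObjective σ lamt p fstar f + t * ridgeFirstVariation σ lamt p fstar f η
        + t ^ 2 * ridgeObjective σ lamt p 0 η := by
  have hderiv (x : ℝ) : deriv (f + t • η) x = deriv f x + t * deriv η x := by
    have hηx := hη.differentiable one_ne_zero x
    rw [deriv_add (hf.differentiable one_ne_zero x) (hηx.const_smul t), deriv_const_smul t hηx,
      smul_eq_mul]
  have hvalue := integral_mul_add_const_mul_sq_of_hasCompactSupport (w := 1) continuous_one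
    hf.continuous hη.continuous hηc (by simpa using hf_L2) t
  have hslope := integral_mul_add_const_mul_sq_of_hasCompactSupport (w := 1) continuous_one
    hf.continuous_deriv_one hη.continuous_deriv_one hηc.deriv (by simpa using hf'_L2) t
  have herr := integral_mul_add_const_mul_sq_of_hasCompactSupport hp
    (hf.continuous.sub hfstar) hη.continuous hηc hf_err t
  simp only [Pi.one_apply, one_mul, Pi.sub_apply] at hvalue hslope herr
  simp only [ridgeObjective, ridgeFirstVariation, hderiv, Pi.add_apply, Pi.smul_apply, smul_eq_mul,
    Pi.zero_apply, sub_zero, add_sub_right_comm, hvalue, hslope, herr]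
  ring

lemma ridgeFirstVariation_eq_zero_of_forall_le (hp : Continuous p) (hfstar : Continuous fstar)
    (hf : ContDiff ℝ 1 f) (hf_L2 : Integrable (fun x => f x ^ 2))
    (hf'_L2 : Integrable (fun x => deriv f x ^ 2))
    (hf_err : Integrable (fun x => p x * (f x - fstar x) ^ 2))
    (hη : ContDiff ℝ 1 η) (hηc : HasCompactSupport η)
    (hmin : ∀ t : ℝ, ridgeObjective σ lamt p fstar f ≤ ridgeObjective σ lamt p fstar (f + t • η)) :
    ridgeFirstVariation σ lamt p fstar f η = 0 := by
  refine eq_zero_of_forall_linear_add_quadratic_nonneg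
    (a := ridgeObjective σ lamt p 0 η) fun t => ?_
  linarith [hmin t,
    ridgeObjective_add_smul (σ := σ) (lamt := lamt) hp hfstar hf hf_L2 hf'_L2 hf_err hη hηc t]

lemma continuous_ridgeGradient (hp : Continuous p) (hfstar : Continuous fstar)
    (hf : ContDiff ℝ 2 f) : Continuous (ridgeGradient σ lamt p fstar f) := by
  have hf'' : Continuous (deriv (deriv f)) := (hf.deriv' (n := 1)).continuous_deriv_one
  exact (continuous_const.mul (hf.continuous.sub (continuous_const.mul hf''))).add
    (hp.mul (hf.continuous.sub hfstar))

lemma ridgeFirstVariation_eq_two_mul_integral_smul_ridgeGradient (hp : Continuous p)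
    (hfstar : Continuous fstar) (hf : ContDiff ℝ 2 f) (hη : ContDiff ℝ 1 η)
    (hηc : HasCompactSupport η) :
    ridgeFirstVariation σ lamt p fstar f η
      = 2 * ∫ x, η x • ridgeGradient σ lamt p fstar f x := by
  have hf' : ContDiff ℝ 1 (deriv f) := hf.deriv'
  have integrable_mul {u : ℝ → ℝ} (hu : Continuous u) : Integrable (fun x => u x * η x) :=
    integrable_mul_of_hasCompactSupport_right hu hη.continuous hηc
  have hvalue := (integrable_mul hf.continuous).const_mul (lamt / σ)
  have hcurv := (integrable_mul hf'.continuous_deriv_one).const_mul (lamt / σ * σ ^ 2)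
  have hreg : Integrable fun x =>
      lamt / σ * (f x * η x) - lamt / σ * σ ^ 2 * (deriv (deriv f) x * η x) := hvalue.sub hcurv
  have herr : Integrable (fun x => p x * (f x - fstar x) * η x) :=
    integrable_mul (hp.mul (hf.continuous.sub hfstar))
  have hsplit : ∫ x, η x • ridgeGradient σ lamt p fstar f x
      = (lamt / σ) * (∫ x, f x * η x) - (lamt / σ * σ ^ 2) * (∫ x, deriv (deriv f) x * η x)
        + ∫ x, p x * (f x - fstar x) * η x := by
    rw [← integral_const_mul, ← integral_const_mul, ← integral_sub hvalue hcurv,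
      ← integral_add hreg herr]
    congr with x
    simp only [ridgeGradient, smul_eq_mul]
    ring
  rw [hsplit, ridgeFirstVariation,
    integral_mul_deriv_eq_neg_integral_deriv_mul_of_hasCompactSupport hf' hη hηc]
  ring

lemma ridgeGradient_eq_zero_iff (hσ : σ ≠ 0) (hlamt : lamt ≠ 0) (x : ℝ) :
    ridgeGradient σ lamt p fstar f x = 0 ↔
      σ ^ 2 * deriv (deriv f) x
        = ((σ / lamt) * p x + 1) * f x - (σ / lamt) * p x * fstar x := by
  have hscale : ((σ / lamt) * p x + 1) * f x - (σ / lamt) * p x * fstar x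
      - σ ^ 2 * deriv (deriv f) x = (σ / lamt) * ridgeGradient σ lamt p fstar f x := by
    unfold ridgeGradient
    field_simp
    ring
  rw [eq_comm (a := σ ^ 2 * _), ← sub_eq_zero (b := σ ^ 2 * _), hscale,
    mul_eq_zero_iff_left (div_ne_zero hσ hlamt)]

end Ridge

theorem ridge_minimizer_euler_lagrange_general
    {σ lamt : ℝ} (hσ : σ ≠ 0) (hlamt : lamt ≠ 0)
    {p : ℝ → ℝ} (hp : Continuous p) {fstar : ℝ → ℝ} (hfstar : Continuous fstar)
    {f : ℝ → ℝ} (hf : ContDiff ℝ 2 f)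
    (hf_L2 : Integrable (fun x => f x ^ 2))
    (hf'_L2 : Integrable (fun x => deriv f x ^ 2))
    (hf_err : Integrable (fun x => p x * (f x - fstar x) ^ 2))
    (hmin : ∀ η : ℝ → ℝ, ContDiff ℝ (⊤ : ℕ∞) η → HasCompactSupport η →
      ridgeObjective σ lamt p fstar f ≤ ridgeObjective σ lamt p fstar (f + η)) (x : ℝ) :
    σ ^ 2 * deriv (deriv f) x
      = ((σ / lamt) * p x + 1) * f x - (σ / lamt) * p x * fstar x := by
  have hweak (η : ℝ → ℝ) (hη : ContDiff ℝ (⊤ : ℕ∞) η) (hηc : HasCompactSupport η) :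
      ∫ y, η y • ridgeGradient σ lamt p fstar f y = 0 := by
    have hη1 : ContDiff ℝ 1 η := hη.of_le (by exact_mod_cast le_top)
    have hvariation : ridgeFirstVariation σ lamt p fstar f η = 0 :=
      ridgeFirstVariation_eq_zero_of_forall_le hp hfstar (hf.of_le one_le_two) hf_L2 hf'_L2 hf_err
        hη1 hηc fun t => hmin (t • η) (hη.const_smul t) (hηc.smul_left (f := fun _ => t))
    rw [ridgeFirstVariation_eq_two_mul_integral_smul_ridgeGradient hp hfstar hf hη1 hηc]
      at hvariation
    exact (mul_eq_zero_iff_left two_ne_zero).1 hvariation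
  have hgradient : ridgeGradient σ lamt p fstar f = 0 :=
    eq_zero_of_continuous_of_integral_contDiff_smul_eq_zero
      (continuous_ridgeGradient hp hfstar hf) hweak
  exact (ridgeGradient_eq_zero_iff hσ hlamt x).1 (congrFun hgradient x)

/-- A `C²` minimizer (against smooth compactly supported
perturbations) of the infinite-data ridge objective satisfies the Euler–Lagrange
equation `σ² f'' = ((σ/λ̃) p + 1) f − (σ/λ̃) p f*`. -/
theorem ridge_minimizer_euler_lagrange
    (σ lamt : ℝ) (hσ : 0 < σ) (hlamt : 0 < lamt)
    (p : ℝ → ℝ) (hp_cont : Continuous p) (hp_nonneg : ∀ x, 0 ≤ p x)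
    (hp_int : Integrable p)
    (fstar : ℝ → ℝ) (hfstar_cont : Continuous fstar)
    (hfstar_L2 : Integrable (fun x => p x * fstar x ^ 2))
    (f : ℝ → ℝ) (hf : ContDiff ℝ 2 f)
    (hf_L2 : Integrable (fun x => f x ^ 2))
    (hf'_L2 : Integrable (fun x => deriv f x ^ 2))
    (hf_err : Integrable (fun x => p x * (f x - fstar x) ^ 2))
    (hmin : ∀ η : ℝ → ℝ, ContDiff ℝ (⊤ : ℕ∞) η → HasCompactSupport η →
      ridgeObjective σ lamt p fstar f ≤ ridgeObjective σ lamt p fstar (f + η)) :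
    ∀ x : ℝ, σ ^ 2 * deriv (deriv f) x
      = ((σ / lamt) * p x + 1) * f x - (σ / lamt) * p x * fstar x := by
  exact ridge_minimizer_euler_lagrange_general hσ.ne' hlamt.ne' hp_cont hfstar_cont hf hf_L2
    hf'_L2 hf_err hmin
end
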